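/- arXiv:1709.00210 — 7 statements merged into one kernel-verified Lean document; each statement's English description precedes it below -/
import Mathlib

section
/- Let 0 < α < 1 and let A be a real s×s matrix all of whose (complex) eigenvalues λ satisfy λ ≠ 0 and |arg λ| > απ/2. Then there exist t₀ > 0 and a positive constant M such that for all t ≥ t₀ one has t^{α-1} ‖E_{α,α}(t^α A)‖ ≤ M / t^{α+1}, where ‖·‖ denotes the operator (matrix) norm. -/
open Filter Topology

attribute [local instance] Matrix.linftyOpNormedAddCommGroup Matrix.linftyOpNormedRing

/-- The matrix Mittag-Leffler function `E_{α,β}(B) = ∑ Bᵏ / Γ(αk + β)`. -/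
noncomputable def ML {s : ℕ} (α β : ℝ) (B : Matrix (Fin s) (Fin s) ℝ) :
    Matrix (Fin s) (Fin s) ℝ :=
  ∑' k : ℕ, (Real.Gamma (α * k + β))⁻¹ • B ^ k


open MeasureTheory in
theorem aux_expint (z c : ℝ) (hz : -1 < z) (hc : 0 < c) :
    IntegrableOn (fun t : ℝ => t ^ z * Real.exp (-(c * t))) (Set.Ioi 0) := by
  have := integrableOn_rpow_mul_exp_neg_mul_rpow (p := 1) (s := z) (b := c) hz one_pos hc
  simpa using this

open MeasureTheory in
theorem aux_laplace (z : ℝ) (hz : 1 < z) (r : ℂ) (hr : 0 < r.re) :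
    ∫ t : ℝ in Set.Ioi 0, ((t ^ (z - 1) : ℝ) : ℂ) * Complex.exp (-(r * t))
      = (Real.Gamma z : ℂ) * r ^ (-z : ℂ) := by
  have hU : IsOpen {r : ℂ | 0 < r.re} := isOpen_lt continuous_const Complex.continuous_re
  have hmeas : ∀ (p : ℝ) (r : ℂ), AEStronglyMeasurable
      (fun t : ℝ => ((t ^ p : ℝ) : ℂ) * Complex.exp (-(r * t))) (volume.restrict (Set.Ioi 0)) := by
    intro p r
    apply Measurable.aestronglyMeasurable
    fun_prop
  have hnorm : ∀ (p : ℝ) (r : ℂ), ∀ t ∈ Set.Ioi (0:ℝ),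
      ‖((t ^ p : ℝ) : ℂ) * Complex.exp (-(r * t))‖ = t ^ p * Real.exp (-(r.re * t)) := by
    intro p r t ht
    rw [norm_mul, Complex.norm_real, Complex.norm_exp, Real.norm_eq_abs,
      abs_of_nonneg (Real.rpow_nonneg (le_of_lt ht) _)]
    simp
  have hd : DifferentiableOn ℂ (fun r : ℂ => ∫ t : ℝ in Set.Ioi 0,
      ((t ^ (z - 1) : ℝ) : ℂ) * Complex.exp (-(r * t))) {r : ℂ | 0 < r.re} := by
    intro r0 (hr0 : 0 < r0.re)
    have hs : {r : ℂ | r0.re / 2 < r.re} ∈ 𝓝 r0 :=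
      (isOpen_lt continuous_const Complex.continuous_re).mem_nhds
        (show r0.re / 2 < r0.re by linarith)
    refine (hasDerivAt_integral_of_dominated_loc_of_deriv_le (μ := volume.restrict (Set.Ioi 0))
      (F := fun (r : ℂ) (t : ℝ) => ((t ^ (z - 1) : ℝ) : ℂ) * Complex.exp (-(r * t)))
      (F' := fun (r : ℂ) (t : ℝ) => -(((t ^ (z - 1) : ℝ) : ℂ) * t * Complex.exp (-(r * t))))
      (bound := fun t => t ^ z * Real.exp (-((r0.re / 2) * t)))
      hs (Eventually.of_forall fun r => hmeas _ r) ?_ ?_ ?_ ?_ ?_).2.differentiableAt.differentiableWithinAt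
    · refine (aux_expint (z - 1) r0.re (by linarith) hr0).mono' (hmeas _ _) ?_
      refine (ae_restrict_iff' measurableSet_Ioi).2 (Eventually.of_forall fun t ht => ?_)
      exact (hnorm _ _ t ht).le
    · apply Measurable.aestronglyMeasurable
      fun_prop
    · refine (ae_restrict_iff' measurableSet_Ioi).2 (Eventually.of_forall fun t ht r hrs => ?_)
      have ht' : (0:ℝ) < t := ht
      rw [norm_neg, mul_right_comm, norm_mul, hnorm _ _ t ht, Complex.norm_real, Real.norm_eq_abs,
        abs_of_pos ht', mul_right_comm]
      have : t ^ (z - 1) * t = t ^ z := by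
        conv_lhs => rw [← Real.rpow_one t, ← Real.rpow_mul ht'.le, ← Real.rpow_add ht']
        congr 1; ring
      rw [this]
      have hrs' : r0.re / 2 < r.re := hrs
      have := Real.rpow_nonneg ht'.le z
      gcongr
    · exact aux_expint z _ (by linarith) (by linarith)
    · refine Eventually.of_forall fun t r _ => ?_
      have h1 : HasDerivAt (fun r : ℂ => -(r * t)) (-(1 * t : ℂ)) r :=
        ((hasDerivAt_id r).mul_const (t : ℂ)).neg
      have := (h1.cexp).const_mul ((t ^ (z - 1) : ℝ) : ℂ)
      refine this.congr_deriv ?_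
      ring
  have hg : DifferentiableOn ℂ (fun r : ℂ => (Real.Gamma z : ℂ) * r ^ (-z : ℂ))
      {r : ℂ | 0 < r.re} := by
    intro r (hr : 0 < r.re)
    exact ((differentiableAt_id.cpow_const (Or.inl hr)).const_mul _).differentiableWithinAt
  have hconv : IsPreconnected {r : ℂ | 0 < r.re} :=
    (convex_halfSpace_re_gt 0).isPreconnected
  refine (hd.analyticOnNhd hU).eqOn_of_preconnected_of_frequently_eq (hg.analyticOnNhd hU) hconv
    (z₀ := 1) (by simp) ?_ hr
  have ht : Tendsto (fun x : ℝ => (x : ℂ)) (𝓝[≠] 1) (𝓝[≠] 1) := by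
    refine tendsto_nhdsWithin_iff.2 ⟨?_, ?_⟩
    · have : Tendsto (fun x : ℝ => (x : ℂ)) (𝓝 1) (𝓝 ((1:ℝ):ℂ)) :=
        Complex.continuous_ofReal.tendsto 1
      simpa using this.mono_left nhdsWithin_le_nhds
    · filter_upwards [self_mem_nhdsWithin] with x hx
      simpa using hx
  refine ht.frequently (Eventually.frequently ?_)
  have : ∀ᶠ x : ℝ in 𝓝[≠] 1, 0 < x := nhdsWithin_le_nhds (lt_mem_nhds one_pos)
  filter_upwards [this] with x hx
  have h2 := Complex.integral_cpow_mul_exp_neg_mul_Ioi (a := (z : ℂ)) (r := x)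
    (by simp; linarith) hx
  rw [Complex.Gamma_ofReal, one_div, mul_comm, Complex.inv_cpow, ← Complex.cpow_neg] at h2
  · rw [← h2]
    refine setIntegral_congr_fun measurableSet_Ioi fun t ht => ?_
    rw [Complex.ofReal_cpow (le_of_lt ht)]
    push_cast; rfl
  · rw [Complex.arg_ofReal_of_nonneg hx.le]
    exact Real.pi_pos.ne

open MeasureTheory in
theorem aux_norm_rpow (c : ℝ) (hc : 0 < c) (p y : ℝ) :
    ‖(c + y * Complex.I : ℂ)‖ ^ (-p) = c ^ (-p) * (1 + ‖y / c‖ ^ 2) ^ (-p / 2) := by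
  have h1 : ‖(c + y * Complex.I : ℂ)‖ = c * (1 + ‖y / c‖ ^ 2) ^ (1 / 2 : ℝ) := by
    rw [Complex.norm_add_mul_I, ← Real.sqrt_eq_rpow]
    have : c ^ 2 + y ^ 2 = c ^ 2 * (1 + ‖y / c‖ ^ 2) := by
      rw [Real.norm_eq_abs, sq_abs]; field_simp
    rw [this, Real.sqrt_mul (by positivity), Real.sqrt_sq hc.le]
  rw [h1, Real.mul_rpow hc.le (by positivity), ← Real.rpow_mul (by positivity)]
  congr 2; ring

open MeasureTheory in
theorem aux_integrable (c : ℝ) (hc : 0 < c) (p : ℝ) (hp : 1 < p) :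
    Integrable (fun y : ℝ => ‖(c + y * Complex.I : ℂ)‖ ^ (-p)) := by
  simp_rw [aux_norm_rpow c hc p]
  have h : Integrable (fun x : ℝ => (1 + ‖x‖ ^ 2) ^ (-p / 2)) :=
    integrable_rpow_neg_one_add_norm_sq (by simpa using hp)
  exact (h.comp_div hc.ne').const_mul _

open MeasureTheory in
theorem aux_integral (c : ℝ) (hc : 0 < c) (p : ℝ) :
    ∫ y : ℝ, ‖(c + y * Complex.I : ℂ)‖ ^ (-p)
      = c ^ (1 - p) * ∫ x : ℝ, (1 + ‖x‖ ^ 2) ^ (-p / 2) := by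
  simp_rw [aux_norm_rpow c hc p]
  rw [integral_const_mul, Measure.integral_comp_div (fun x : ℝ => (1 + ‖x‖ ^ 2) ^ (-p / 2)) c,
    abs_of_pos hc, smul_eq_mul, ← mul_assoc, sub_eq_neg_add, Real.rpow_add hc, Real.rpow_one]

theorem aux_ne (c : ℝ) (hc : 0 < c) (y : ℝ) : (c + y * Complex.I : ℂ) ≠ 0 := by
  intro h
  have := congrArg Complex.re h
  simp at this
  exact hc.ne' this

theorem aux_cont (c : ℝ) (hc : 0 < c) (z : ℂ) :
    Continuous (fun y : ℝ => (c + y * Complex.I : ℂ) ^ z) := by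
  refine Continuous.cpow (by fun_prop) continuous_const fun y => ?_
  left; simpa using hc

open MeasureTheory FourierTransform in
theorem aux_scalar (c : ℝ) (hc : 0 < c) (z : ℝ) (hz : 1 < z) (t : ℝ) (ht : 0 < t) :
    ∫ y : ℝ, Complex.exp ((c + y * Complex.I) * t) * (c + y * Complex.I : ℂ) ^ (-z : ℂ)
      = 2 * Real.pi * ((t ^ (z - 1) / Real.Gamma z : ℝ) : ℂ) := by
  have hG : 0 < Real.Gamma z := Real.Gamma_pos_of_pos (by linarith)
  set f : ℝ → ℂ := fun x => (((max x 0) ^ (z - 1) * Real.exp (-c * x) : ℝ) : ℂ) with hf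
  have hfc : Continuous f := by
    refine Complex.continuous_ofReal.comp (Continuous.mul ?_ (by fun_prop))
    exact Continuous.rpow_const (by fun_prop) (fun x => Or.inr (by linarith))
  have hf0 : ∀ x, x ∉ Set.Ioi (0:ℝ) → f x = 0 := by
    intro x hx
    have : max x 0 = 0 := max_eq_right (by simpa using hx)
    simp [hf, this, Real.zero_rpow (by linarith : z - 1 ≠ 0)]
  have hfi : Integrable f := by
    rw [← integrableOn_iff_integrable_of_support_subset (s := Set.Ioi (0:ℝ))]
    · have := integrableOn_rpow_mul_exp_neg_mul_rpow (p := 1) (s := z - 1) (b := c)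
        (by linarith) one_pos hc
      refine (Integrable.ofReal (𝕜 := ℂ) this).congr ?_
      refine (ae_restrict_iff' measurableSet_Ioi).2 (Eventually.of_forall fun x hx => ?_)
      have : max x 0 = x := max_eq_left (le_of_lt hx)
      simp [hf, this]
    · intro x hx
      by_contra h
      exact hx (hf0 x h)
  have hFf : 𝓕 f = fun w : ℝ => (Real.Gamma z : ℂ) *
      (c + (2 * Real.pi * w : ℝ) * Complex.I : ℂ) ^ (-z : ℂ) := by
    ext w
    rw [Real.fourier_real_eq_integral_exp_smul]
    have h1 : ∀ x, x ∉ Set.Ioi (0:ℝ) →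
        Complex.exp (↑(-2 * Real.pi * x * w) * Complex.I) • f x = 0 := by
      intro x hx; rw [hf0 x hx, smul_zero]
    rw [← setIntegral_eq_integral_of_forall_compl_eq_zero h1]
    have hre : 0 < (c + (2 * Real.pi * w : ℝ) * Complex.I : ℂ).re := by simpa using hc
    rw [← aux_laplace z hz _ hre]
    refine setIntegral_congr_fun measurableSet_Ioi fun x hx => ?_
    have : max x 0 = x := max_eq_left (le_of_lt hx)
    simp only [hf, this, smul_eq_mul]
    rw [Complex.ofReal_mul (x ^ (z - 1)), mul_left_comm, Complex.ofReal_exp, ← Complex.exp_add]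
    push_cast
    congr 2
    ring
  have hFi : Integrable (𝓕 f) := by
    rw [hFf]
    refine Integrable.const_mul ?_ _
    have hb := (aux_integrable c hc z hz)
    have hi : Integrable (fun y : ℝ => (c + y * Complex.I : ℂ) ^ (-z : ℂ)) := by
      refine hb.mono' (aux_cont c hc _).aestronglyMeasurable (Eventually.of_forall fun y => ?_)
      rw [← Complex.ofReal_neg, Complex.norm_cpow_real]
    exact hi.comp_mul_left' (R := 2 * Real.pi) (by positivity)
  have key := hfi.fourierInv_fourier_eq hFi (v := t) hfc.continuousAt
  rw [Real.fourierInv_eq', hFf] at key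
  have hmax : max t 0 = t := max_eq_left ht.le
  simp only [hf, hmax, smul_eq_mul] at key
  have hcv := Measure.integral_comp_mul_left (fun y : ℝ =>
    Complex.exp ((c + y * Complex.I) * t) * (c + y * Complex.I : ℂ) ^ (-z : ℂ)) (2 * Real.pi)
  have hpi : 0 < 2 * Real.pi := by positivity
  rw [abs_of_pos (by positivity)] at hcv
  have h3 : ∫ x : ℝ, Complex.exp ((c + (2 * Real.pi * x : ℝ) * Complex.I) * t) *
      (c + (2 * Real.pi * x : ℝ) * Complex.I : ℂ) ^ (-z : ℂ)
      = ((t ^ (z - 1) / Real.Gamma z : ℝ) : ℂ) := by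
    have : ((t ^ (z - 1) / Real.Gamma z : ℝ) : ℂ) = (Complex.exp (c * t) / Real.Gamma z) *
        ((t ^ (z - 1) * Real.exp (-c * t) : ℝ) : ℂ) := by
      push_cast
      have : Complex.exp (-c * t) = (Complex.exp (c * t))⁻¹ := by
        rw [← Complex.exp_neg]; congr 1; ring
      rw [this]
      have := Complex.exp_ne_zero (c * t)
      field_simp
    rw [this, ← key, ← integral_const_mul]
    congr 1
    ext x
    have hGc : (Real.Gamma z : ℂ) ≠ 0 := by exact_mod_cast hG.ne'
    have he : Complex.exp ((c + (2 * Real.pi * x : ℝ) * Complex.I) * t) = Complex.exp (c * t) *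
      Complex.exp (((2 * Real.pi * inner ℝ x t : ℝ) : ℂ) * Complex.I) := by
      rw [← Complex.exp_add]; congr 1
      simp; ring
    rw [he]
    field_simp
  rw [h3] at hcv
  rw [hcv, Complex.real_smul]
  have : (Real.pi : ℂ) ≠ 0 := by exact_mod_cast Real.pi_ne_zero
  push_cast
  rw [← mul_assoc, mul_inv_cancel₀ (by simp), one_mul]
theorem aux_int_smul {B : Type*} [NormedRing B] [NormedAlgebra ℂ B]
    (f : ℂ → B) (C p t : ℝ) (hp : 1 < p)
    (hf : DifferentiableOn ℂ f {s : ℂ | 0 < s.re})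
    (hb : ∀ s : ℂ, 0 < s.re → ‖f s‖ ≤ C * ‖s‖ ^ (-p)) (c : ℝ) (hc : 0 < c) :
    MeasureTheory.Integrable (fun y : ℝ => Complex.exp ((c + y * Complex.I) * t) • f (c + y * Complex.I)) ∧
    ‖∫ y : ℝ, Complex.exp ((c + y * Complex.I) * t) • f (c + y * Complex.I)‖ ≤
      Real.exp (c * t) * C * (c ^ (1 - p) * ∫ x : ℝ, (1 + ‖x‖ ^ 2) ^ (-p / 2)) := by
  have hcont : Continuous (fun y : ℝ => Complex.exp ((c + y * Complex.I) * t) • f (c + y * Complex.I)) := by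
    refine Continuous.smul (by fun_prop) ?_
    exact hf.continuousOn.comp_continuous (by fun_prop) (fun y => by simpa using hc)
  have hi := (aux_integrable c hc p hp).const_mul (Real.exp (c * t) * C)
  have hbd : ∀ y : ℝ, ‖Complex.exp ((c + y * Complex.I) * t) • f (c + y * Complex.I)‖ ≤
      Real.exp (c * t) * C * ‖(c + y * Complex.I : ℂ)‖ ^ (-p) := by
    intro y
    have h1 : ‖Complex.exp ((c + y * Complex.I) * t)‖ = Real.exp (c * t) := by
      rw [Complex.norm_exp]; simp
    rw [norm_smul, h1, mul_assoc]
    gcongr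
    exact hb _ (by simpa using hc)
  refine ⟨hi.mono' hcont.aestronglyMeasurable (Eventually.of_forall hbd), ?_⟩
  refine (MeasureTheory.norm_integral_le_of_norm_le hi (Eventually.of_forall hbd)).trans ?_
  rw [MeasureTheory.integral_const_mul, aux_integral c hc p]

theorem aux_shift {B : Type*} [NormedRing B] [NormedAlgebra ℂ B] [CompleteSpace B]
    (f : ℂ → B) (C p t : ℝ) (hp : 1 < p) (ht : 0 < t)
    (hf : DifferentiableOn ℂ f {s : ℂ | 0 < s.re})
    (hb : ∀ s : ℂ, 0 < s.re → ‖f s‖ ≤ C * ‖s‖ ^ (-p)) (c d : ℝ) (hc : 0 < c) (hcd : c ≤ d) :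
    ∫ y : ℝ, Complex.exp ((c + y * Complex.I) * t) • f (c + y * Complex.I) =
    ∫ y : ℝ, Complex.exp ((d + y * Complex.I) * t) • f (d + y * Complex.I) := by
  have hd : 0 < d := by linarith
  have hC : 0 ≤ C := by
    have := (norm_nonneg _).trans (hb 1 (by simp))
    simpa using this
  set g : ℂ → B := fun s => Complex.exp (s * t) • f s with hg
  have hgd : DifferentiableOn ℂ g {s : ℂ | 0 < s.re} :=
    DifferentiableOn.smul (c := fun s : ℂ => Complex.exp (s * t)) (by fun_prop) hf
  have i1 := MeasureTheory.intervalIntegral_tendsto_integral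
    (aux_int_smul f C p t hp hf hb c hc).1 tendsto_neg_atTop_atBot (tendsto_id (α := ℝ))
  have i2 := MeasureTheory.intervalIntegral_tendsto_integral
    (aux_int_smul f C p t hp hf hb d hd).1 tendsto_neg_atTop_atBot (tendsto_id (α := ℝ))
  have hedge : ∀ e : ℝ, |e| = 1 → Tendsto (fun T : ℝ => ∫ x : ℝ in c..d, g (x + ((e * T : ℝ) : ℂ) * Complex.I))
      atTop (𝓝 0) := by
    intro e he
    have hlim : Tendsto (fun T : ℝ => Real.exp (d * t) * (C * T ^ (-p)) * |d - c|) atTop (𝓝 0) := by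
      have := ((tendsto_rpow_neg_atTop (by linarith : 0 < p)).const_mul C).const_mul (Real.exp (d * t))
      simpa using this.mul_const |d - c|
    refine squeeze_zero_norm' ?_ hlim
    filter_upwards [eventually_gt_atTop 0] with T hT
    refine intervalIntegral.norm_integral_le_of_norm_le_const fun x hx => ?_
    rw [Set.uIoc_of_le hcd] at hx
    have hx0 : 0 < x := by linarith [hx.1]
    have h1 : ‖Complex.exp ((x + ((e * T : ℝ) : ℂ) * Complex.I) * t)‖ = Real.exp (x * t) := by
      rw [Complex.norm_exp]; simp
    rw [hg]; simp only
    rw [norm_smul, h1]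
    have h2 : T ≤ ‖(x + ((e * T : ℝ) : ℂ) * Complex.I)‖ := by
      have := Complex.abs_im_le_norm (x + ((e * T : ℝ) : ℂ) * Complex.I)
      have h3 : (x + ((e * T : ℝ) : ℂ) * Complex.I).im = e * T := by simp
      rw [h3, abs_mul, he, one_mul, abs_of_pos hT] at this
      exact this
    have h4 := hb (x + ((e * T : ℝ) : ℂ) * Complex.I) (by simpa using hx0)
    have h5 : ‖(x + ((e * T : ℝ) : ℂ) * Complex.I)‖ ^ (-p) ≤ T ^ (-p) :=
      Real.rpow_le_rpow_of_nonpos hT h2 (by linarith)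
    have h6 := hx.2
    calc _ ≤ Real.exp (d * t) * (C * ‖(x + ((e * T : ℝ) : ℂ) * Complex.I)‖ ^ (-p)) := by gcongr
      _ ≤ _ := by gcongr
  have e1 := hedge (-1) (by simp)
  have e2 := hedge 1 (by simp)
  have hlim := ((e1.sub e2).add (i2.const_smul Complex.I)).sub (i1.const_smul Complex.I)
  have hzero : ∀ T : ℝ, (∫ x : ℝ in c..d, g (x + ((-1 * T : ℝ) : ℂ) * Complex.I)) -
      (∫ x : ℝ in c..d, g (x + ((1 * T : ℝ) : ℂ) * Complex.I)) +
      Complex.I • (∫ y : ℝ in (-T)..(id T), Complex.exp ((d + y * Complex.I) * t) • f (d + y * Complex.I)) -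
      Complex.I • (∫ y : ℝ in (-T)..(id T), Complex.exp ((c + y * Complex.I) * t) • f (c + y * Complex.I)) = 0 := by
    intro T
    have := Complex.integral_boundary_rect_eq_zero_of_differentiableOn g
      (⟨c, -T⟩ : ℂ) (⟨d, T⟩ : ℂ) (hgd.mono ?_)
    · simpa [hg] using this
    · intro s hs
      have := hs.1
      simp only [Set.uIcc_of_le hcd] at this
      exact lt_of_lt_of_le hc this.1
  simp_rw [hzero] at hlim
  have h0 := tendsto_nhds_unique hlim tendsto_const_nhds
  rw [sub_zero, zero_add, ← smul_sub, smul_eq_zero] at h0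
  rcases h0 with h0 | h0
  · exact absurd h0 Complex.I_ne_zero
  · exact (sub_eq_zero.1 h0).symm

noncomputable def auxG {B : Type*} [NormedRing B] [NormedAlgebra ℂ B] (α : ℝ) (a : B) (s : ℂ) : B :=
  (s ^ (-2 : ℂ) * (s ^ (α : ℂ))⁻¹) • ((2 * α ^ 2 : ℂ) • (s ^ (α : ℂ) • resolvent a (s ^ (α : ℂ))) ^ 3
    + (α * (1 - α) : ℂ) • (s ^ (α : ℂ) • resolvent a (s ^ (α : ℂ))) ^ 2)

theorem auxG_hasSum {B : Type*} [NormedRing B] [NormedAlgebra ℂ B] [CompleteSpace B]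
    (α : ℝ) (hα : 0 < α) (a : B) (c : ℝ) (hc : 0 < c) (hca : ‖a‖ < c ^ α) (w : ℂ) (hw : c ≤ ‖w‖) :
    HasSum (fun k : ℕ => ((((α * k + α) * (α * k + α + 1) : ℝ) : ℂ) *
      w ^ (-((α * k + α + 2 : ℝ) : ℂ))) • a ^ k) (auxG α a w) := by
  have hw0 : w ≠ 0 := by
    intro h; rw [h, norm_zero] at hw; linarith
  have hx0 : w ^ (α : ℂ) ≠ 0 := by simp [Complex.cpow_eq_zero_iff, hw0]
  have hxn : ‖w ^ (α : ℂ)‖ = ‖w‖ ^ α := Complex.norm_cpow_real w α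
  have hxge : c ^ α ≤ ‖w‖ ^ α := Real.rpow_le_rpow hc.le hw hα.le
  set x := w ^ (α : ℂ) with hx
  set y : B := x⁻¹ • a with hy
  have hy1 : ‖y‖ < 1 := by
    rw [hy, norm_smul, norm_inv, hxn, inv_mul_lt_iff₀ (by linarith [norm_nonneg a])]
    linarith
  have hR : x • resolvent a x = Ring.inverse (1 - y) := by
    have := spectrum.units_smul_resolvent_self (r := Units.mk0 x hx0) (a := a)
    simp only [Units.smul_def, Units.val_mk0, Units.val_inv_eq_inv_val] at this
    rw [this, resolvent, map_one, hy]
  have H1 := hasSum_choose_mul_geometric_of_norm_lt_one' 1 hy1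
  have H2 := hasSum_choose_mul_geometric_of_norm_lt_one' 2 hy1
  have H := ((H2.const_smul (2 * α ^ 2 : ℂ)).add (H1.const_smul (α * (1 - α) : ℂ))).const_smul
    (w ^ (-2 : ℂ) * x⁻¹)
  rw [← hR] at H
  unfold auxG
  rw [← hx]
  convert H using 1
  ext k
  have hpow : w ^ (-((α * k + α + 2 : ℝ) : ℂ)) = w ^ (-2 : ℂ) * x⁻¹ * (x⁻¹) ^ k := by
    have : (-((α * k + α + 2 : ℝ) : ℂ)) = -2 + (-α) + (-α) * k := by push_cast; ring
    rw [this, Complex.cpow_add _ _ hw0, Complex.cpow_add _ _ hw0, Complex.cpow_mul_nat,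
      Complex.cpow_neg w α, ← hx]
  have hyk : y ^ k = (x⁻¹) ^ k • a ^ k := by rw [hy, smul_pow]
  have hch1 : (((k + 1).choose 1 : ℕ) : B) * y ^ k = ((k + 1 : ℂ) * (x⁻¹) ^ k) • a ^ k := by
    rw [← nsmul_eq_mul, ← Nat.cast_smul_eq_nsmul ℂ, hyk, smul_smul]
    simp
  have hch2 : (((k + 2).choose 2 : ℕ) : B) * y ^ k
      = (((k + 2) * (k + 1) / 2 : ℂ) * (x⁻¹) ^ k) • a ^ k := by
    rw [← nsmul_eq_mul, ← Nat.cast_smul_eq_nsmul ℂ, hyk, smul_smul, Nat.cast_choose_two]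
    push_cast
    congr 3; ring
  rw [hch1, hch2, hpow, smul_smul, smul_smul, ← add_smul, smul_smul]
  congr 1
  push_cast
  ring

theorem aux_pow_norm {B : Type*} [NormedRing B] (a : B) (k : ℕ) :
    ‖a ^ k‖ ≤ (1 + ‖(1 : B)‖) * ‖a‖ ^ k := by
  rcases Nat.eq_zero_or_pos k with rfl | hk
  · simp
  · have := norm_pow_le' a hk
    have h2 : 0 ≤ ‖(1 : B)‖ * ‖a‖ ^ k := by positivity
    linarith

theorem aux_gamma (z : ℝ) (hz : 0 < z) : Real.Gamma (z + 2) = z * (z + 1) * Real.Gamma z := by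
  rw [show z + 2 = (z + 1) + 1 by ring, Real.Gamma_add_one (by positivity),
    Real.Gamma_add_one (by positivity)]
  ring

open MeasureTheory in
theorem aux_series {B : Type*} [NormedRing B] [NormedAlgebra ℂ B] [CompleteSpace B]
    (α : ℝ) (hα : 0 < α) (a : B) (c : ℝ) (hc : 0 < c) (hca : ‖a‖ < c ^ α) (t : ℝ) (ht : 0 < t) :
    HasSum (fun k : ℕ => ((2 * Real.pi * (t ^ (α * k + α + 1) / Real.Gamma (α * k + α)) : ℝ) : ℂ) • a ^ k)
      (∫ y : ℝ, Complex.exp ((c + y * Complex.I) * t) • auxG α a (c + y * Complex.I)) := by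
  have hcw : ∀ y : ℝ, c ≤ ‖(c + y * Complex.I : ℂ)‖ := by
    intro y
    have := Complex.abs_re_le_norm (c + y * Complex.I : ℂ)
    simp only [Complex.add_re, Complex.ofReal_re, Complex.mul_re, Complex.I_re, mul_zero,
      Complex.ofReal_im, Complex.I_im, zero_mul, sub_zero, add_zero, mul_one, sub_self] at this
    exact (le_abs_self c).trans this
  have hexp : ∀ y : ℝ, ‖Complex.exp ((c + y * Complex.I) * t)‖ = Real.exp (c * t) := by
    intro y
    rw [Complex.norm_exp]; simp
  set co : ℕ → ℝ := fun k => (α * k + α) * (α * k + α + 1) with hco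
  have hco0 : ∀ k, 0 ≤ co k := fun k => by simp only [hco]; positivity
  set φ : ℕ → ℝ → ℂ := fun k y => (co k : ℂ) * (Complex.exp ((c + y * Complex.I) * t) *
    (c + y * Complex.I : ℂ) ^ (-((α * k + α + 2 : ℝ) : ℂ))) with hφ
  have hφn : ∀ k y, ‖φ k y‖ ≤ co k * Real.exp (c * t) * (c ^ α)⁻¹ ^ k *
      ‖(c + y * Complex.I : ℂ)‖ ^ (-(α + 2)) := by
    intro k y
    simp only [hφ]
    rw [norm_mul, norm_mul, hexp, Complex.norm_real, Real.norm_eq_abs, abs_of_nonneg (hco0 k),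
      ← Complex.ofReal_neg, Complex.norm_cpow_real]
    have hw0 : 0 < ‖(c + y * Complex.I : ℂ)‖ := lt_of_lt_of_le hc (hcw y)
    have e1 : -(α * k + α + 2) = (-α) * k + -(α + 2) := by ring
    rw [e1, Real.rpow_add hw0, Real.rpow_mul_natCast hw0.le, ← Real.rpow_neg hc.le]
    have := hco0 k
    have h3 : ‖(c + y * Complex.I : ℂ)‖ ^ (-α) ≤ c ^ (-α) :=
      Real.rpow_le_rpow_of_nonpos hc (hcw y) (by linarith)
    calc _ ≤ co k * (Real.exp (c * t) * ((c ^ (-α)) ^ k * ‖(c + y * Complex.I : ℂ)‖ ^ (-(α + 2)))) := by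
          gcongr
      _ = _ := by ring
  have hφi : ∀ k, Integrable (φ k) := by
    intro k
    refine ((aux_integrable c hc (α + 2) (by linarith)).const_mul
      (co k * Real.exp (c * t) * (c ^ α)⁻¹ ^ k)).mono' ?_ (Eventually.of_forall (hφn k))
    refine Continuous.aestronglyMeasurable ?_
    exact continuous_const.mul (Continuous.mul (by fun_prop) (aux_cont c hc _))
  set J := ∫ y : ℝ, ‖(c + y * Complex.I : ℂ)‖ ^ (-(α + 2)) with hJ
  have hJ0 : 0 ≤ J := integral_nonneg fun y => by positivity
  have hq : ‖‖a‖ * (c ^ α)⁻¹‖ < 1 := by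
    have : 0 < c ^ α := Real.rpow_pos_of_pos hc α
    rw [Real.norm_eq_abs, abs_of_nonneg (by positivity), ← div_eq_mul_inv, div_lt_one this]
    exact hca
  have hsum : Summable (fun k : ℕ => co k * (‖a‖ * (c ^ α)⁻¹) ^ k) := by
    have s0 := summable_pow_mul_geometric_of_norm_lt_one 0 hq
    have s1 := summable_pow_mul_geometric_of_norm_lt_one 1 hq
    have s2 := summable_pow_mul_geometric_of_norm_lt_one 2 hq
    refine (((s2.mul_left (α ^ 2)).add (s1.mul_left (2 * α ^ 2 + α))).add
      (s0.mul_left (α ^ 2 + α))).congr fun k => ?_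
    simp only [hco]; ring
  have key := hasSum_integral_of_summable_integral_norm (μ := volume)
    (F := fun (k : ℕ) (y : ℝ) => φ k y • a ^ k) (fun k => (hφi k).smul_const _) ?_
  · have E1 : (fun k : ℕ => ((2 * Real.pi * (t ^ (α * k + α + 1) / Real.Gamma (α * k + α)) : ℝ) : ℂ) • a ^ k)
        = fun k : ℕ => ∫ y, φ k y • a ^ k := by
      ext k
      rw [integral_smul_const]
      congr 1
      simp only [hφ]
      rw [integral_const_mul, aux_scalar c hc (α * k + α + 2)
        (by have : 0 ≤ α * k := by positivity
            linarith) t ht]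
      rw [aux_gamma _ (by positivity)]
      have hG : 0 < Real.Gamma (α * k + α) := Real.Gamma_pos_of_pos (by positivity)
      have e2 : α * k + α + 2 - 1 = α * k + α + 1 := by ring
      rw [e2]
      norm_cast
      simp only [hco]
      have h1 : 0 < α * k + α := by positivity
      push_cast
      have h2 : α * k + α + 1 ≠ 0 := by positivity
      field_simp
    have E2 : (∫ y : ℝ, Complex.exp ((c + y * Complex.I) * t) • auxG α a (c + y * Complex.I))
        = ∫ y : ℝ, ∑' k : ℕ, φ k y • a ^ k := by
      congr 1
      ext y
      have := (auxG_hasSum α hα a c hc hca _ (hcw y)).const_smul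
        (Complex.exp ((c + y * Complex.I) * t))
      rw [← this.tsum_eq]
      congr 1
      ext k
      rw [smul_smul]
      simp only [hφ, hco]
      congr 1
      ring
    rw [E1, E2]
    exact key
  · refine Summable.of_nonneg_of_le (fun k => integral_nonneg fun y => norm_nonneg _) (fun k => ?_)
      (hsum.mul_left (Real.exp (c * t) * (1 + ‖(1 : B)‖) * J))
    simp_rw [norm_smul]
    rw [integral_mul_const]
    have h1 : ∫ y, ‖φ k y‖ ≤ co k * Real.exp (c * t) * (c ^ α)⁻¹ ^ k * J := by
      rw [hJ, ← integral_const_mul]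
      exact integral_mono (hφi k).norm
        ((aux_integrable c hc (α + 2) (by linarith)).const_mul _) (hφn k)
    have h0 : 0 ≤ co k * Real.exp (c * t) * (c ^ α)⁻¹ ^ k * J := by
      have := hco0 k
      positivity
    calc _ ≤ (co k * Real.exp (c * t) * (c ^ α)⁻¹ ^ k * J) * ((1 + ‖(1 : B)‖) * ‖a‖ ^ k) :=
          mul_le_mul h1 (aux_pow_norm a k) (norm_nonneg _) h0
      _ = _ := by rw [mul_pow]; ring

theorem aux_cpow_mem {B : Type*} [NormedRing B] [NormedAlgebra ℂ B]
    (α : ℝ) (hα0 : 0 < α) (hα1 : α < 1) (a : B)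
    (hspec : ∀ μ ∈ spectrum ℂ a, μ ≠ 0 ∧ α * Real.pi / 2 < |Complex.arg μ|)
    (r θ : ℝ) (hr : 0 ≤ r) (hθ : |θ| ≤ α * Real.pi / 2) :
    (r * Complex.exp (θ * Complex.I) : ℂ) ∈ resolventSet ℂ a := by
  by_contra h
  obtain ⟨h1, h2⟩ := hspec _ h
  have hr0 : 0 < r := by
    rcases hr.eq_or_lt with h | h
    · simp [← h] at h1
    · exact h
  rw [Complex.arg_real_mul _ hr0, Complex.arg_exp_mul_I] at h2
  have hpi := Real.pi_pos
  have : θ ∈ Set.Ioc (-Real.pi) (-Real.pi + 2 * Real.pi) := by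
    rw [abs_le] at hθ
    constructor <;> nlinarith
  rw [(toIocMod_eq_self _).2 this] at h2
  linarith

theorem aux_cpow_polar (α : ℝ) (s : ℂ) (hs : s ≠ 0) :
    s ^ (α : ℂ) = ((‖s‖ ^ α : ℝ) : ℂ) * Complex.exp ((α * s.arg : ℝ) * Complex.I) := by
  have h : 0 < ‖s‖ := norm_pos_iff.2 hs
  rw [Complex.cpow_def_of_ne_zero hs, Real.rpow_def_of_pos h, Complex.ofReal_exp, ← Complex.exp_add,
    Complex.log]
  congr 1
  push_cast
  ring

theorem aux_res {B : Type*} [NormedRing B] [NormedAlgebra ℂ B]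
    (α : ℝ) (hα0 : 0 < α) (hα1 : α < 1) (a : B)
    (hspec : ∀ μ ∈ spectrum ℂ a, μ ≠ 0 ∧ α * Real.pi / 2 < |Complex.arg μ|)
    (s : ℂ) (hs : 0 < s.re) : s ^ (α : ℂ) ∈ resolventSet ℂ a := by
  have hs0 : s ≠ 0 := by rintro rfl; simp at hs
  rw [aux_cpow_polar α s hs0]
  refine aux_cpow_mem α hα0 hα1 a hspec _ _ (by positivity) ?_
  have := Complex.abs_arg_lt_pi_div_two_iff.2 (Or.inl hs)
  rw [abs_mul, abs_of_pos hα0]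
  nlinarith

theorem aux_res_bound {B : Type*} [NormedRing B] [NormedAlgebra ℂ B] [CompleteSpace B]
    (α : ℝ) (hα0 : 0 < α) (hα1 : α < 1) (a : B)
    (hspec : ∀ μ ∈ spectrum ℂ a, μ ≠ 0 ∧ α * Real.pi / 2 < |Complex.arg μ|) :
    ∃ K : ℝ, 0 ≤ K ∧ ∀ s : ℂ, 0 < s.re → ‖resolvent a (s ^ (α : ℂ))‖ ≤ K := by
  have hT := spectrum.resolvent_tendsto_cobounded (𝕜 := ℂ) a
  have hev : ∀ᶠ z in Bornology.cobounded ℂ, ‖resolvent a z‖ < 1 := by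
    have := hT.norm
    rw [norm_zero] at this
    exact this.eventually (gt_mem_nhds one_pos)
  obtain ⟨ρ, -, hρ⟩ := (Filter.hasBasis_cobounded_norm (E := ℂ)).eventually_iff.1 hev
  have hcomp : IsCompact (Set.Icc (0:ℝ) ρ ×ˢ Set.Icc (-(α * Real.pi / 2)) (α * Real.pi / 2)) :=
    isCompact_Icc.prod isCompact_Icc
  have hcont : ContinuousOn (fun q : ℝ × ℝ => resolvent a (q.1 * Complex.exp (q.2 * Complex.I) : ℂ))
      (Set.Icc (0:ℝ) ρ ×ˢ Set.Icc (-(α * Real.pi / 2)) (α * Real.pi / 2)) := by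
    intro q hq
    have hm := aux_cpow_mem α hα0 hα1 a hspec q.1 q.2 hq.1.1 (abs_le.2 hq.2)
    have h1 : ContinuousAt (fun z : ℂ => resolvent a z) (q.1 * Complex.exp (q.2 * Complex.I) : ℂ) :=
      (spectrum.hasDerivAt_resolvent_const_left hm).continuousAt
    have h2 : ContinuousAt (fun q : ℝ × ℝ => (q.1 * Complex.exp (q.2 * Complex.I) : ℂ)) q := by
      fun_prop
    exact (ContinuousAt.comp (f := fun q : ℝ × ℝ => (q.1 * Complex.exp (q.2 * Complex.I) : ℂ))
      (g := fun z : ℂ => resolvent a z) h1 h2).continuousWithinAt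
  obtain ⟨K, hK⟩ := hcomp.exists_bound_of_continuousOn hcont
  refine ⟨max K 1, by positivity, fun s hs => ?_⟩
  have hs0 : s ≠ 0 := by rintro rfl; simp at hs
  by_cases h : ρ ≤ ‖s ^ (α : ℂ)‖
  · exact (hρ h).le.trans (le_max_right _ _)
  · refine le_trans ?_ (le_max_left _ _)
    rw [Complex.norm_cpow_real] at h
    rw [aux_cpow_polar α s hs0]
    have := Complex.abs_arg_lt_pi_div_two_iff.2 (Or.inl hs)
    refine hK (‖s‖ ^ α, α * s.arg) ⟨⟨by positivity, (not_le.1 h).le⟩, abs_le.1 ?_⟩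
    simp only
    rw [abs_mul, abs_of_pos hα0]
    nlinarith

theorem auxG_diff {B : Type*} [NormedRing B] [NormedAlgebra ℂ B] [CompleteSpace B]
    (α : ℝ) (hα0 : 0 < α) (hα1 : α < 1) (a : B)
    (hspec : ∀ μ ∈ spectrum ℂ a, μ ≠ 0 ∧ α * Real.pi / 2 < |Complex.arg μ|) :
    DifferentiableOn ℂ (auxG α a) {s : ℂ | 0 < s.re} := by
  intro s (hs : 0 < s.re)
  apply DifferentiableAt.differentiableWithinAt
  have hs0 : s ≠ 0 := by rintro rfl; simp at hs
  have hcp : ∀ p : ℂ, DifferentiableAt ℂ (fun s : ℂ => s ^ p) s := fun p =>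
    differentiableAt_id.cpow_const (Or.inl hs)
  have hR : DifferentiableAt ℂ (fun s : ℂ => resolvent a (s ^ (α : ℂ))) s :=
    DifferentiableAt.comp (g := fun z : ℂ => resolvent a z) (f := fun s : ℂ => s ^ (α : ℂ)) s
      (spectrum.hasDerivAt_resolvent_const_left
      (aux_res α hα0 hα1 a hspec s hs)).differentiableAt (hcp α)
  have hx0 : s ^ (α : ℂ) ≠ 0 := by simp [Complex.cpow_eq_zero_iff, hs0]
  have hxR := (hcp α).smul hR
  unfold auxG
  exact ((hcp (-2)).mul ((hcp α).inv hx0)).smul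
    (((hxR.pow 3).const_smul (2 * α ^ 2 : ℂ)).add ((hxR.pow 2).const_smul (α * (1 - α) : ℂ)))

theorem auxG_bound {B : Type*} [NormedRing B] [NormedAlgebra ℂ B] [CompleteSpace B]
    (α : ℝ) (hα0 : 0 < α) (hα1 : α < 1) (a : B)
    (hspec : ∀ μ ∈ spectrum ℂ a, μ ≠ 0 ∧ α * Real.pi / 2 < |Complex.arg μ|) :
    ∃ C : ℝ, 0 ≤ C ∧ ∀ s : ℂ, 0 < s.re → ‖auxG α a s‖ ≤ C * ‖s‖ ^ (-(2 - α)) := by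
  obtain ⟨K, hK0, hK⟩ := aux_res_bound α hα0 hα1 a hspec
  set L := ‖(1 : B)‖ + ‖a‖ * K with hL
  have hL0 : 0 ≤ L := by positivity
  refine ⟨2 * α ^ 2 * (K * K * L) + α * (1 - α) * (K * K), ?_, fun s hs => ?_⟩
  · have : 0 ≤ 1 - α := by linarith
    positivity
  have hs0 : s ≠ 0 := by rintro rfl; simp at hs
  have hsn : 0 < ‖s‖ := norm_pos_iff.2 hs0
  have hx0 : s ^ (α : ℂ) ≠ 0 := by simp [Complex.cpow_eq_zero_iff, hs0]
  have hx := hK s hs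
  have hm := aux_res α hα0 hα1 a hspec s hs
  have hxn : ‖s ^ (α : ℂ)‖ = ‖s‖ ^ α := Complex.norm_cpow_real s α
  unfold auxG
  set x := s ^ (α : ℂ) with hxdef
  set R := resolvent a x with hR
  have hxR : x • R = 1 + a * R := by
    have h1 : (algebraMap ℂ B x - a) * R = 1 := Ring.mul_inverse_cancel _ hm
    rw [sub_mul, sub_eq_iff_eq_add, ← Algebra.smul_def] at h1
    exact h1
  have hxRn : ‖x • R‖ ≤ L := by
    rw [hxR]
    refine (norm_add_le _ _).trans ?_
    have := norm_mul_le a R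
    have h2 : ‖a‖ * ‖R‖ ≤ ‖a‖ * K := by gcongr
    linarith
  have e2 : (x • R) ^ 2 = x ^ 2 • (R * R) := by rw [smul_pow, sq R]
  have e3 : (x • R) ^ 3 = x ^ 2 • (R * R * (x • R)) := by
    rw [pow_succ, e2, smul_mul_assoc]
  have hRR : ‖R * R‖ ≤ K * K := (norm_mul_le _ _).trans (by gcongr)
  have hRRR : ‖R * R * (x • R)‖ ≤ K * K * L := (norm_mul_le _ _).trans (by gcongr)
  have hform : (s ^ (-2 : ℂ) * x⁻¹) • ((2 * α ^ 2 : ℂ) • (x • R) ^ 3 + (α * (1 - α) : ℂ) • (x • R) ^ 2)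
      = (s ^ (-2 : ℂ) * x) • ((2 * α ^ 2 : ℂ) • (R * R * (x • R)) + (α * (1 - α) : ℂ) • (R * R)) := by
    rw [e2, e3, smul_comm (2 * α ^ 2 : ℂ), smul_comm (α * (1 - α) : ℂ), ← smul_add, smul_smul]
    congr 1
    field_simp
  rw [hform, norm_smul, norm_mul, hxn]
  have hn2 : ‖s ^ (-2 : ℂ)‖ = ‖s‖ ^ (-2 : ℝ) := by
    have := Complex.norm_cpow_real s (-2)
    rw [← this]; norm_num
  have n1 : ‖(2 * α ^ 2 : ℂ)‖ = 2 * α ^ 2 := by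
    rw [show (2 * α ^ 2 : ℂ) = ((2 * α ^ 2 : ℝ) : ℂ) by push_cast; rfl, Complex.norm_real,
      Real.norm_of_nonneg (by positivity)]
  have n2 : ‖(α * (1 - α) : ℂ)‖ = α * (1 - α) := by
    rw [show (α * (1 - α) : ℂ) = ((α * (1 - α) : ℝ) : ℂ) by push_cast; rfl, Complex.norm_real,
      Real.norm_of_nonneg (mul_nonneg hα0.le (by linarith))]
  rw [hn2, ← Real.rpow_add hsn, mul_comm, show (-2 + α : ℝ) = -(2 - α) by ring]
  have : 0 ≤ α * (1 - α) := mul_nonneg hα0.le (by linarith)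
  gcongr
  refine (norm_add_le _ _).trans ?_
  rw [norm_smul, norm_smul, n1, n2]
  gcongr

theorem aux_main {B : Type*} [NormedRing B] [NormedAlgebra ℂ B] [CompleteSpace B]
    (α : ℝ) (hα0 : 0 < α) (hα1 : α < 1) (a : B)
    (hspec : ∀ μ ∈ spectrum ℂ a, μ ≠ 0 ∧ α * Real.pi / 2 < |Complex.arg μ|) :
    ∃ M > (0:ℝ), ∀ t > (0:ℝ), ∃ S : B,
      HasSum (fun k : ℕ => (((Real.Gamma (α * k + α))⁻¹ * (t ^ α) ^ k : ℝ) : ℂ) • a ^ k) S ∧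
      t ^ (α - 1) * ‖S‖ ≤ M / t ^ (α + 1) := by
  obtain ⟨C, hC0, hC⟩ := auxG_bound α hα0 hα1 a hspec
  have hd := auxG_diff α hα0 hα1 a hspec
  have hp : 1 < 2 - α := by linarith
  set J := ∫ x : ℝ, (1 + ‖x‖ ^ 2) ^ (-(2 - α) / 2) with hJ
  have hJ0 : 0 ≤ J := MeasureTheory.integral_nonneg fun x => by positivity
  refine ⟨(2 * Real.pi)⁻¹ * (Real.exp 1 * C * J) + 1, by positivity, fun t ht => ?_⟩
  set c := t⁻¹ with hcdef
  have hc : 0 < c := inv_pos.2 ht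
  set d := c + (‖a‖ + 1) ^ (α⁻¹) with hddef
  have hbpos : 0 < (‖a‖ + 1) ^ (α⁻¹) := Real.rpow_pos_of_pos (by positivity) _
  have hcd : c ≤ d := by linarith
  have hda : ‖a‖ < d ^ α := by
    have h1 : ((‖a‖ + 1) ^ (α⁻¹)) ^ α = ‖a‖ + 1 := by
      rw [← Real.rpow_mul (by positivity), inv_mul_cancel₀ hα0.ne', Real.rpow_one]
    have h2 : ((‖a‖ + 1) ^ (α⁻¹)) ^ α ≤ d ^ α :=
      Real.rpow_le_rpow hbpos.le (by linarith) hα0.le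
    linarith
  have hs := aux_series α hα0 a d (by linarith) hda t ht
  rw [← aux_shift (auxG α a) C (2 - α) t hp ht hd hC c d hc hcd] at hs
  have hbd := (aux_int_smul (auxG α a) C (2 - α) t hp hd hC c hc).2
  set V := ∫ y : ℝ, Complex.exp ((c + y * Complex.I) * t) • auxG α a (c + y * Complex.I) with hV
  have ht1 : 0 < t ^ (α + 1) := Real.rpow_pos_of_pos ht _
  refine ⟨(((2 * Real.pi * t ^ (α + 1))⁻¹ : ℝ) : ℂ) • V, ?_, ?_⟩
  · convert hs.const_smul (((2 * Real.pi * t ^ (α + 1))⁻¹ : ℝ) : ℂ) using 1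
    ext k
    rw [smul_smul, ← Complex.ofReal_mul]
    congr 2
    rw [show α * k + α + 1 = α * k + (α + 1) by ring, Real.rpow_add ht (α * k), Real.rpow_mul_natCast ht.le]
    have := Real.pi_pos
    field_simp
  · have hct : c * t = 1 := inv_mul_cancel₀ ht.ne'
    rw [hct, ← hJ] at hbd
    have hcp : c ^ (1 - (2 - α)) = t ^ (1 - α) := by
      rw [hcdef, Real.inv_rpow ht.le, ← Real.rpow_neg ht.le]; congr 1; ring
    rw [hcp] at hbd
    have hone : t ^ (α - 1) * t ^ (1 - α) = 1 := by
      rw [← Real.rpow_add ht]; simp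
    have ht2 : 0 < t ^ (α - 1) := Real.rpow_pos_of_pos ht _
    rw [norm_smul, Complex.norm_real, Real.norm_of_nonneg (by positivity), le_div_iff₀ ht1]
    calc t ^ (α - 1) * ((2 * Real.pi * t ^ (α + 1))⁻¹ * ‖V‖) * t ^ (α + 1)
        = (2 * Real.pi)⁻¹ * (t ^ (α - 1) * ‖V‖) := by
          have := Real.pi_pos
          field_simp
      _ ≤ (2 * Real.pi)⁻¹ * (t ^ (α - 1) * (Real.exp 1 * C * (t ^ (1 - α) * J))) := by gcongr
      _ = (2 * Real.pi)⁻¹ * ((t ^ (α - 1) * t ^ (1 - α)) * (Real.exp 1 * C * J)) := by ring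
      _ ≤ _ := by rw [hone, one_mul]; linarith

theorem aux_re_norm {s : ℕ} (S : Matrix (Fin s) (Fin s) ℂ) : ‖S.map Complex.re‖ ≤ ‖S‖ := by
  rw [← coe_nnnorm, ← coe_nnnorm, NNReal.coe_le_coe, Matrix.linfty_opNNNorm_def,
    Matrix.linfty_opNNNorm_def]
  refine Finset.sup_mono_fun fun i _ => Finset.sum_le_sum fun j _ => ?_
  rw [← NNReal.coe_le_coe, coe_nnnorm, coe_nnnorm, Matrix.map_apply]
  exact Complex.abs_re_le_norm _

attribute [local instance] Matrix.linftyOpNormedAlgebra in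
theorem stmt1 (α : ℝ) (hα0 : 0 < α) (hα1 : α < 1) (s : ℕ)
    (A : Matrix (Fin s) (Fin s) ℝ)
    (hspec : ∀ μ ∈ spectrum ℂ (A.map (algebraMap ℝ ℂ)),
      μ ≠ 0 ∧ α * Real.pi / 2 < |Complex.arg μ|) :
    ∃ t₀ > (0:ℝ), ∃ M > (0:ℝ), ∀ t ≥ t₀,
      t ^ (α - 1) * ‖ML α α (t ^ α • A)‖ ≤ M / t ^ (α + 1) := by
  obtain ⟨M, hM, h⟩ := aux_main α hα0 hα1 (A.map (algebraMap ℝ ℂ)) hspec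
  refine ⟨1, one_pos, M, hM, fun t ht => ?_⟩
  have ht0 : 0 < t := by linarith
  obtain ⟨S, hS, hb⟩ := h t ht0
  refine le_trans ?_ hb
  have hML : ML α α (t ^ α • A) = S.map Complex.re := by
    have h1 := hS.map (Complex.reLm.toAddMonoidHom.mapMatrix (m := Fin s) (n := Fin s))
      (by
        refine Continuous.matrix_map continuous_id Complex.continuous_re)
    unfold ML
    refine Eq.trans ?_ h1.tsum_eq
    congr 1
    ext k i j
    have h2 : (A.map (algebraMap ℝ ℂ)) ^ k = (A ^ k).map (algebraMap ℝ ℂ) :=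
      (map_pow (algebraMap ℝ ℂ).mapMatrix A k).symm
    simp only [Function.comp_apply, h2]
    rw [smul_pow, smul_smul]
    simp
    left; left
    rw [← Complex.ofReal_pow, Complex.ofReal_re]
  rw [hML]
  have : 0 ≤ t ^ (α - 1) := by positivity
  gcongr
  exact aux_re_norm S
end

section
/- Let 0 < α < 1 and let A be a real s×s matrix all of whose (complex) eigenvalues λ satisfy λ ≠ 0 and |arg λ| > απ/2. Then sup_{t≥0} t^{1-α} ∫₀^t (t-τ)^{α-1} ‖E_{α,α}((t-τ)^α A)‖ τ^{α-1} dτ < ∞, where ‖·‖ denotes the operator (matrix) norm. -/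
open Filter Topology MeasureTheory

attribute [local instance] Matrix.linftyOpNormedAddCommGroup Matrix.linftyOpNormedRing

lemma lap_integrable {q : ℝ} (hq : 0 < q) {r : ℝ} (hr : 0 < r) :
    IntegrableOn (fun x : ℝ => x ^ (q - 1) * Real.exp (-(r * x))) (Set.Ioi 0) := by
  have := integrableOn_rpow_mul_exp_neg_mul_rpow (p := 1) (s := q - 1) (b := r) (by linarith) one_pos hr
  refine this.congr_fun (fun x hx => ?_) measurableSet_Ioi
  simp

lemma lap_norm {q : ℝ} {s : ℂ} {x : ℝ} (hx : 0 < x) :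
    ‖((x ^ (q - 1) : ℝ) : ℂ) * Complex.exp (-(s * x))‖ = x ^ (q - 1) * Real.exp (-(s.re * x)) := by
  rw [norm_mul, Complex.norm_exp, Complex.norm_real, Real.norm_of_nonneg (by positivity)]
  simp

lemma lap_meas (q : ℝ) (s : ℂ) : AEStronglyMeasurable
    (fun x : ℝ => ((x ^ (q - 1) : ℝ) : ℂ) * Complex.exp (-(s * x))) (volume.restrict (Set.Ioi 0)) := by
  apply Measurable.aestronglyMeasurable
  fun_prop

lemma lap_integrableC {q : ℝ} (hq : 0 < q) {s : ℂ} (hs : 0 < s.re) :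
    IntegrableOn (fun x : ℝ => ((x ^ (q - 1) : ℝ) : ℂ) * Complex.exp (-(s * x))) (Set.Ioi 0) := by
  refine (lap_integrable hq hs).mono' (lap_meas q s) ?_
  filter_upwards [ae_restrict_mem measurableSet_Ioi] with x hx
  exact (lap_norm hx).le

lemma lap_diff {q : ℝ} (hq : 0 < q) {s : ℂ} (hs : 0 < s.re) :
    DifferentiableAt ℂ (fun s : ℂ => ∫ x in Set.Ioi (0:ℝ), ((x ^ (q - 1) : ℝ) : ℂ) * Complex.exp (-(s * x))) s := by
  have key := hasDerivAt_integral_of_dominated_loc_of_deriv_le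
    (μ := volume.restrict (Set.Ioi (0:ℝ))) (𝕜 := ℂ) (x₀ := s) (s := Metric.ball s (s.re / 2))
    (F := fun s x => ((x ^ (q - 1) : ℝ) : ℂ) * Complex.exp (-(s * x)))
    (F' := fun s x => ((x ^ (q - 1) : ℝ) : ℂ) * (Complex.exp (-(s * x)) * (-x)))
    (bound := fun x => x ^ ((q + 1) - 1) * Real.exp (-((s.re / 2) * x)))
    (Metric.ball_mem_nhds s (by positivity))
    (Eventually.of_forall fun z => lap_meas q z) (lap_integrableC hq hs)
    (by apply Measurable.aestronglyMeasurable; fun_prop)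
    (by
      filter_upwards [ae_restrict_mem measurableSet_Ioi] with x hx z hz
      have hx : 0 < x := hx
      rw [← mul_assoc, norm_mul, lap_norm hx]
      have h1 : s.re / 2 ≤ z.re := by
        have := (Complex.abs_re_le_norm (z - s)).trans (le_of_lt (by simpa [dist_eq_norm] using hz))
        rw [abs_le] at this
        simp at this
        linarith [this.1]
      have h2 : ‖(-x : ℂ)‖ = x := by simp [abs_of_pos hx]
      rw [h2]
      have : x ^ (q + 1 - 1) = x ^ (q - 1) * x := by
        rw [← Real.rpow_add_one hx.ne']; congr 1; ring
      rw [this, mul_right_comm]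
      gcongr)
    (lap_integrable (by linarith) (by positivity))
    (by
      refine Eventually.of_forall fun x z hz => ?_
      have : HasDerivAt (fun s : ℂ => -(s * x)) (-x : ℂ) z := by
        simpa using! ((hasDerivAt_id z).mul_const (x : ℂ)).neg
      exact this.cexp.const_mul _)
  exact key.2.differentiableAt

lemma lap_eq {q : ℝ} (hq : 0 < q) {s : ℂ} (hs : 0 < s.re) :
    ∫ x in Set.Ioi (0:ℝ), ((x ^ (q - 1) : ℝ) : ℂ) * Complex.exp (-(s * x))
      = (Real.Gamma q : ℂ) * s ^ (-q : ℂ) := by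
  have hopen : IsOpen {z : ℂ | 0 < z.re} := isOpen_lt continuous_const Complex.continuous_re
  have h1 : AnalyticOnNhd ℂ (fun s : ℂ => ∫ x in Set.Ioi (0:ℝ), ((x ^ (q - 1) : ℝ) : ℂ) * Complex.exp (-(s * x))) {z : ℂ | 0 < z.re} :=
    DifferentiableOn.analyticOnNhd (fun z hz => (lap_diff hq hz).differentiableWithinAt) hopen
  have h2 : AnalyticOnNhd ℂ (fun s : ℂ => (Real.Gamma q : ℂ) * s ^ (-q : ℂ)) {z : ℂ | 0 < z.re} := by
    refine DifferentiableOn.analyticOnNhd (fun z hz => DifferentiableAt.differentiableWithinAt ?_) hopen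
    refine DifferentiableAt.const_mul ?_ _
    exact differentiableAt_id.cpow_const (Or.inl hz)
  refine h1.eqOn_of_preconnected_of_frequently_eq h2 (convex_halfSpace_re_gt 0).isPreconnected
    (z₀ := 1) (by simp) ?_ hs
  have hreal : ∀ r : ℝ, 0 < r → ∫ x in Set.Ioi (0:ℝ), ((x ^ (q - 1) : ℝ) : ℂ) * Complex.exp (-((r:ℂ) * x))
      = (Real.Gamma q : ℂ) * (r:ℂ) ^ (-q : ℂ) := by
    intro r hr
    have := Real.integral_rpow_mul_exp_neg_mul_Ioi hq hr
    have e : (r:ℂ) ^ (-q : ℂ) = ((r ^ (-q) : ℝ) : ℂ) := by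
      rw [Complex.ofReal_cpow hr.le]; simp
    rw [e, ← Complex.ofReal_mul, show Real.Gamma q * r ^ (-q) = (1 / r) ^ q * Real.Gamma q by
      rw [one_div, Real.inv_rpow hr.le, Real.rpow_neg hr.le, mul_comm], ← this, ← integral_complex_ofReal]
    refine integral_congr_ae (Eventually.of_forall fun x => ?_)
    simp
  have ht : Tendsto (fun n : ℕ => ((1 + 1 / ((n:ℝ) + 1) : ℝ) : ℂ)) atTop (𝓝[≠] 1) := by
    refine tendsto_nhdsWithin_iff.2 ⟨?_, Eventually.of_forall fun n => ?_⟩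
    · have := (tendsto_one_div_add_atTop_nhds_zero_nat (𝕜 := ℝ)).const_add 1
      rw [add_zero] at this
      exact_mod_cast (Complex.continuous_ofReal.tendsto _).comp this
    · have : (0:ℝ) < 1 / ((n:ℝ)+1) := by positivity
      intro h
      have h' : ((1 + 1 / ((n:ℝ) + 1) : ℝ) : ℂ) = ((1:ℝ):ℂ) := by simpa using h
      have := Complex.ofReal_injective h'
      linarith
  refine ht.frequently (Eventually.frequently (Eventually.of_forall fun n => ?_))
  exact hreal _ (by positivity)

lemma line_integrable {r : ℝ} (hr : 1 < r) {c : ℝ} (hc : 0 < c) :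
    Integrable (fun w : ℝ => ‖(c : ℂ) + w * Complex.I‖ ^ (-r)) ∧
    ∫ w : ℝ, ‖(c : ℂ) + w * Complex.I‖ ^ (-r) = c ^ (1 - r) * ∫ w : ℝ, (1 + w ^ 2) ^ (-r/2) := by
  have h0 : Integrable (fun w : ℝ => (1 + w ^ 2) ^ (-r/2)) := by
    have := integrable_rpow_neg_one_add_norm_sq (E := ℝ) (μ := volume) (r := r) (by simpa using hr)
    simpa using this
  have e : (fun w : ℝ => ‖(c : ℂ) + w * Complex.I‖ ^ (-r)) = fun w : ℝ => c ^ (-r) * (1 + (c⁻¹ * w) ^ 2) ^ (-r/2) := by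
    ext w
    rw [Complex.norm_add_mul_I, Real.sqrt_eq_rpow, ← Real.rpow_mul (by positivity)]
    have : c ^ 2 + w ^ 2 = c ^ 2 * (1 + (c⁻¹ * w) ^ 2) := by field_simp
    rw [this, Real.mul_rpow (by positivity) (by positivity), ← Real.rpow_natCast c 2, ← Real.rpow_mul hc.le]
    congr 2 <;> push_cast <;> ring
  rw [e]
  refine ⟨(h0.comp_mul_left' (inv_ne_zero hc.ne')).const_mul _, ?_⟩
  rw [integral_const_mul, Measure.integral_comp_mul_left (fun w : ℝ => (1 + w ^ 2) ^ (-r/2)) c⁻¹]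
  rw [inv_inv, abs_of_pos hc, smul_eq_mul, ← mul_assoc, ← Real.rpow_add_one hc.ne']
  congr 2; ring

lemma line_cont {c : ℝ} (hc : 0 < c) (q : ℂ) :
    Continuous (fun w : ℝ => ((c : ℂ) + w * Complex.I) ^ q) := by
  refine continuous_iff_continuousAt.2 fun w => ?_
  refine ContinuousAt.cpow (by fun_prop) continuousAt_const (Or.inl (by simpa using hc))

lemma inv_lap {q : ℝ} (hq : 1 < q) {c : ℝ} (hc : 0 < c) {t : ℝ} (ht : 0 < t) :
    Integrable (fun w : ℝ => Complex.exp (((c:ℂ) + w * Complex.I) * t) * ((c:ℂ) + w * Complex.I) ^ (-q : ℂ)) ∧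
    ∫ w : ℝ, Complex.exp (((c:ℂ) + w * Complex.I) * t) * ((c:ℂ) + w * Complex.I) ^ (-q : ℂ)
      = ((2 * Real.pi * (t ^ (q - 1) / Real.Gamma q) : ℝ) : ℂ) := by
  have hG : 0 < Real.Gamma q := Real.Gamma_pos_of_pos (by linarith)
  have hint0 : Integrable (fun w : ℝ => ((c:ℂ) + w * Complex.I) ^ (-q : ℂ)) := by
    refine (line_integrable hq hc).1.mono' (line_cont hc _).aestronglyMeasurable ?_
    refine Eventually.of_forall fun w => ?_
    rw [← Complex.ofReal_neg, Complex.norm_cpow_real]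
  have hint : Integrable (fun w : ℝ => Complex.exp (((c:ℂ) + w * Complex.I) * t) * ((c:ℂ) + w * Complex.I) ^ (-q : ℂ)) := by
    refine hint0.bdd_mul (c := Real.exp (c * t)) (by apply Continuous.aestronglyMeasurable; fun_prop) ?_
    refine Eventually.of_forall fun w => ?_
    rw [Complex.norm_exp]; simp
  refine ⟨hint, ?_⟩
  let f : ℝ → ℂ := (Set.Ioi 0).indicator (fun x : ℝ => ((x ^ (q - 1) : ℝ) : ℂ) * Complex.exp (-((c:ℂ) * x)))
  have hf : Integrable f := (integrable_indicator_iff measurableSet_Ioi).2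
    (lap_integrableC (by linarith) (by simpa using hc))
  have hF : ∀ v : ℝ, FourierTransform.fourier f v = (Real.Gamma q : ℂ) * ((c:ℂ) + (2 * Real.pi * v : ℝ) * Complex.I) ^ (-q : ℂ) := by
    intro v
    rw [← lap_eq (by linarith) (by simpa using hc), Real.fourier_real_eq_integral_exp_smul,
      ← integral_indicator measurableSet_Ioi]
    refine integral_congr_ae (Eventually.of_forall fun x => ?_)
    simp only [f, Set.indicator]
    split_ifs
    · rw [smul_eq_mul, mul_left_comm, ← Complex.exp_add]
      congr 2
      push_cast; ring
    · simp
  have hF' : FourierTransform.fourier f = fun v : ℝ => (Real.Gamma q : ℂ) * ((c:ℂ) + (2 * Real.pi * v : ℝ) * Complex.I) ^ (-q : ℂ) := funext hF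
  have hFi : Integrable (FourierTransform.fourier f) := by
    rw [hF']
    exact ((hint0.comp_mul_left' (R := 2 * Real.pi) (by positivity))).const_mul _
  have hcont : ContinuousAt f t := by
    have : f =ᶠ[𝓝 t] (fun x : ℝ => ((x ^ (q - 1) : ℝ) : ℂ) * Complex.exp (-((c:ℂ) * x))) := by
      filter_upwards [Ioi_mem_nhds ht] with x hx
      exact Set.indicator_of_mem (s := Set.Ioi 0) hx _
    refine ContinuousAt.congr ?_ this.symm
    refine ContinuousAt.mul ?_ (by fun_prop)
    exact Complex.continuous_ofReal.continuousAt.comp (Real.continuousAt_rpow_const t _ (Or.inl ht.ne'))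
  have inv := hf.fourierInv_fourier_eq hFi hcont
  rw [Real.fourierInv_eq', hF'] at inv
  have hft : f t = ((t ^ (q - 1) : ℝ) : ℂ) * Complex.exp (-((c:ℂ) * t)) := Set.indicator_of_mem (s := Set.Ioi 0) ht _
  rw [hft] at inv
  have sub := Measure.integral_comp_mul_left (fun w : ℝ => Complex.exp (((c:ℂ) + w * Complex.I) * t) * ((c:ℂ) + w * Complex.I) ^ (-q : ℂ)) (2 * Real.pi)
  have e : ∀ v : ℝ, Complex.exp (↑(2 * Real.pi * inner ℝ v t) * Complex.I) • ((Real.Gamma q : ℂ) * ((c:ℂ) + (2 * Real.pi * v : ℝ) * Complex.I) ^ (-q : ℂ))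
     = ((Real.Gamma q : ℂ) * Complex.exp (-((c:ℂ) * t))) * (Complex.exp (((c:ℂ) + (2 * Real.pi * v : ℝ) * Complex.I) * t) * ((c:ℂ) + (2 * Real.pi * v : ℝ) * Complex.I) ^ (-q : ℂ)) := by
    intro v
    rw [smul_eq_mul, mul_left_comm, ← mul_assoc (_ * _) _ _, mul_assoc (Real.Gamma q : ℂ), ← Complex.exp_add, mul_assoc (Real.Gamma q : ℂ)]
    congr 3
    simp
    ring
  simp_rw [e] at inv
  rw [integral_const_mul, sub, abs_of_pos (by positivity)] at inv
  have hne := Complex.exp_ne_zero (-((c:ℂ) * t))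
  have hG' : (Real.Gamma q : ℂ) ≠ 0 := by exact_mod_cast hG.ne'
  have inv2 : (Real.Gamma q : ℂ) * ((((2 * Real.pi)⁻¹ : ℝ) : ℂ) * ∫ w : ℝ, Complex.exp (((c:ℂ) + w * Complex.I) * t) * ((c:ℂ) + w * Complex.I) ^ (-q : ℂ)) = ((t ^ (q - 1) : ℝ) : ℂ) := by
    apply mul_right_cancel₀ hne
    rw [← inv, Complex.real_smul]; ring
  have hpi : (Real.pi : ℂ) ≠ 0 := by exact_mod_cast Real.pi_ne_zero
  push_cast at inv2 ⊢
  rw [← inv2]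
  generalize (∫ w : ℝ, Complex.exp (((c:ℂ) + w * Complex.I) * t) * ((c:ℂ) + w * Complex.I) ^ (-q : ℂ)) = J
  field_simp

section banach
variable {𝔸 : Type*} [NormedRing 𝔸] [NormedAlgebra ℂ 𝔸]

noncomputable def Qf (α : ℝ) (a : 𝔸) (s : ℂ) : 𝔸 :=
  (s ^ 2)⁻¹ • ((2 * (α:ℂ) ^ 2) • ((s ^ (α:ℂ)) ^ 2 • resolvent a (s ^ (α:ℂ)) ^ 3)
    + ((α:ℂ) * (1 - α)) • ((s ^ (α:ℂ)) • resolvent a (s ^ (α:ℂ)) ^ 2))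

lemma cpow_term (α : ℝ) {s : ℂ} (hs : s ≠ 0) (k : ℕ) :
    s ^ (-((α * k + α + 2 : ℝ) : ℂ)) = (s ^ 2)⁻¹ * ((s ^ (α:ℂ))⁻¹ * ((s ^ (α:ℂ))⁻¹) ^ k) := by
  rw [Complex.cpow_neg]
  push_cast
  rw [Complex.cpow_add _ _ hs, Complex.cpow_add _ _ hs, Complex.cpow_mul_nat, Complex.cpow_ofNat]
  rw [mul_inv, mul_inv, inv_pow]; ring

lemma Qf_hasSum [CompleteSpace 𝔸] (α : ℝ) (a : 𝔸) {s : ℂ} (hs : s ≠ 0) (h : ‖a‖ < ‖s ^ (α:ℂ)‖) :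
    HasSum (fun k : ℕ => ((((α * k + α) * (α * k + α + 1) : ℝ) : ℂ) * s ^ (-((α * k + α + 2 : ℝ) : ℂ))) • a ^ k)
      (Qf α a s) := by
  have hw0 : s ^ (α:ℂ) ≠ 0 := by
    intro h0; rw [h0, norm_zero] at h; exact absurd h (not_lt.2 (norm_nonneg _))
  have hcp := cpow_term α hs
  unfold Qf
  set w := s ^ (α:ℂ) with hw
  have hr : ‖w⁻¹ • a‖ < 1 := by
    rw [norm_smul, norm_inv, inv_mul_lt_iff₀ (norm_pos_iff.2 hw0)]; simpa using h
  have hres : w • resolvent a w = Ring.inverse (1 - w⁻¹ • a) := by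
    have := spectrum.units_smul_resolvent_self (r := Units.mk0 w hw0) (a := a)
    simpa [resolvent, Units.smul_def] using this
  have h2 := hasSum_choose_mul_geometric_of_norm_lt_one' 1 hr
  have h3 := hasSum_choose_mul_geometric_of_norm_lt_one' 2 hr
  rw [← hres] at h2 h3
  have H := ((h3.const_smul (2 * (α:ℂ)^2)).add (h2.const_smul ((α:ℂ) * (1 - α)))).const_smul ((s^2)⁻¹ * w⁻¹)
  convert H using 1
  · ext k
    rw [hcp k]
    simp only [smul_pow, ← nsmul_eq_mul, ← Nat.cast_smul_eq_nsmul ℂ, smul_smul, ← add_smul]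
    congr 1
    rw [Nat.cast_choose_two]
    push_cast
    simp
    ring
  · simp only [smul_pow, smul_smul, smul_add]
    congr 2 <;> field_simp

lemma Qf_int [CompleteSpace 𝔸] [NormOneClass 𝔸] {α : ℝ} (hα : 0 < α) (a : 𝔸) {t c : ℝ} (ht : 0 < t) (hc : 0 < c)
    (h : ‖a‖ < c ^ α) :
    HasSum (fun k : ℕ => ((2 * Real.pi * t ^ (α + 1) * ((Real.Gamma (α * k + α))⁻¹ * (t ^ α) ^ k) : ℝ) : ℂ) • a ^ k)
      (∫ w : ℝ, Complex.exp (((c:ℂ) + w * Complex.I) * t) • Qf α a ((c:ℂ) + w * Complex.I)) := by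
  have hne : ∀ w : ℝ, (c:ℂ) + w * Complex.I ≠ 0 := fun w h0 => by
    have := congrArg Complex.re h0; simp at this; exact hc.ne' this
  have hcn : ∀ w : ℝ, c ≤ ‖(c:ℂ) + w * Complex.I‖ := fun w => by
    have := Complex.abs_re_le_norm ((c:ℂ) + w * Complex.I)
    simp only [Complex.add_re, Complex.ofReal_re, Complex.mul_re, Complex.I_re, mul_zero, Complex.ofReal_im, Complex.I_im, mul_one, sub_self, add_zero] at this
    exact (le_abs_self c).trans this
  let F : ℕ → ℝ → 𝔸 := fun k w => (((((α * k + α) * (α * k + α + 1) : ℝ) : ℂ) * (Complex.exp (((c:ℂ) + w * Complex.I) * t) * ((c:ℂ) + w * Complex.I) ^ (-((α * k + α + 2 : ℝ) : ℂ))))) • a ^ k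
  have hp : ∀ k : ℕ, 0 < α * k + α := fun k => by positivity
  have hF1 : ∀ k, Integrable (F k) := fun k =>
    ((inv_lap (q := α * k + α + 2) (by linarith [hp k]) hc ht).1.const_mul _).smul_const _
  have hsq := (line_integrable (r := 2) (by norm_num) hc).1
  set K := ∫ w : ℝ, ‖(c : ℂ) + w * Complex.I‖ ^ (-2 : ℝ) with hK
  set r := ‖a‖ / c ^ α with hr
  have hr0 : 0 ≤ r := by positivity
  have hr1 : r < 1 := by rw [hr, div_lt_one (by positivity)]; exact h
  have hFb : ∀ k w, ‖F k w‖ ≤ ((α * k + α) * (α * k + α + 1) * (Real.exp (c * t) * (c ^ α)⁻¹ * r ^ k)) * ‖(c : ℂ) + w * Complex.I‖ ^ (-2 : ℝ) := by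
    intro k w
    have h1 : ‖Complex.exp (((c:ℂ) + w * Complex.I) * t)‖ = Real.exp (c * t) := by
      rw [Complex.norm_exp]; simp
    have hpos : 0 < ‖(c:ℂ) + w * Complex.I‖ := norm_pos_iff.2 (hne w)
    have h2 : ‖((c:ℂ) + w * Complex.I) ^ (-((α * k + α + 2 : ℝ) : ℂ))‖ ≤ (c ^ α)⁻¹ * ((c ^ α)⁻¹) ^ k * ‖(c : ℂ) + w * Complex.I‖ ^ (-2 : ℝ) := by
      rw [← Complex.ofReal_neg, Complex.norm_cpow_real, neg_add, Real.rpow_add hpos]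
      gcongr
      have : (c ^ α)⁻¹ * ((c ^ α)⁻¹) ^ k = c ^ (-(α * k + α)) := by
        rw [Real.rpow_neg hc.le, Real.rpow_add hc, Real.rpow_mul_natCast hc.le, mul_inv, inv_pow, mul_comm]
      rw [this]
      exact Real.rpow_le_rpow_of_nonpos hc (hcn w) (by linarith [hp k])
    have h3 : ‖a ^ k‖ ≤ ‖a‖ ^ k := norm_pow_le a k
    simp only [F]
    rw [norm_smul, norm_mul, norm_mul, h1, Complex.norm_real, Real.norm_of_nonneg (by have := hp k; positivity)]
    have hpk := hp k
    calc _ ≤ (α * k + α) * (α * k + α + 1) * (Real.exp (c * t) * ((c ^ α)⁻¹ * ((c ^ α)⁻¹) ^ k * ‖(c : ℂ) + w * Complex.I‖ ^ (-2 : ℝ))) * ‖a‖ ^ k := by gcongr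
      _ = _ := by rw [hr, div_eq_mul_inv, mul_pow]; ring
  have hS : Summable (fun k : ℕ => ((α * k + α) * (α * k + α + 1) * (Real.exp (c * t) * (c ^ α)⁻¹ * r ^ k)) * K) := by
    have hrn : ‖r‖ < 1 := by rwa [Real.norm_of_nonneg hr0]
    have s0 := summable_pow_mul_geometric_of_norm_lt_one 0 hrn
    have s1 := summable_pow_mul_geometric_of_norm_lt_one 1 hrn
    have s2 := summable_pow_mul_geometric_of_norm_lt_one 2 hrn
    have := (((s2.mul_left (α^2)).add (s1.mul_left (2*α^2+α))).add (s0.mul_left (α^2+α))).mul_left (Real.exp (c * t) * (c ^ α)⁻¹ * K)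
    refine this.congr fun k => ?_
    ring
  have hF2 : Summable (fun k => ∫ w, ‖F k w‖) := by
    refine Summable.of_nonneg_of_le (fun k => integral_nonneg fun w => norm_nonneg _) (fun k => ?_) hS
    rw [hK, ← integral_const_mul]
    exact integral_mono (hF1 k).norm (hsq.const_mul _) (hFb k)
  have key := hasSum_integral_of_summable_integral_norm hF1 hF2
  have e1 : ∀ w : ℝ, ∑' k, F k w = Complex.exp (((c:ℂ) + w * Complex.I) * t) • Qf α a ((c:ℂ) + w * Complex.I) := by
    intro w
    have hlt : ‖a‖ < ‖((c:ℂ) + w * Complex.I) ^ (α:ℂ)‖ := by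
      rw [Complex.norm_cpow_real]
      exact h.trans_le (Real.rpow_le_rpow hc.le (hcn w) hα.le)
    have := (Qf_hasSum α a (hne w) hlt).const_smul (Complex.exp (((c:ℂ) + w * Complex.I) * t))
    rw [← this.tsum_eq]
    refine tsum_congr fun k => ?_
    simp only [F, smul_smul]
    congr 1; ring
  simp_rw [e1] at key
  suffices e4 : (fun k : ℕ => ((2 * Real.pi * t ^ (α + 1) * ((Real.Gamma (α * k + α))⁻¹ * (t ^ α) ^ k) : ℝ) : ℂ) • a ^ k) = fun k => ∫ w, F k w by
    rw [e4]; exact key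
  funext k
  simp only [F]
  rw [integral_smul_const, integral_const_mul, (inv_lap (q := α * k + α + 2) (by linarith [hp k]) hc ht).2]
  congr 1
  rw [← Complex.ofReal_mul]
  congr 1
  have g1 := Real.Gamma_add_one (hp k).ne'
  have g2 := Real.Gamma_add_one (s := α * k + α + 1) (by linarith [hp k])
  rw [show α * k + α + 2 = α * k + α + 1 + 1 by ring, g2, g1]
  have hG := Real.Gamma_pos_of_pos (hp k)
  have hpk := hp k
  have e3 : t ^ (α * k + α + 1 + 1 - 1) = t ^ (α + 1) * (t ^ α) ^ k := by
    rw [← Real.rpow_mul_natCast ht.le, ← Real.rpow_add ht]; congr 1; ring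
  rw [e3]
  field_simp

lemma line_shift {E : Type*} [NormedAddCommGroup E] [NormedSpace ℂ E] [CompleteSpace E] {G : ℂ → E} {c d M : ℝ} (hc : 0 < c) (hcd : c ≤ d)
    (hG : ∀ s : ℂ, 0 < s.re → DifferentiableAt ℂ G s)
    (hb : ∀ s : ℂ, c ≤ s.re → s.re ≤ d → ‖G s‖ ≤ M * ‖s‖ ^ (-2 : ℝ)) :
    ∫ w : ℝ, G ((d:ℂ) + w * Complex.I) = ∫ w : ℝ, G ((c:ℂ) + w * Complex.I) := by
  have hcont : ∀ x : ℝ, 0 < x → Continuous (fun w : ℝ => G ((x:ℂ) + w * Complex.I)) := by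
    intro x hx
    refine continuous_iff_continuousAt.2 fun w => ?_
    have h1 : ContinuousAt G ((x:ℂ) + w * Complex.I) := (hG _ (by simpa using hx)).continuousAt
    exact ContinuousAt.comp (f := fun w : ℝ => (x:ℂ) + w * Complex.I) h1 (by fun_prop)
  have hint : ∀ x : ℝ, c ≤ x → x ≤ d → Integrable (fun w : ℝ => G ((x:ℂ) + w * Complex.I)) := by
    intro x hx hx2
    refine (((line_integrable (r := 2) (by norm_num) (hc.trans_le hx)).1).const_mul M).mono' (hcont x (hc.trans_le hx)).aestronglyMeasurable ?_
    exact Eventually.of_forall fun w => hb _ (by simpa using hx) (by simpa using hx2)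
  have hlim : ∀ x : ℝ, c ≤ x → x ≤ d → Tendsto (fun T : ℝ => ∫ w in (-T)..T, G ((x:ℂ) + w * Complex.I)) atTop (𝓝 (∫ w : ℝ, G ((x:ℂ) + w * Complex.I))) :=
    fun x hx hx2 => intervalIntegral_tendsto_integral (hint x hx hx2) tendsto_neg_atTop_atBot tendsto_id
  have hM : 0 ≤ M := by
    have := (norm_nonneg _).trans (hb (c:ℂ) (by simp) (by simpa using hcd))
    exact nonneg_of_mul_nonneg_left this (by simp; positivity)
  have hor : ∀ σ : ℝ, |σ| = 1 → Tendsto (fun T : ℝ => ∫ x in c..d, G ((x:ℂ) + ((σ * T : ℝ) : ℂ) * Complex.I)) atTop (𝓝 0) := by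
    intro σ hσ
    have hz : Tendsto (fun T : ℝ => M * T ^ (-2:ℝ) * |d - c|) atTop (𝓝 0) := by
      simpa using ((tendsto_rpow_neg_atTop (y := 2) (by norm_num)).const_mul M).mul_const |d - c|
    refine squeeze_zero_norm' ?_ hz
    filter_upwards [eventually_gt_atTop 0] with T hT
    refine intervalIntegral.norm_integral_le_of_norm_le_const fun x hx => ?_
    rw [Set.uIoc_of_le hcd] at hx
    refine (hb _ (by simpa using hx.1.le) (by simpa using hx.2)).trans ?_
    gcongr ?_ * ?_
    refine Real.rpow_le_rpow_of_nonpos hT ?_ (by norm_num)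
    have := Complex.abs_im_le_norm ((x:ℂ) + ((σ * T : ℝ) : ℂ) * Complex.I)
    have e : ((x:ℂ) + ((σ * T : ℝ) : ℂ) * Complex.I).im = σ * T := by simp
    rw [e, abs_mul, hσ, one_mul] at this
    exact (le_abs_self T).trans this
  have hrect : ∀ T : ℝ, Complex.I • (∫ w in (-T)..T, G ((d:ℂ) + w * Complex.I)) - Complex.I • (∫ w in (-T)..T, G ((c:ℂ) + w * Complex.I))
      = (∫ x in c..d, G ((x:ℂ) + ((1 * T : ℝ) : ℂ) * Complex.I)) - (∫ x in c..d, G ((x:ℂ) + (((-1) * T : ℝ) : ℂ) * Complex.I)) := by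
    intro T
    have := Complex.integral_boundary_rect_eq_zero_of_differentiableOn G ⟨c, -T⟩ ⟨d, T⟩ (by
      intro z hz
      refine (hG z ?_).differentiableWithinAt
      have := hz.1
      simp only [Set.mem_preimage, Set.uIcc_of_le hcd] at this
      exact hc.trans_le this.1)
    simp only [one_mul, neg_one_mul] at *
    rw [← sub_eq_zero, ← this]
    abel
  have l1 := (((hlim d hcd le_rfl).const_smul Complex.I).sub ((hlim c le_rfl hcd).const_smul Complex.I)).congr hrect
  have l2 := (hor 1 (by simp)).sub (hor (-1) (by simp))
  have := tendsto_nhds_unique l1 l2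
  rw [sub_zero, ← smul_sub, smul_eq_zero] at this
  exact sub_eq_zero.1 (this.resolve_left Complex.I_ne_zero)

lemma res_bound [CompleteSpace 𝔸] {α : ℝ} (hα0 : 0 < α) (hα1 : α < 1) (a : 𝔸)
    (hspec : ∀ μ ∈ spectrum ℂ a, μ ≠ 0 ∧ α * Real.pi / 2 < |Complex.arg μ|) :
    ∃ C : ℝ, 0 ≤ C ∧ ∀ s : ℂ, 0 ≤ s.re → s ^ (α:ℂ) ∈ resolventSet ℂ a ∧ ‖resolvent a (s ^ (α:ℂ))‖ ≤ C := by
  have hmem : ∀ s : ℂ, 0 ≤ s.re → s ^ (α:ℂ) ∈ resolventSet ℂ a := by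
    intro s hs
    by_contra hn
    obtain ⟨h1, h2⟩ := hspec _ hn
    have hs0 : s ≠ 0 := by
      rintro rfl
      exact h1 (Complex.zero_cpow (by exact_mod_cast hα0.ne'))
    have harg : |s.arg| ≤ Real.pi / 2 := Complex.abs_arg_le_pi_div_two_iff.2 hs
    have e : (s ^ (α:ℂ)).arg = α * s.arg := by
      rw [abs_le] at harg
      have hp := Real.pi_pos
      have h3 : -Real.pi < α * s.arg := by nlinarith
      have h4 : α * s.arg ≤ Real.pi := by nlinarith
      rw [Complex.cpow_def_of_ne_zero hs0, Complex.arg_exp]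
      simp only [Complex.mul_im, Complex.ofReal_re, Complex.ofReal_im, mul_zero, zero_add, Complex.log_im]
      rw [mul_comm s.arg α]
      exact (toIocMod_eq_self _).2 ⟨h3, by linarith⟩
    rw [e, abs_mul, abs_of_pos hα0] at h2
    nlinarith
  have hc : ContinuousOn (fun s : ℂ => resolvent a (s ^ (α:ℂ))) {s | 0 ≤ s.re} := by
    intro s hs
    have h1 : ContinuousAt (resolvent a) (s ^ (α:ℂ)) := (spectrum.hasDerivAt_resolvent_const_left (hmem s hs)).continuousAt
    have h2 : ContinuousAt (fun s : ℂ => s ^ (α:ℂ)) s := Complex.continuousAt_cpow_const_of_re_pos (Or.inl hs) (by simpa using hα0)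
    exact (ContinuousAt.comp (f := fun s : ℂ => s ^ (α:ℂ)) h1 h2).continuousWithinAt
  have hlarge : ∃ M : ℝ, ∀ w : ℂ, M ≤ ‖w‖ → ‖resolvent a w‖ ≤ 1 := by
    have := (spectrum.resolvent_tendsto_cobounded (𝕜 := ℂ) a).norm
    rw [norm_zero] at this
    have h2 := this.eventually (eventually_le_nhds (show (0:ℝ) < 1 by norm_num))
    rw [← comap_norm_atTop, eventually_comap, eventually_atTop] at h2
    obtain ⟨M, hM⟩ := h2
    exact ⟨M, fun w hw => hM _ hw w rfl⟩
  obtain ⟨M, hM⟩ := hlarge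
  have hK : IsCompact ({s : ℂ | 0 ≤ s.re} ∩ Metric.closedBall 0 ((max M 0) ^ (α⁻¹))) :=
    (isCompact_closedBall _ _).inter_left (isClosed_le continuous_const Complex.continuous_re)
  obtain ⟨C, hC⟩ := hK.exists_bound_of_continuousOn (hc.mono Set.inter_subset_left)
  refine ⟨max C 1, by positivity, fun s hs => ⟨hmem s hs, ?_⟩⟩
  by_cases hs2 : ‖s‖ ≤ (max M 0) ^ (α⁻¹)
  · exact (hC s ⟨hs, by simpa using hs2⟩).trans (le_max_left _ _)
  · refine (hM _ ?_).trans (le_max_right _ _)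
    rw [Complex.norm_cpow_real]
    push Not at hs2
    have := Real.rpow_le_rpow (by positivity) hs2.le hα0.le
    rw [← Real.rpow_mul (by positivity), inv_mul_cancel₀ hα0.ne', Real.rpow_one] at this
    exact (le_max_left _ _).trans this

lemma Qf_bounds [CompleteSpace 𝔸] [NormOneClass 𝔸] {α : ℝ} (hα0 : 0 < α) (hα1 : α < 1) (a : 𝔸)
    (hspec : ∀ μ ∈ spectrum ℂ a, μ ≠ 0 ∧ α * Real.pi / 2 < |Complex.arg μ|) :
    ∃ C : ℝ, 0 ≤ C ∧ ∀ s : ℂ, 0 < s.re → DifferentiableAt ℂ (Qf α a) s ∧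
      ‖Qf α a s‖ ≤ C * ‖s‖ ^ (-2:ℝ) ∧ ‖Qf α a s‖ ≤ C * ‖s‖ ^ (-(2 - α)) := by
  obtain ⟨C, hC0, hC⟩ := res_bound hα0 hα1 a hspec
  set D := 1 + ‖a‖ * C with hD
  have hD0 : 0 ≤ D := by positivity
  refine ⟨2 * (D ^ 2 * C + D * C) + 2 * (D * C ^ 2 + C ^ 2), by positivity, fun s hs => ⟨?_, ?_⟩⟩
  · have hs0 : s ≠ 0 := by rintro rfl; simp at hs
    have d1 : DifferentiableAt ℂ (fun s : ℂ => s ^ (α:ℂ)) s := differentiableAt_id.cpow_const (Or.inl hs)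
    have d2 : DifferentiableAt ℂ (fun s : ℂ => resolvent a (s ^ (α:ℂ))) s :=
      DifferentiableAt.comp (f := fun s : ℂ => s ^ (α:ℂ)) s (spectrum.hasDerivAt_resolvent_const_left (hC s hs.le).1).differentiableAt d1
    have d3 : DifferentiableAt ℂ (fun s : ℂ => (s ^ 2)⁻¹) s := (differentiableAt_id.pow 2).inv (pow_ne_zero 2 hs0)
    unfold Qf
    exact d3.fun_smul ((((d1.fun_pow 2).fun_smul (d2.fun_pow 3)).fun_const_smul _).fun_add ((d1.fun_smul (d2.fun_pow 2)).fun_const_smul _))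
  · obtain ⟨hm, hR⟩ := hC s hs.le
    have hs0 : s ≠ 0 := by rintro rfl; simp at hs
    have hspos : 0 < ‖s‖ := norm_pos_iff.2 hs0
    have hwn : ‖s ^ (α:ℂ)‖ = ‖s‖ ^ α := Complex.norm_cpow_real _ _
    unfold Qf
    set w := s ^ (α:ℂ)
    set R := resolvent a w with hRdef
    have hwR : ‖w • R‖ ≤ D := by
      have : w • R = 1 + a * R := by
        have h1 : (algebraMap ℂ 𝔸 w - a) * R = 1 := Ring.mul_inverse_cancel _ hm
        rw [sub_mul, ← Algebra.smul_def] at h1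
        rw [← h1]; abel
      rw [this]
      refine (norm_add_le _ _).trans ?_
      rw [norm_one, hD]
      gcongr
      exact (norm_mul_le _ _).trans (by gcongr)
    rw [norm_smul] at hwR
    have hα2 : α ^ 2 ≤ 1 := by nlinarith
    have n1 : ‖(2 * (α:ℂ) ^ 2)‖ ≤ 2 := by
      rw [norm_mul, norm_pow, Complex.norm_real, Real.norm_of_nonneg hα0.le]; simpa using hα2
    have n2 : ‖(α:ℂ) * (1 - α)‖ ≤ 2 := by
      rw [← Complex.ofReal_one, ← Complex.ofReal_sub, ← Complex.ofReal_mul, Complex.norm_real, Real.norm_of_nonneg (by nlinarith)]; nlinarith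
    have hR3 : ‖R ^ 3‖ ≤ ‖R‖ ^ 3 := norm_pow_le _ _
    have hR2 : ‖R ^ 2‖ ≤ ‖R‖ ^ 2 := norm_pow_le _ _
    have main : ‖(2 * (α:ℂ) ^ 2) • (w ^ 2 • R ^ 3) + ((α:ℂ) * (1 - α)) • (w • R ^ 2)‖ ≤ 2 * (‖w‖^2 * ‖R‖^3) + 2 * (‖w‖ * ‖R‖^2) := by
      refine (norm_add_le _ _).trans ?_
      rw [norm_smul, norm_smul, norm_smul, norm_smul, norm_pow w]
      gcongr
    have hs2 : ‖(s^2)⁻¹‖ = ‖s‖ ^ (-2:ℝ) := by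
      rw [norm_inv, norm_pow, Real.rpow_neg hspos.le]; norm_cast
    rw [norm_smul, hs2]
    have hn := norm_nonneg R
    have hwnn := norm_nonneg w
    constructor
    · rw [mul_comm]
      gcongr
      refine main.trans ?_
      have b1 : ‖w‖^2 * ‖R‖^3 ≤ D ^ 2 * C := by
        calc _ = (‖w‖ * ‖R‖)^2 * ‖R‖ := by ring
          _ ≤ _ := by gcongr
      have b2 : ‖w‖ * ‖R‖^2 ≤ D * C := by
        calc _ = (‖w‖ * ‖R‖) * ‖R‖ := by ring
          _ ≤ _ := by gcongr
      have : 0 ≤ D * C ^ 2 + C ^ 2 := by positivity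
      linarith
    · have e : ‖s‖ ^ (-(2-α)) = ‖s‖ ^ (-2:ℝ) * ‖w‖ := by
        rw [hwn, ← Real.rpow_add hspos]; congr 1; ring
      rw [e, mul_left_comm]
      gcongr
      refine main.trans ?_
      have b1 : ‖w‖^2 * ‖R‖^3 ≤ D * C ^ 2 * ‖w‖ := by
        calc _ = (‖w‖ * ‖R‖) * ‖R‖^2 * ‖w‖ := by ring
          _ ≤ _ := by gcongr
      have b2 : ‖w‖ * ‖R‖^2 ≤ C ^ 2 * ‖w‖ := by
        calc _ = ‖R‖ ^ 2 * ‖w‖ := by ring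
          _ ≤ _ := by gcongr
      have : 0 ≤ (D ^ 2 * C + D * C) * ‖w‖ := by positivity
      linarith

lemma exists_c {α : ℝ} (hα0 : 0 < α) (x : ℝ) (m : ℝ) : ∃ c : ℝ, 0 < c ∧ m ≤ c ∧ x < c ^ α := by
  have := (((tendsto_rpow_atTop hα0).eventually_gt_atTop x).and ((eventually_gt_atTop 0).and (eventually_ge_atTop m))).exists
  obtain ⟨c, h1, h2, h3⟩ := this
  exact ⟨c, h2, h3, h1⟩

lemma ml_summable {α : ℝ} (hα0 : 0 < α) (x : ℝ) (hx : 0 ≤ x) :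
    Summable (fun k : ℕ => (Real.Gamma (α * k + α))⁻¹ * x ^ k) := by
  obtain ⟨c, hc, -, h⟩ := exists_c hα0 x 0
  have := (Qf_int (𝔸 := ℂ) hα0 (x:ℂ) one_pos hc (by simpa [abs_of_nonneg hx] using h)).summable
  simp only [Real.one_rpow, one_pow, mul_one, smul_eq_mul] at this
  have h2 := (Complex.reCLM.summable this).mul_left (2 * Real.pi)⁻¹
  refine h2.congr fun k => ?_
  rw [← Complex.ofReal_pow, ← Complex.ofReal_mul, Complex.reCLM_apply, Complex.ofReal_re]
  have := Real.pi_ne_zero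
  field_simp

theorem ml_bound [CompleteSpace 𝔸] [NormOneClass 𝔸] {α : ℝ} (hα0 : 0 < α) (hα1 : α < 1) (a : 𝔸)
    (hspec : ∀ μ ∈ spectrum ℂ a, μ ≠ 0 ∧ α * Real.pi / 2 < |Complex.arg μ|) :
    ∃ C : ℝ, 0 ≤ C ∧ ∀ t : ℝ, 0 < t → ∃ X : 𝔸,
      HasSum (fun k : ℕ => (((Real.Gamma (α * k + α))⁻¹ * (t ^ α) ^ k : ℝ) : ℂ) • a ^ k) X ∧
      (t ≤ 1 → ‖X‖ ≤ C) ∧ ‖X‖ ≤ C * t ^ (-(2 * α)) := by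
  obtain ⟨C, hC0, hC⟩ := Qf_bounds hα0 hα1 a hspec
  set L := ∫ w : ℝ, (1 + w ^ 2 : ℝ) ^ (-(2 - α)/2) with hL
  have hL0 : 0 ≤ L := integral_nonneg fun w => by positivity
  have hsum := ml_summable hα0 ‖a‖ (norm_nonneg a)
  have hGp : ∀ k : ℕ, 0 < Real.Gamma (α * k + α) := fun k => Real.Gamma_pos_of_pos (by positivity)
  set B := ∑' k : ℕ, (Real.Gamma (α * k + α))⁻¹ * ‖a‖ ^ k with hB
  refine ⟨max B (Real.exp 1 * C * L), by positivity, fun t ht => ?_⟩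
  obtain ⟨c, hc, hct, h⟩ := exists_c hα0 ‖a‖ t⁻¹
  have key := Qf_int hα0 a ht hc h
  set J := ∫ w : ℝ, Complex.exp (((c:ℂ) + w * Complex.I) * t) • Qf α a ((c:ℂ) + w * Complex.I) with hJ
  set P := 2 * Real.pi * t ^ (α + 1) with hP
  have hP0 : 0 < P := by positivity
  have hS : HasSum (fun k : ℕ => (((Real.Gamma (α * k + α))⁻¹ * (t ^ α) ^ k : ℝ) : ℂ) • a ^ k) (((P⁻¹ : ℝ) : ℂ) • J) := by
    refine (key.const_smul ((P⁻¹ : ℝ) : ℂ)).congr_fun ?_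
    intro k
    rw [smul_smul, ← Complex.ofReal_mul, inv_mul_cancel_left₀ hP0.ne']
  refine ⟨_, hS, fun ht1 => ?_, ?_⟩
  · refine le_trans ?_ (le_max_left _ _)
    rw [← hS.tsum_eq]
    refine tsum_of_norm_bounded hsum.hasSum fun k => ?_
    rw [norm_smul, Complex.norm_real, Real.norm_of_nonneg (by have := hGp k; positivity), mul_assoc]
    have := hGp k
    gcongr
    have h1 : (t ^ α) ^ k ≤ 1 := pow_le_one₀ (by positivity) (Real.rpow_le_one ht.le ht1 hα0.le)
    calc _ ≤ 1 * ‖a‖ ^ k := by gcongr; exact norm_pow_le a k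
      _ = _ := one_mul _
  · have shift := line_shift (G := fun s => Complex.exp (s * t) • Qf α a s) (c := t⁻¹) (d := c) (M := Real.exp (c * t) * C) (by positivity) hct
      (fun s hs => DifferentiableAt.fun_smul (show DifferentiableAt ℂ (fun s : ℂ => Complex.exp (s * t)) s by fun_prop) (hC s hs).1)
      (fun s hs1 hs2 => by
        have : 0 < s.re := lt_of_lt_of_le (by positivity) hs1
        rw [norm_smul, Complex.norm_exp, mul_assoc]
        gcongr
        · simpa using by gcongr
        · exact (hC s this).2.1)
    have hJ2 : ‖J‖ ≤ Real.exp 1 * C * ((t⁻¹) ^ (1 - (2 - α)) * L) := by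
      rw [hJ, shift, hL, ← (line_integrable (r := 2 - α) (by linarith) (inv_pos.2 ht)).2, ← integral_const_mul]
      refine norm_integral_le_of_norm_le ((line_integrable (r := 2 - α) (by linarith) (inv_pos.2 ht)).1.const_mul _) ?_
      refine Eventually.of_forall fun w => ?_
      rw [norm_smul, Complex.norm_exp, mul_assoc]
      have e : (((t⁻¹ : ℝ) : ℂ) + w * Complex.I).re = t⁻¹ := by simp
      have e1 : ((((t⁻¹ : ℝ) : ℂ) + w * Complex.I) * t).re = 1 := by
        rw [Complex.re_mul_ofReal, e, inv_mul_cancel₀ ht.ne']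
      rw [e1]
      gcongr
      exact (hC _ (by rw [e]; positivity)).2.2
    rw [norm_smul, Complex.norm_real, Real.norm_of_nonneg (by positivity)]
    have hP1 : t ^ (α + 1) ≤ P := by
      rw [hP]
      have := Real.pi_gt_three
      have : 0 < t ^ (α + 1) := by positivity
      nlinarith
    calc P⁻¹ * ‖J‖ ≤ (t ^ (α + 1))⁻¹ * (Real.exp 1 * C * ((t⁻¹) ^ (1 - (2 - α)) * L)) := by gcongr
      _ = (Real.exp 1 * C * L) * t ^ (-(2 * α)) := by
        have : t ^ (-(2 * α)) = (t ^ (α + 1))⁻¹ * (t⁻¹) ^ (1 - (2 - α)) := by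
          rw [← Real.rpow_neg ht.le, Real.inv_rpow ht.le, ← Real.rpow_neg ht.le, ← Real.rpow_add ht]; congr 1; ring
        rw [this]; ring
      _ ≤ _ := by gcongr; exact le_max_right _ _

end banach

section fin

noncomputable def mfun (α u : ℝ) : ℝ := u ^ (α - 1) * min 1 (u ^ (-(2 * α)))

lemma mfun_int {α : ℝ} (hα0 : 0 < α) : IntegrableOn (mfun α) (Set.Ioi 0) := by
  have hm : Measurable (mfun α) := by unfold mfun; fun_prop
  rw [← Set.Ioc_union_Ioi_eq_Ioi (zero_le_one (α := ℝ))]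
  refine IntegrableOn.union ?_ ?_
  · have h1 : IntegrableOn (fun u : ℝ => u ^ (α - 1)) (Set.Ioc 0 1) :=
      (intervalIntegrable_iff_integrableOn_Ioc_of_le zero_le_one).1 (intervalIntegral.intervalIntegrable_rpow' (by linarith))
    refine Integrable.mono' h1 hm.aestronglyMeasurable ?_
    filter_upwards [ae_restrict_mem measurableSet_Ioc] with u hu
    have := hu.1
    unfold mfun
    rw [Real.norm_of_nonneg (by positivity)]
    exact mul_le_of_le_one_right (by positivity) (min_le_left _ _)
  · have h1 : IntegrableOn (fun u : ℝ => u ^ (-α - 1)) (Set.Ioi 1) :=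
      integrableOn_Ioi_rpow_of_lt (by linarith) one_pos
    refine Integrable.mono' h1 hm.aestronglyMeasurable ?_
    filter_upwards [ae_restrict_mem measurableSet_Ioi] with u hu
    have hu0 : 0 < u := lt_trans one_pos hu
    unfold mfun
    rw [Real.norm_of_nonneg (by positivity)]
    have : u ^ (-α - 1) = u ^ (α - 1) * u ^ (-(2 * α)) := by
      rw [← Real.rpow_add hu0]; congr 1; ring
    rw [this]
    gcongr
    exact min_le_right _ _

lemma mfun_le {α u : ℝ} (hα0 : 0 < α) (hu : 0 < u) : mfun α u ≤ u⁻¹ := by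
  have : u ^ (α - 1) = u⁻¹ * u ^ α := by
    rw [← Real.rpow_neg_one, ← Real.rpow_add hu]; congr 1; ring
  unfold mfun
  rw [this, mul_assoc]
  refine mul_le_of_le_one_right (by positivity) ?_
  rcases le_total u 1 with h | h
  · calc _ ≤ u ^ α * 1 := by gcongr; exact min_le_left _ _
      _ ≤ 1 := by rw [mul_one]; exact Real.rpow_le_one hu.le h hα0.le
  · calc _ ≤ u ^ α * u ^ (-(2 * α)) := by gcongr; exact min_le_right _ _
      _ = u ^ (-α) := by rw [← Real.rpow_add hu]; congr 1; ring
      _ ≤ 1 := Real.rpow_le_one_of_one_le_of_nonpos h (by linarith)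

lemma final_bound {α : ℝ} (hα0 : 0 < α) (hα1 : α < 1) (N : ℝ → ℝ) (C : ℝ) (hC : 0 ≤ C) (hN0 : ∀ u, 0 ≤ N u)
    (hN1 : ∀ u, 0 < u → u ≤ 1 → N u ≤ C) (hN2 : ∀ u, 0 < u → N u ≤ C * u ^ (-(2 * α))) :
    ∃ D : ℝ, ∀ t : ℝ, 0 ≤ t →
      t ^ (1 - α) * ∫ τ in (0:ℝ)..t, (t - τ) ^ (α - 1) * N (t - τ) * τ ^ (α - 1) ≤ D := by
  have hNm : ∀ u, 0 < u → u ^ (α - 1) * N u ≤ C * mfun α u := by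
    intro u hu
    have : N u ≤ C * min 1 (u ^ (-(2 * α))) := by
      rcases le_total u 1 with h | h
      · rw [min_eq_left (Real.one_le_rpow_of_pos_of_le_one_of_nonpos hu h (by linarith)), mul_one]
        exact hN1 u hu h
      · rw [min_eq_right (Real.rpow_le_one_of_one_le_of_nonpos h (by linarith))]
        exact hN2 u hu
    unfold mfun
    rw [mul_left_comm]
    gcongr
  set M := ∫ u in Set.Ioi (0:ℝ), mfun α u with hM
  have hm0 : ∀ u, 0 < u → 0 ≤ mfun α u := fun u hu => by unfold mfun; positivity
  have hM0 : 0 ≤ M := setIntegral_nonneg measurableSet_Ioi fun u hu => hm0 u hu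
  refine ⟨C * ((1/2) ^ (α - 1) * M + 2 / α), fun t ht => ?_⟩
  rcases ht.eq_or_lt with rfl | ht
  · simp; positivity
  have i1 : IntervalIntegrable (fun τ => mfun α (t - τ)) volume 0 t := by
    have h0 : IntervalIntegrable (mfun α) volume 0 t :=
      (intervalIntegrable_iff_integrableOn_Ioc_of_le ht.le).2 ((mfun_int hα0).mono_set Set.Ioc_subset_Ioi_self)
    have := h0.comp_sub_left t
    simpa using this.symm
  have i2 : IntervalIntegrable (fun τ : ℝ => τ ^ (α - 1)) volume 0 t := intervalIntegral.intervalIntegrable_rpow' (by linarith)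
  have hb := intervalIntegral.norm_integral_le_of_norm_le (μ := volume) (f := fun τ => (t - τ) ^ (α - 1) * N (t - τ) * τ ^ (α - 1))
    (g := fun τ => C * (t/2) ^ (α - 1) * mfun α (t - τ) + C * (2 / t) * τ ^ (α - 1)) ht.le
    (by
      have : ∀ᵐ τ : ℝ, τ ≠ t := by simp [ae_iff]
      filter_upwards [this] with τ hne hτ
      have hτ0 := hτ.1
      have hu : 0 < t - τ := sub_pos.2 (lt_of_le_of_ne hτ.2 hne)
      have hn := hN0 (t - τ)
      have hm := hm0 _ hu
      rw [Real.norm_of_nonneg (by positivity)]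
      have h1 := hNm _ hu
      rcases le_total (t/2) τ with h | h
      · have h2 : τ ^ (α - 1) ≤ (t/2) ^ (α - 1) := Real.rpow_le_rpow_of_nonpos (by positivity) h (by linarith)
        calc _ ≤ (C * mfun α (t - τ)) * (t/2) ^ (α - 1) := by gcongr
          _ = C * (t/2) ^ (α - 1) * mfun α (t - τ) := by ring
          _ ≤ _ := le_add_of_nonneg_right (by positivity)
      · have h2 : mfun α (t - τ) ≤ 2 / t := by
          refine (mfun_le hα0 hu).trans ?_
          rw [← inv_div]
          exact inv_anti₀ (by positivity) (by linarith)
        calc _ ≤ (C * (2 / t)) * τ ^ (α - 1) := mul_le_mul_of_nonneg_right (h1.trans (by gcongr)) (by positivity)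
          _ ≤ _ := le_add_of_nonneg_left (by positivity))
    ((i1.const_mul _).add (i2.const_mul _))
  have hb2 := (le_abs_self _).trans hb
  rw [intervalIntegral.integral_add (i1.const_mul _) (i2.const_mul _), intervalIntegral.integral_const_mul,
    intervalIntegral.integral_const_mul, intervalIntegral.integral_comp_sub_left (fun u => mfun α u) t,
    integral_rpow (Or.inl (by linarith)), sub_self, sub_zero, sub_add_cancel, Real.zero_rpow hα0.ne', sub_zero] at hb2
  have hM2 : ∫ u in (0:ℝ)..t, mfun α u ≤ M := by
    rw [intervalIntegral.integral_of_le ht.le]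
    refine setIntegral_mono_set (mfun_int hα0) ?_ (Set.Ioc_subset_Ioi_self.eventuallyLE)
    filter_upwards [ae_restrict_mem measurableSet_Ioi] with u hu using hm0 u hu
  have e1 : t ^ (1 - α) * (t / 2) ^ (α - 1) = (1/2) ^ (α - 1) := by
    rw [div_eq_mul_one_div, Real.mul_rpow ht.le (by norm_num), ← mul_assoc, ← Real.rpow_add ht]
    simp
  have e2 : t ^ (1 - α) * (2 / t * (t ^ α / α)) = 2 / α := by
    have : t ^ (1 - α) * t ^ α = t := by rw [← Real.rpow_add ht]; simp
    calc _ = (t ^ (1 - α) * t ^ α) * (2 / t / α) := by ring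
      _ = _ := by rw [this]; field_simp
  calc _ ≤ t ^ (1 - α) * (C * (t / 2) ^ (α - 1) * M + C * (2 / t) * (t ^ α / α)) := by
        gcongr
        refine hb2.trans ?_
        gcongr
    _ = C * ((t ^ (1 - α) * (t / 2) ^ (α - 1)) * M + t ^ (1 - α) * (2 / t * (t ^ α / α))) := by ring
    _ = _ := by rw [e1, e2]

end fin

lemma norm_map_re_le {s : ℕ} (X : Matrix (Fin s) (Fin s) ℂ) : ‖X.map Complex.re‖ ≤ ‖X‖ := by
  have : ‖X.map Complex.re‖₊ ≤ ‖X‖₊ := by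
    rw [Matrix.linfty_opNNNorm_def, Matrix.linfty_opNNNorm_def]
    refine Finset.sup_mono_fun fun i _ => Finset.sum_le_sum fun j _ => ?_
    exact Complex.abs_re_le_norm (X i j)
  exact this

attribute [local instance] Matrix.linftyOpNormedAlgebra in
lemma ML_bound (α : ℝ) (hα0 : 0 < α) (hα1 : α < 1) (s : ℕ)
    (A : Matrix (Fin s) (Fin s) ℝ)
    (hspec : ∀ μ ∈ spectrum ℂ (A.map (algebraMap ℝ ℂ)),
      μ ≠ 0 ∧ α * Real.pi / 2 < |Complex.arg μ|) :
    ∃ C : ℝ, 0 ≤ C ∧ ∀ u : ℝ, 0 < u → (u ≤ 1 → ‖ML α α (u ^ α • A)‖ ≤ C) ∧ ‖ML α α (u ^ α • A)‖ ≤ C * u ^ (-(2 * α)) := by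
  rcases Nat.eq_zero_or_pos s with rfl | hs
  · refine ⟨0, le_rfl, fun u hu => ?_⟩
    have : ML α α (u ^ α • A) = 0 := Subsingleton.elim _ _
    rw [this, norm_zero]; simp
  have : Nonempty (Fin s) := ⟨⟨0, hs⟩⟩
  have : CompleteSpace (Matrix (Fin s) (Fin s) ℂ) := FiniteDimensional.complete ℂ _
  obtain ⟨C, hC, h⟩ := ml_bound hα0 hα1 (A.map (algebraMap ℝ ℂ)) hspec
  refine ⟨C, hC, fun u hu => ?_⟩
  obtain ⟨X, hX, h1, h2⟩ := h u hu
  have hML : ML α α (u ^ α • A) = X.map Complex.re := by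
    have := hX.map (AddMonoidHom.mapMatrix (m := Fin s) (n := Fin s) Complex.reLm.toAddMonoidHom)
      (continuous_id.matrix_map Complex.continuous_re)
    unfold ML
    refine HasSum.tsum_eq ?_
    have hre : X.map Complex.re = AddMonoidHom.mapMatrix (m := Fin s) (n := Fin s) Complex.reLm.toAddMonoidHom X := rfl
    rw [hre]
    convert this using 1
    funext k
    have hp : (A.map (algebraMap ℝ ℂ)) ^ k = (A ^ k).map (algebraMap ℝ ℂ) :=
      (map_pow (algebraMap ℝ ℂ).mapMatrix A k).symm
    ext i j
    simp only [Function.comp_apply, hp]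
    simp [smul_pow, mul_assoc, ← Complex.ofReal_pow]
  rw [hML]
  exact ⟨fun hu1 => (norm_map_re_le X).trans (h1 hu1), (norm_map_re_le X).trans h2⟩

theorem stmt2 (α : ℝ) (hα0 : 0 < α) (hα1 : α < 1) (s : ℕ)
    (A : Matrix (Fin s) (Fin s) ℝ)
    (hspec : ∀ μ ∈ spectrum ℂ (A.map (algebraMap ℝ ℂ)),
      μ ≠ 0 ∧ α * Real.pi / 2 < |Complex.arg μ|) :
    ∃ C : ℝ, ∀ t : ℝ, 0 ≤ t →
      t ^ (1 - α) * ∫ τ in (0:ℝ)..t,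
        (t - τ) ^ (α - 1) * ‖ML α α ((t - τ) ^ α • A)‖ * τ ^ (α - 1) ≤ C := by
  obtain ⟨C, hC, h⟩ := ML_bound α hα0 hα1 s A hspec
  exact final_bound hα0 hα1 (fun u => ‖ML α α (u ^ α • A)‖) C hC (fun u => norm_nonneg _)
    (fun u hu => (h u hu).1) (fun u hu => (h u hu).2)
end

section
/- Let 0 < α < 1, let A be a real s×s matrix, and suppose there exist t₀ > 0 and M > 0 such that t^{α-1} ‖E_{α,α}(t^α A)‖ ≤ M / t^{α+1} for all t ≥ t₀. Then for every T > 2t₀ and every t > T one has t^{1-α} ∫₀^{t-t₀} (t-τ)^{α-1} ‖E_{α,α}((t-τ)^α A)‖ τ^{α-1} dτ ≤ M ( 2/(α T^α) + 2^{1-α}/(α t₀^α) ). -/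
open Filter Topology MeasureTheory

attribute [local instance] Matrix.linftyOpNormedAddCommGroup Matrix.linftyOpNormedRing

theorem stmt3 (α : ℝ) (hα0 : 0 < α) (hα1 : α < 1) (s : ℕ)
    (A : Matrix (Fin s) (Fin s) ℝ) (t₀ M : ℝ) (ht₀ : 0 < t₀) (hM : 0 < M)
    (h : ∀ t ≥ t₀, t ^ (α - 1) * ‖ML α α (t ^ α • A)‖ ≤ M / t ^ (α + 1)) :
    ∀ T > 2 * t₀, ∀ t > T,
      t ^ (1 - α) * ∫ τ in (0:ℝ)..(t - t₀),
        (t - τ) ^ (α - 1) * ‖ML α α ((t - τ) ^ α • A)‖ * τ ^ (α - 1)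
      ≤ M * (2 / (α * T ^ α) + 2 ^ (1 - α) / (α * t₀ ^ α)) := by
  intro T hT t ht
  have hT0 : 0 < T := by linarith
  have ht0 : 0 < t := by linarith
  have hb : 0 < t / 2 := by linarith
  have hrhs : 0 ≤ M * (2 / (α * T ^ α) + 2 ^ (1 - α) / (α * t₀ ^ α)) := by positivity
  set f : ℝ → ℝ := fun τ =>
    (t - τ) ^ (α - 1) * ‖ML α α ((t - τ) ^ α • A)‖ * τ ^ (α - 1) with hf
  by_cases hi : IntervalIntegrable f volume 0 (t - t₀)
  swap
  · rw [intervalIntegral.integral_undef hi, mul_zero]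
    exact hrhs
  have hi1 : IntervalIntegrable f volume 0 (t / 2) :=
    hi.mono_set (by
      rw [Set.uIcc_of_le (by linarith), Set.uIcc_of_le (by linarith)]
      exact Set.Icc_subset_Icc le_rfl (by linarith))
  have hi2 : IntervalIntegrable f volume (t / 2) (t - t₀) :=
    hi.mono_set (by
      rw [Set.uIcc_of_le (by linarith), Set.uIcc_of_le (by linarith)]
      exact Set.Icc_subset_Icc (by linarith) le_rfl)
  rw [← intervalIntegral.integral_add_adjacent_intervals hi1 hi2]
  have key : ∀ τ, 0 ≤ τ → τ ≤ t - t₀ →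
      f τ ≤ M * (t - τ) ^ (-α - 1) * τ ^ (α - 1) := by
    intro τ h0 h1
    have h2 := h (t - τ) (by linarith)
    have h3 : M / (t - τ) ^ (α + 1) = M * (t - τ) ^ (-α - 1) := by
      rw [div_eq_mul_inv, ← Real.rpow_neg (by linarith)]
      congr 2; ring
    rw [h3] at h2
    exact mul_le_mul_of_nonneg_right h2 (Real.rpow_nonneg h0 _)
  have I1 : ∫ τ in (0:ℝ)..(t / 2), f τ ≤ M * (t / 2) ^ (-α - 1) * ((t / 2) ^ α / α) := by
    have e : ∫ τ in (0:ℝ)..(t / 2), M * (t / 2) ^ (-α - 1) * τ ^ (α - 1)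
        = M * (t / 2) ^ (-α - 1) * ((t / 2) ^ α / α) := by
      rw [intervalIntegral.integral_const_mul, integral_rpow (Or.inl (by linarith))]
      rw [sub_add_cancel, Real.zero_rpow hα0.ne', sub_zero]
    rw [← e]
    refine intervalIntegral.integral_mono_on hb.le hi1
      ((intervalIntegral.intervalIntegrable_rpow' (by linarith)).const_mul _) ?_
    intro τ hτ
    refine (key τ hτ.1 (by linarith [hτ.2])).trans ?_
    refine mul_le_mul_of_nonneg_right ?_ (Real.rpow_nonneg hτ.1 _)
    refine mul_le_mul_of_nonneg_left ?_ hM.le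
    exact Real.rpow_le_rpow_of_nonpos hb (by linarith [hτ.2]) (by linarith)
  have I2 : ∫ τ in (t / 2)..(t - t₀), f τ ≤ M * (t / 2) ^ (α - 1) * (t₀ ^ (-α) / α) := by
    have hn : (0:ℝ) ∉ Set.uIcc t₀ (t / 2) := by
      rw [Set.uIcc_of_le (by linarith)]
      intro hh
      linarith [hh.1]
    have e : ∫ τ in (t / 2)..(t - t₀), M * (t / 2) ^ (α - 1) * (t - τ) ^ (-α - 1)
        = M * (t / 2) ^ (α - 1) * ((t₀ ^ (-α) - (t / 2) ^ (-α)) / α) := by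
      rw [intervalIntegral.integral_const_mul,
        intervalIntegral.integral_comp_sub_left (fun x => x ^ (-α - 1)) t]
      rw [sub_sub_cancel, show t - t / 2 = t / 2 by ring,
        integral_rpow (Or.inr ⟨by linarith, hn⟩), sub_add_cancel]
      congr 1
      field_simp
      ring
    have ii : IntervalIntegrable (fun τ => M * (t / 2) ^ (α - 1) * (t - τ) ^ (-α - 1))
        volume (t / 2) (t - t₀) := by
      apply ContinuousOn.intervalIntegrable
      rw [Set.uIcc_of_le (by linarith)]
      refine continuousOn_const.mul (ContinuousOn.rpow_const (by fun_prop) ?_)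
      intro x hx
      left
      linarith [hx.2]
    have h1 : ∫ τ in (t / 2)..(t - t₀), f τ
        ≤ ∫ τ in (t / 2)..(t - t₀), M * (t / 2) ^ (α - 1) * (t - τ) ^ (-α - 1) := by
      refine intervalIntegral.integral_mono_on (by linarith) hi2 ii ?_
      intro τ hτ
      refine (key τ (by linarith [hτ.1]) hτ.2).trans ?_
      have h4 : τ ^ (α - 1) ≤ (t / 2) ^ (α - 1) :=
        Real.rpow_le_rpow_of_nonpos hb hτ.1 (by linarith)
      have h5 : 0 ≤ M * (t - τ) ^ (-α - 1) :=
        mul_nonneg hM.le (Real.rpow_nonneg (by linarith [hτ.2]) _)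
      calc _ ≤ M * (t - τ) ^ (-α - 1) * (t / 2) ^ (α - 1) :=
            mul_le_mul_of_nonneg_left h4 h5
        _ = _ := by ring
    refine h1.trans ?_
    rw [e]
    have : 0 ≤ (t / 2) ^ (-α) := by positivity
    gcongr
    linarith
  have hp : 0 < t ^ (1 - α) := by positivity
  have J1 : t ^ (1 - α) * (M * (t / 2) ^ (-α - 1) * ((t / 2) ^ α / α)) ≤ M * (2 / (α * T ^ α)) := by
    have a1 : (t / 2) ^ (-α - 1) * (t / 2) ^ α = 2 / t := by
      rw [← Real.rpow_add hb, show -α - 1 + α = -1 by ring, Real.rpow_neg_one, inv_div]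
    have a2 : t ^ (1 - α) = t / t ^ α := by
      rw [Real.rpow_sub ht0, Real.rpow_one]
    have a3 : T ^ α ≤ t ^ α := Real.rpow_le_rpow hT0.le ht.le hα0.le
    have a4 : 0 < T ^ α := by positivity
    calc _ = M * (t ^ (1 - α) * ((t / 2) ^ (-α - 1) * (t / 2) ^ α) / α) := by ring
      _ = M * (2 / (α * t ^ α)) := by
        rw [a1, a2]; field_simp
      _ ≤ _ := by gcongr
  have J2 : t ^ (1 - α) * (M * (t / 2) ^ (α - 1) * (t₀ ^ (-α) / α))
      = M * (2 ^ (1 - α) / (α * t₀ ^ α)) := by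
    have a1 : (t / 2) ^ (α - 1) = 2 ^ (1 - α) / t ^ (1 - α) := by
      rw [show α - 1 = -(1 - α) by ring, Real.rpow_neg hb.le,
        Real.div_rpow ht0.le (by norm_num), inv_div]
    rw [a1, Real.rpow_neg ht₀.le]
    field_simp
  have := mul_le_mul_of_nonneg_left (add_le_add I1 I2) hp.le
  rw [mul_add _ (M * (t / 2) ^ (-α - 1) * ((t / 2) ^ α / α)), J2] at this
  linarith
end

section
/- Let 0 < α < 1 and γ > 0. Then for every t > 0 one has e^{-γt} ∫₀^t (t-τ)^{α-1} τ^{α-1} e^{γτ} dτ ≤ 2^{2-α} Γ(α) / (t^{1-α} γ^α). -/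
open Filter Topology MeasureTheory

theorem stmt5 (α γ : ℝ) (hα0 : 0 < α) (hα1 : α < 1) (hγ : 0 < γ) :
    ∀ t > (0:ℝ),
      Real.exp (-(γ * t)) * ∫ τ in (0:ℝ)..t, (t - τ) ^ (α - 1) * τ ^ (α - 1) * Real.exp (γ * τ)
        ≤ 2 ^ (2 - α) * Real.Gamma α / (t ^ (1 - α) * γ ^ α) := by
  intro t ht
  obtain ⟨g, hg⟩ : ∃ g : ℝ → ℝ, g = fun s => s ^ (α - 1) * Real.exp (-(γ * s)) := ⟨_, rfl⟩
  obtain ⟨c, hc⟩ : ∃ c : ℝ, c = (t / 2) ^ (α - 1) := ⟨_, rfl⟩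
  have hc0 : 0 < c := by rw [hc]; positivity
  have hg0 : ∀ s, 0 ≤ s → 0 ≤ g s := by
    intro s hs; rw [hg]; positivity
  have hgi : IntegrableOn g (Set.Ioi 0) := by
    have := integrableOn_rpow_mul_exp_neg_mul_rpow (p := 1) (s := α - 1) (b := γ)
      (by linarith) one_pos hγ
    simpa [hg] using this
  have hgI : ∫ s in Set.Ioi 0, g s = (1 / γ) ^ α * Real.Gamma α := by
    rw [hg]; exact Real.integral_rpow_mul_exp_neg_mul_Ioi hα0 hγ
  have hgt : IntervalIntegrable g volume 0 t := by
    rw [intervalIntegrable_iff_integrableOn_Ioc_of_le ht.le]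
    exact hgi.mono_set Set.Ioc_subset_Ioi_self
  have hgt' : IntervalIntegrable (fun s => g (t - s)) volume 0 t := by
    have := (hgt.comp_sub_left t).symm
    simpa using this
  have hle : ∫ s in (0:ℝ)..t, g s ≤ (1 / γ) ^ α * Real.Gamma α := by
    rw [← hgI, intervalIntegral.integral_of_le ht.le]
    refine setIntegral_mono_set hgi ?_ Set.Ioc_subset_Ioi_self.eventuallyLE
    filter_upwards [ae_restrict_mem measurableSet_Ioi] with s hs using hg0 s (le_of_lt hs)
  have key : ∫ τ in (0:ℝ)..t,
      Real.exp (-(γ * t)) * ((t - τ) ^ (α - 1) * τ ^ (α - 1) * Real.exp (γ * τ))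
      ≤ ∫ τ in (0:ℝ)..t, c * (g τ + g (t - τ)) := by
    rw [intervalIntegral.integral_of_le ht.le, intervalIntegral.integral_of_le ht.le]
    refine integral_mono_of_nonneg ?_ ?_ ?_
    · filter_upwards [ae_restrict_mem measurableSet_Ioc] with s hs
      have h1 : 0 ≤ t - s := by linarith [hs.2]
      have h2 : 0 ≤ s := hs.1.le
      simp only [Pi.zero_apply]
      positivity
    · exact (((hgt.add hgt').const_mul c).1)
    · have hne : ∀ᵐ s ∂(volume.restrict (Set.Ioc 0 t)), s ≠ t :=
        ae_restrict_of_ae (Measure.ae_ne volume t)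
      filter_upwards [ae_restrict_mem measurableSet_Ioc, hne] with s hs hst
      have h1 : 0 < t - s := by
        have := lt_of_le_of_ne hs.2 hst
        linarith
      have h2 : 0 < s := hs.1
      have he : Real.exp (-(γ * t)) * Real.exp (γ * s) = Real.exp (-(γ * (t - s))) := by
        rw [← Real.exp_add]; ring_nf
      have e0 : Real.exp (-(γ * t)) * ((t - s) ^ (α - 1) * s ^ (α - 1) * Real.exp (γ * s))
          = (t - s) ^ (α - 1) * s ^ (α - 1) * Real.exp (-(γ * (t - s))) := by
        rw [← he]; ring
      simp only [e0]
      rcases le_total (t / 2) s with h | h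
      · have : s ^ (α - 1) ≤ c := by
          rw [hc]; exact Real.rpow_le_rpow_of_nonpos (by linarith) h (by linarith)
        calc _ = s ^ (α - 1) * g (t - s) := by rw [hg]; ring
          _ ≤ c * g (t - s) := mul_le_mul_of_nonneg_right this (hg0 _ h1.le)
          _ ≤ _ := mul_le_mul_of_nonneg_left (by linarith [hg0 s h2.le]) hc0.le
      · have h3 : (t - s) ^ (α - 1) ≤ c := by
          rw [hc]; exact Real.rpow_le_rpow_of_nonpos (by linarith) (by linarith) (by linarith)
        have h4 : Real.exp (-(γ * (t - s))) ≤ Real.exp (-(γ * s)) := by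
          apply Real.exp_le_exp.2
          have : γ * s ≤ γ * (t - s) := mul_le_mul_of_nonneg_left (by linarith) hγ.le
          linarith
        calc _ ≤ c * s ^ (α - 1) * Real.exp (-(γ * s)) := by gcongr
          _ = c * g s := by rw [hg]; ring
          _ ≤ _ := mul_le_mul_of_nonneg_left (by linarith [hg0 (t - s) h1.le]) hc0.le
  rw [intervalIntegral.integral_const_mul, intervalIntegral.integral_const_mul,
    intervalIntegral.integral_add hgt hgt', intervalIntegral.integral_comp_sub_left] at key
  simp only [sub_self, sub_zero] at key
  refine key.trans ?_
  have e1 : 2 ^ (2 - α) * Real.Gamma α / (t ^ (1 - α) * γ ^ α)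
      = c * ((1 / γ) ^ α * Real.Gamma α + (1 / γ) ^ α * Real.Gamma α) := by
    have a1 : (2:ℝ) ^ (2 - α) = 2 * 2 ^ (1 - α) := by
      rw [show 2 - α = 1 + (1 - α) by ring, Real.rpow_add two_pos, Real.rpow_one]
    have a2 : c = 2 ^ (1 - α) / t ^ (1 - α) := by
      rw [hc, show α - 1 = -(1 - α) by ring, Real.rpow_neg (by positivity),
        Real.div_rpow ht.le two_pos.le, inv_div]
    rw [a1, a2, Real.div_rpow one_pos.le hγ.le, Real.one_rpow]
    have : t ^ (1 - α) ≠ 0 := by positivity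
    have : γ ^ α ≠ 0 := by positivity
    field_simp
    ring
  rw [e1]
  exact mul_le_mul_of_nonneg_left (by linarith) hc0.le
end

section
/- Let 0 < α < 1 and s ≥ 1. Suppose f : [0,∞) × ℝ^s → ℝ^s is continuous and there exists a bounded nonnegative function L : [0,∞) → [0,∞) such that ‖f(t,x) − f(t,y)‖ ≤ L(t) ‖x − y‖ for all t ∈ [0,∞) and x, y ∈ ℝ^s. Then for every x₀ ∈ ℝ^s and every T > 0, the integral equation x(t) = x₀ t^{α-1} + (1/Γ(α)) ∫₀^t (t-τ)^{α-1} f(τ, x(τ)) dτ has a unique solution x in C_{1-α}([0,T], ℝ^s); consequently the equation has a unique solution in C_{1-α}([0,∞), ℝ^s), and this solution satisfies lim_{t→0⁺} t^{1-α} x(t) = x₀. -/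
open Filter Topology MeasureTheory

/-- Membership in `C_{1-α}([0,T], ℝ^s)`: continuous on `(0,T]` and the limit
`lim_{t→0⁺} t^{1-α} x(t)` exists. -/
def memC (α : ℝ) {s : ℕ} (T : ℝ) (x : ℝ → (Fin s → ℝ)) : Prop :=
  ContinuousOn x (Set.Ioc 0 T) ∧
  ∃ l : Fin s → ℝ, Tendsto (fun t : ℝ => t ^ (1 - α) • x t) (𝓝[>] 0) (𝓝 l)

/-- Membership in `C_{1-α}([0,∞), ℝ^s)`: continuous on `(0,∞)` and the limit
`lim_{t→0⁺} t^{1-α} x(t)` exists. -/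
def memCinf (α : ℝ) {s : ℕ} (x : ℝ → (Fin s → ℝ)) : Prop :=
  ContinuousOn x (Set.Ioi 0) ∧
  ∃ l : Fin s → ℝ, Tendsto (fun t : ℝ => t ^ (1 - α) • x t) (𝓝[>] 0) (𝓝 l)


section helpers

variable {E : Type*} [NormedAddCommGroup E] [NormedSpace ℝ E]

lemma aux_beta1 {a b : ℝ} (ha : 0 < a) (hb : 0 < b) :
    IntervalIntegrable (fun σ : ℝ => (1 - σ) ^ (a - 1) * σ ^ (b - 1)) volume 0 1 := by
  have h := (Complex.betaIntegral_convergent (u := (b : ℂ)) (v := (a : ℂ))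
    (by simpa using hb) (by simpa using ha)).norm
  rw [intervalIntegrable_iff, Set.uIoc_of_le zero_le_one] at h ⊢
  refine h.congr_fun_ae ?_
  rw [Filter.EventuallyEq, ae_restrict_iff' measurableSet_Ioc]
  have h1 : ∀ᵐ x : ℝ, x ≠ 1 := by
    simp [ae_iff]
  filter_upwards [h1] with x hx1 hx
  have hx2 : x < 1 := lt_of_le_of_ne hx.2 hx1
  rw [norm_mul]
  have e1 : ‖(x : ℂ) ^ ((b : ℂ) - 1)‖ = x ^ (b - 1) := by
    rw [Complex.norm_cpow_eq_rpow_re_of_pos hx.1]; simp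
  have e2 : ‖(1 - (x : ℂ)) ^ ((a : ℂ) - 1)‖ = (1 - x) ^ (a - 1) := by
    have := Complex.norm_cpow_eq_rpow_re_of_pos (sub_pos.2 hx2) ((a : ℂ) - 1)
    simpa using this
  rw [e1, e2, mul_comm]

lemma aux_scale {t : ℝ} (ht : 0 < t) (a : ℝ) (h : ℝ → E) :
    ∫ τ in (0:ℝ)..t, (t - τ) ^ (a - 1) • h τ
      = t ^ a • ∫ σ in (0:ℝ)..1, (1 - σ) ^ (a - 1) • h (t * σ) := by
  have := intervalIntegral.smul_integral_comp_mul_left (a := 0) (b := 1)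
    (fun τ => (t - τ) ^ (a - 1) • h τ) t
  rw [mul_zero, mul_one] at this
  rw [← this]
  have e : t ^ a = t * t ^ (a - 1) := by
    rw [Real.rpow_sub_one ht.ne']; field_simp
  rw [e, mul_smul, ← intervalIntegral.integral_smul (t ^ (a - 1))]
  congr 1
  apply intervalIntegral.integral_congr
  intro σ hσ
  rw [Set.uIcc_of_le zero_le_one] at hσ
  simp only [smul_smul]
  congr 1
  rw [← Real.mul_rpow ht.le (by linarith [hσ.2])]
  congr 1; ring

lemma aux_beta_int {a b t : ℝ} (ha : 0 < a) (hb : 0 < b) (ht : 0 < t) :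
    IntervalIntegrable (fun τ : ℝ => (t - τ) ^ (a - 1) * τ ^ (b - 1)) volume 0 t := by
  rw [← IntervalIntegrable.comp_mul_left_iff ht.ne', zero_div, div_self ht.ne']
  have h := (aux_beta1 ha hb).const_mul (t ^ (a - 1) * t ^ (b - 1))
  refine h.congr (fun σ hσ => ?_)
  rw [Set.uIoc_of_le zero_le_one] at hσ
  have : t - t * σ = t * (1 - σ) := by ring
  simp only [this]
  rw [Real.mul_rpow ht.le (by linarith [hσ.2]), Real.mul_rpow ht.le hσ.1.le]
  ring

noncomputable def auxB (a b : ℝ) : ℝ := ∫ σ in (0:ℝ)..1, (1 - σ) ^ (a - 1) * σ ^ (b - 1)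

lemma auxB_nonneg (a b : ℝ) : 0 ≤ auxB a b := by
  apply intervalIntegral.integral_nonneg zero_le_one
  intro σ hσ
  exact mul_nonneg (Real.rpow_nonneg (by linarith [hσ.2]) _) (Real.rpow_nonneg hσ.1 _)

lemma aux_beta_val {a b t : ℝ} (ht : 0 < t) :
    ∫ τ in (0:ℝ)..t, (t - τ) ^ (a - 1) * τ ^ (b - 1) = t ^ (a + b - 1) * auxB a b := by
  have := aux_scale ht a (fun τ => τ ^ (b - 1))
  simp only [smul_eq_mul] at this
  rw [this, auxB, add_sub_assoc, Real.rpow_add ht, mul_assoc,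
    ← intervalIntegral.integral_const_mul (t ^ (b - 1))]
  congr 1
  apply intervalIntegral.integral_congr
  intro σ hσ
  rw [Set.uIcc_of_le zero_le_one] at hσ
  simp only
  rw [Real.mul_rpow ht.le hσ.1]
  ring

/-- the good class -/
def auxGood (α T : ℝ) (h : ℝ → E) : Prop :=
  ContinuousOn h (Set.Ioc 0 T) ∧ ∃ B : ℝ, ∀ t ∈ Set.Ioc (0:ℝ) T, ‖h t‖ ≤ B * t ^ (α - 1)

lemma aux_meas {α T : ℝ} {h : ℝ → E} (hh : ContinuousOn h (Set.Ioc 0 T)) {t : ℝ}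
    (ht : t ∈ Set.Ioc 0 T) (a : ℝ) :
    AEStronglyMeasurable (fun τ => (t - τ) ^ a • h τ) (volume.restrict (Set.uIoc 0 t)) := by
  rw [Set.uIoc_of_le ht.1.le]
  refine AEStronglyMeasurable.smul ?_ ?_
  · exact (by fun_prop : Measurable (fun τ : ℝ => (t - τ) ^ a)).aestronglyMeasurable
  · exact (hh.mono (Set.Ioc_subset_Ioc_right ht.2)).aestronglyMeasurable measurableSet_Ioc

lemma aux_int {α T : ℝ} (hα : 0 < α) {h : ℝ → E} (hh : auxGood α T h) {t : ℝ}
    (ht : t ∈ Set.Ioc 0 T) :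
    IntervalIntegrable (fun τ => (t - τ) ^ (α - 1) • h τ) volume 0 t := by
  obtain ⟨hc, B, hB⟩ := hh
  refine ((aux_beta_int hα hα ht.1).const_mul B).mono_fun' (aux_meas (α := α) hc ht _) ?_
  rw [Set.uIoc_of_le ht.1.le, Filter.EventuallyLE, ae_restrict_iff' measurableSet_Ioc]
  refine Eventually.of_forall fun τ hτ => ?_
  have h0 : 0 ≤ (t - τ) ^ (α - 1) := Real.rpow_nonneg (by linarith [hτ.2]) _
  rw [norm_smul, Real.norm_of_nonneg h0]
  have := mul_le_mul_of_nonneg_left (hB τ ⟨hτ.1, hτ.2.trans ht.2⟩) h0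
  linarith

lemma aux_norm {α T : ℝ} (hα : 0 < α) {h : ℝ → E} {B : ℝ}
    (hB : ∀ t ∈ Set.Ioc (0:ℝ) T, ‖h t‖ ≤ B * t ^ (α - 1)) {t : ℝ}
    (ht : t ∈ Set.Ioc 0 T) :
    ‖∫ τ in (0:ℝ)..t, (t - τ) ^ (α - 1) • h τ‖ ≤ B * (t ^ (α + α - 1) * auxB α α) := by
  rw [← aux_beta_val ht.1, ← intervalIntegral.integral_const_mul]
  refine intervalIntegral.norm_integral_le_of_norm_le ht.1.le
    (Eventually.of_forall fun τ hτ => ?_) ((aux_beta_int hα hα ht.1).const_mul B)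
  have h0 : 0 ≤ (t - τ) ^ (α - 1) := Real.rpow_nonneg (by linarith [hτ.2]) _
  rw [norm_smul, Real.norm_of_nonneg h0]
  have := mul_le_mul_of_nonneg_left (hB τ ⟨hτ.1, hτ.2.trans ht.2⟩) h0
  linarith

lemma aux_cont_s6 {α T : ℝ} (hα : 0 < α) (hα1 : α < 1) {h : ℝ → E} (hh : auxGood α T h) :
    ContinuousOn (fun t => ∫ τ in (0:ℝ)..t, (t - τ) ^ (α - 1) • h τ) (Set.Ioc 0 T) := by
  obtain ⟨hc, B, hB⟩ := hh
  have key : ContinuousOn (fun t : ℝ => t ^ α • ∫ σ in (0:ℝ)..1, (1 - σ) ^ (α - 1) • h (t * σ))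
      (Set.Ioc 0 T) := by
    refine ContinuousOn.smul (fun t ht => ?_) ?_
    · exact (Real.continuousAt_rpow_const _ _ (Or.inl ht.1.ne')).continuousWithinAt
    intro t₀ ht₀
    have hmap : ∀ t ∈ Set.Ioc 0 T, ∀ σ ∈ Set.Ioc (0:ℝ) 1, t * σ ∈ Set.Ioc 0 T := by
      intro t ht σ hσ
      exact ⟨mul_pos ht.1 hσ.1, by nlinarith [ht.1, ht.2, hσ.1, hσ.2]⟩
    have hB0 : 0 ≤ B := by
      have h1 := (norm_nonneg _).trans (hB t₀ ht₀)
      exact nonneg_of_mul_nonneg_left h1 (Real.rpow_pos_of_pos ht₀.1 _)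
    refine intervalIntegral.continuousWithinAt_of_dominated_interval
      (bound := fun σ => B * (t₀ / 2) ^ (α - 1) * ((1 - σ) ^ (α - 1) * σ ^ (α - 1)))
      ?_ ?_ ((aux_beta1 hα hα).const_mul _) ?_
    · filter_upwards [self_mem_nhdsWithin] with t ht
      rw [Set.uIoc_of_le zero_le_one]
      refine AEStronglyMeasurable.smul ?_ ?_
      · exact (by fun_prop : Measurable (fun τ : ℝ => (1 - τ) ^ (α - 1))).aestronglyMeasurable
      · exact (hc.comp (by fun_prop) (fun σ hσ => hmap t ht σ hσ)).aestronglyMeasurable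
          measurableSet_Ioc
    · have h2 : ∀ᶠ t in 𝓝[Set.Ioc 0 T] t₀, t₀ / 2 < t :=
        mem_nhdsWithin_of_mem_nhds (lt_mem_nhds (by linarith [ht₀.1]))
      filter_upwards [self_mem_nhdsWithin, h2] with t ht ht2
      refine Eventually.of_forall fun σ hσ => ?_
      rw [Set.uIoc_of_le zero_le_one] at hσ
      have h0 : 0 ≤ (1 - σ) ^ (α - 1) := Real.rpow_nonneg (by linarith [hσ.2]) _
      have h3 : 0 ≤ σ ^ (α - 1) := Real.rpow_nonneg hσ.1.le _
      rw [norm_smul, Real.norm_of_nonneg h0]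
      have h4 := hB _ (hmap t ht σ hσ)
      rw [Real.mul_rpow ht.1.le hσ.1.le] at h4
      have h5 : t ^ (α - 1) ≤ (t₀ / 2) ^ (α - 1) :=
        Real.rpow_le_rpow_of_nonpos (by linarith [ht₀.1]) ht2.le (by linarith)
      calc (1 - σ) ^ (α - 1) * ‖h (t * σ)‖
          ≤ (1 - σ) ^ (α - 1) * (B * ((t₀ / 2) ^ (α - 1) * σ ^ (α - 1))) := by
            refine mul_le_mul_of_nonneg_left (h4.trans ?_) h0
            gcongr
        _ = _ := by ring
    · refine Eventually.of_forall fun σ hσ => ?_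
      rw [Set.uIoc_of_le zero_le_one] at hσ
      refine ContinuousWithinAt.smul continuousWithinAt_const ?_
      exact (hc _ (hmap t₀ ht₀ σ hσ)).comp (f := fun t => t * σ) (by fun_prop)
        (fun t ht => hmap t ht σ hσ)
  refine key.congr (fun t ht => aux_scale ht.1 α h)

lemma aux_exp {β y : ℝ} (hβ : 0 ≤ β) (hβ1 : β ≤ 1) (hy : 0 < y) :
    Real.exp (-y) ≤ y ^ (-β) := by
  rw [Real.exp_neg, Real.rpow_neg hy.le]
  apply inv_anti₀ (Real.rpow_pos_of_pos hy _)
  have h1 : y ^ β ≤ (1 + y) ^ β := Real.rpow_le_rpow hy.le (by linarith) hβ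
  have h2 : (1 + y) ^ β ≤ (1 + y) ^ (1:ℝ) := Real.rpow_le_rpow_of_exponent_le (by linarith) hβ1
  rw [Real.rpow_one] at h2
  linarith [Real.add_one_le_exp y]

lemma aux_contr {α T : ℝ} (hα : 0 < α) (hα1 : α < 1) {h : ℝ → E} {D lam : ℝ} (hD : 0 ≤ D)
    (hl : 0 < lam)
    (hB : ∀ t ∈ Set.Ioc (0:ℝ) T, ‖h t‖ ≤ D * (Real.exp (lam * t) * t ^ (α - 1))) {t : ℝ}
    (ht : t ∈ Set.Ioc 0 T) :
    ‖∫ τ in (0:ℝ)..t, (t - τ) ^ (α - 1) • h τ‖ ≤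
      D * (lam ^ (-(α / 2)) * T ^ (α / 2) * auxB (α / 2) α) *
        (Real.exp (lam * t) * t ^ (α - 1)) := by
  have hα2 : 0 < α / 2 := by linarith
  have step : ‖∫ τ in (0:ℝ)..t, (t - τ) ^ (α - 1) • h τ‖ ≤
      ∫ τ in (0:ℝ)..t, (D * Real.exp (lam * t) * lam ^ (-(α / 2))) *
        ((t - τ) ^ (α / 2 - 1) * τ ^ (α - 1)) := by
    refine intervalIntegral.norm_integral_le_of_norm_le ht.1.le
      (Eventually.of_forall fun τ hτ => ?_) ((aux_beta_int hα2 hα ht.1).const_mul _)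
    have p1 : 0 ≤ τ ^ (α - 1) := Real.rpow_nonneg hτ.1.le _
    have h0 : 0 ≤ (t - τ) ^ (α - 1) := Real.rpow_nonneg (by linarith [hτ.2]) _
    rw [norm_smul, Real.norm_of_nonneg h0]
    rcases hτ.2.eq_or_lt with he | hlt
    · rw [he, sub_self, Real.zero_rpow (by linarith), Real.zero_rpow (by linarith)]
      simp
    have hp : 0 < t - τ := by linarith
    have h1 := hB τ ⟨hτ.1, hτ.2.trans ht.2⟩
    have h2 : Real.exp (lam * τ) ≤ Real.exp (lam * t) * (lam ^ (-(α/2)) * (t - τ) ^ (-(α/2))) := by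
      rw [← Real.mul_rpow hl.le hp.le]
      calc Real.exp (lam * τ) = Real.exp (lam * t) * Real.exp (-(lam * (t - τ))) := by
            rw [← Real.exp_add]; congr 1; ring
        _ ≤ _ := by
            refine mul_le_mul_of_nonneg_left ?_ (Real.exp_pos _).le
            exact aux_exp hα2.le (by linarith) (mul_pos hl hp)
    have h3 : (t - τ) ^ (α / 2 - 1) = (t - τ) ^ (α - 1) * (t - τ) ^ (-(α/2)) := by
      rw [← Real.rpow_add hp]; congr 1; ring
    calc (t - τ) ^ (α - 1) * ‖h τ‖
        ≤ (t - τ) ^ (α - 1) * (D * ((Real.exp (lam * t) *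
            (lam ^ (-(α/2)) * (t - τ) ^ (-(α/2)))) * τ ^ (α - 1))) := by
          refine mul_le_mul_of_nonneg_left (h1.trans ?_) h0
          gcongr
      _ = _ := by rw [h3]; ring
  rw [intervalIntegral.integral_const_mul, aux_beta_val ht.1] at step
  refine step.trans ?_
  have e : t ^ (α / 2 + α - 1) = t ^ (α / 2) * t ^ (α - 1) := by
    rw [← Real.rpow_add ht.1]; congr 1; ring
  have h4 : t ^ (α / 2) ≤ T ^ (α / 2) := Real.rpow_le_rpow ht.1.le ht.2 hα2.le
  have p1 : 0 ≤ t ^ (α - 1) := Real.rpow_nonneg ht.1.le _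
  have p2 : 0 ≤ lam ^ (-(α / 2)) := Real.rpow_nonneg hl.le _
  have p3 := auxB_nonneg (α / 2) α
  rw [e]
  calc _ = D * (lam ^ (-(α / 2)) * t ^ (α / 2) * auxB (α / 2) α) *
        (Real.exp (lam * t) * t ^ (α - 1)) := by ring
    _ ≤ _ := by gcongr

lemma aux_pow_cancel {α t : ℝ} (ht : 0 < t) : t ^ (α - 1) * t ^ (1 - α) = 1 := by
  rw [← Real.rpow_add ht]; simp

lemma aux_good_of_lim {α T : ℝ} {x : ℝ → E} (hc : ContinuousOn x (Set.Ioc 0 T)) {l : E}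
    (hl : Tendsto (fun t : ℝ => t ^ (1 - α) • x t) (𝓝[>] 0) (𝓝 l)) : auxGood α T x := by
  refine ⟨hc, ?_⟩
  have h1 : ∀ᶠ t in 𝓝[>] (0:ℝ), ‖t ^ (1 - α) • x t‖ < ‖l‖ + 1 :=
    hl.norm.eventually (gt_mem_nhds (by linarith))
  obtain ⟨δ, hδ, hδ'⟩ := mem_nhdsGT_iff_exists_Ioo_subset.1 h1
  have hδ : 0 < δ := hδ
  have h2 : ContinuousOn (fun t : ℝ => t ^ (1 - α) • x t) (Set.Icc δ T) := by
    refine ContinuousOn.smul (fun t ht => ?_)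
      (hc.mono fun t ht => ⟨hδ.trans_le ht.1, ht.2⟩)
    exact (Real.continuousAt_rpow_const _ _ (Or.inl (hδ.trans_le ht.1).ne')).continuousWithinAt
  obtain ⟨M, hM⟩ := isCompact_Icc.exists_bound_of_continuousOn h2
  refine ⟨max (‖l‖ + 1) M, fun t ht => ?_⟩
  have h3 : ‖t ^ (1 - α) • x t‖ ≤ max (‖l‖ + 1) M := by
    rcases lt_or_ge t δ with h | h
    · exact le_max_of_le_left (le_of_lt (hδ' ⟨ht.1, h⟩))
    · exact le_max_of_le_right (hM t ⟨h, ht.2⟩)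
  have p := Real.rpow_nonneg ht.1.le (α - 1)
  calc ‖x t‖ = ‖(t ^ (α - 1) * t ^ (1 - α)) • x t‖ := by rw [aux_pow_cancel ht.1, one_smul]
    _ = ‖t ^ (1 - α) • x t‖ * t ^ (α - 1) := by
        rw [mul_smul, norm_smul, Real.norm_of_nonneg p, mul_comm]
    _ ≤ _ := by gcongr

lemma aux_nem {α T C : ℝ} (hα1 : α < 1) (hC : 0 ≤ C) {f : ℝ → E → E}
    (hfc : ContinuousOn (fun p : ℝ × E => f p.1 p.2) (Set.Ici 0 ×ˢ (Set.univ : Set E)))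
    (hLip : ∀ t : ℝ, 0 ≤ t → ∀ x y : E, ‖f t x - f t y‖ ≤ C * ‖x - y‖)
    {x : ℝ → E} (hx : auxGood α T x) : auxGood α T (fun τ => f τ (x τ)) := by
  obtain ⟨hc, B, hB⟩ := hx
  refine ⟨?_, ?_⟩
  · exact hfc.comp (f := fun τ => (τ, x τ)) (continuousOn_id.prodMk hc)
      (fun τ hτ => ⟨hτ.1.le, Set.mem_univ _⟩)
  · have h0 : ContinuousOn (fun τ => f τ 0) (Set.Icc 0 T) :=
      hfc.comp (f := fun τ => (τ, (0:E))) (by fun_prop) (fun τ hτ => ⟨hτ.1, Set.mem_univ _⟩)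
    obtain ⟨M, hM⟩ := isCompact_Icc.exists_bound_of_continuousOn h0
    refine ⟨M * T ^ (1 - α) + C * B, fun t ht => ?_⟩
    have p := Real.rpow_nonneg ht.1.le (α - 1)
    have hM0 := hM t ⟨ht.1.le, ht.2⟩
    have hMp : 0 ≤ M := (norm_nonneg _).trans hM0
    have h1 : (1:ℝ) ≤ T ^ (1 - α) * t ^ (α - 1) := by
      have h5 := Real.rpow_le_rpow ht.1.le ht.2 (by linarith : 0 ≤ 1 - α)
      have h6 := mul_le_mul_of_nonneg_left h5 p
      rw [aux_pow_cancel ht.1, mul_comm] at h6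
      exact h6
    have h2 := hLip t ht.1.le (x t) 0
    rw [sub_zero] at h2
    calc ‖f t (x t)‖ = ‖(f t (x t) - f t 0) + f t 0‖ := by rw [sub_add_cancel]
      _ ≤ C * ‖x t‖ + M := (norm_add_le _ _).trans (add_le_add h2 hM0)
      _ ≤ C * (B * t ^ (α - 1)) + M * (T ^ (1 - α) * t ^ (α - 1)) := by
          refine add_le_add (mul_le_mul_of_nonneg_left (hB t ht) hC) ?_
          exact le_mul_of_one_le_right hMp h1
      _ = _ := by ring

/-- the weighted integral is continuous on the closed interval -/
lemma aux_cont0 {α T : ℝ} (hα : 0 < α) (hα1 : α < 1) {h : ℝ → E}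
    (hh : auxGood α T h) :
    ContinuousOn (fun t => t ^ (1 - α) • ∫ τ in (0:ℝ)..t, (t - τ) ^ (α - 1) • h τ)
      (Set.Icc 0 T) := by
  intro t ht
  rcases ht.1.eq_or_lt with h0 | h0
  · subst h0
    obtain ⟨hc, B, hB⟩ := hh
    rw [ContinuousWithinAt]
    rw [Real.zero_rpow (by linarith), zero_smul]
    have hb : ∀ t ∈ Set.Icc 0 T, ‖t ^ (1 - α) • ∫ τ in (0:ℝ)..t, (t - τ) ^ (α - 1) • h τ‖
        ≤ B * auxB α α * t ^ α := by
      intro t ht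
      rcases ht.1.eq_or_lt with h0 | h0
      · subst h0
        rw [Real.zero_rpow (by linarith), Real.zero_rpow (by linarith)]; simp
      · have := aux_norm hα hB (t := t) ⟨h0, ht.2⟩
        have p := Real.rpow_nonneg h0.le (1 - α)
        rw [norm_smul, Real.norm_of_nonneg p]
        refine (mul_le_mul_of_nonneg_left this p).trans (le_of_eq ?_)
        have e : t ^ α = t ^ (1 - α) * t ^ (α + α - 1) := by
          rw [← Real.rpow_add h0]; congr 1; ring
        rw [e]; ring
    refine squeeze_zero_norm' (eventually_nhdsWithin_of_forall hb) ?_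
    have : Tendsto (fun t : ℝ => B * auxB α α * t ^ α) (𝓝 0) (𝓝 (B * auxB α α * 0 ^ α)) :=
      (Real.continuousAt_rpow_const 0 α (Or.inr hα.le)).tendsto.const_mul _
    rw [Real.zero_rpow hα.ne', mul_zero] at this
    exact this.mono_left nhdsWithin_le_nhds
  · have h1 : ContinuousOn (fun t => t ^ (1 - α) • ∫ τ in (0:ℝ)..t, (t - τ) ^ (α - 1) • h τ)
      (Set.Ioc 0 T) := by
      refine ContinuousOn.smul (fun t ht => ?_) (aux_cont_s6 hα hα1 hh)
      exact (Real.continuousAt_rpow_const _ _ (Or.inl ht.1.ne')).continuousWithinAt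
    refine (h1 t ⟨h0, ht.2⟩).mono_of_mem_nhdsWithin ?_
    filter_upwards [self_mem_nhdsWithin, mem_nhdsWithin_of_mem_nhds (lt_mem_nhds h0)] with u hu hu0
    exact ⟨hu0, hu.2⟩

/-- the solution predicate -/
def auxSol (α T : ℝ) (f : ℝ → E → E) (x₀ : E) (x : ℝ → E) : Prop :=
  ∀ t ∈ Set.Ioc (0:ℝ) T, x t = t ^ (α - 1) • x₀ +
    (Real.Gamma α)⁻¹ • ∫ τ in (0:ℝ)..t, (t - τ) ^ (α - 1) • f τ (x τ)

lemma aux_lim {α T : ℝ} (hT : 0 < T) (hα : 0 < α) (hα1 : α < 1) {h : ℝ → E} {x : ℝ → E} {x₀ : E}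
    (hh : auxGood α T h)
    (hx : ∀ t ∈ Set.Ioc (0:ℝ) T, x t = t ^ (α - 1) • x₀ +
      (Real.Gamma α)⁻¹ • ∫ τ in (0:ℝ)..t, (t - τ) ^ (α - 1) • h τ) :
    Tendsto (fun t : ℝ => t ^ (1 - α) • x t) (𝓝[>] 0) (𝓝 x₀) := by
  have h1 := aux_cont0 hα hα1 hh 0 ⟨le_rfl, hT.le⟩
  rw [ContinuousWithinAt, Real.zero_rpow (by linarith), zero_smul] at h1
  have hm : Set.Ioc 0 T ∈ 𝓝[>] (0:ℝ) := Ioc_mem_nhdsGT hT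
  have h2 := h1.mono_left (nhdsWithin_le_of_mem
    (mem_of_superset hm Set.Ioc_subset_Icc_self) : 𝓝[>] (0:ℝ) ≤ 𝓝[Set.Icc 0 T] 0)
  have h3 := (h2.const_smul (Real.Gamma α)⁻¹).const_add x₀
  rw [smul_zero, add_zero] at h3
  refine h3.congr' ?_
  filter_upwards [hm] with t ht
  rw [hx t ht, smul_add, smul_smul (t ^ (1 - α)) (t ^ (α - 1)), mul_comm (t ^ (1 - α)),
    aux_pow_cancel ht.1, one_smul, smul_comm]

/-- one-step estimate -/
lemma aux_diff {α T C lam M : ℝ} (hα : 0 < α) (hα1 : α < 1) (hC : 0 ≤ C) {f : ℝ → E → E}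
    (hfc : ContinuousOn (fun p : ℝ × E => f p.1 p.2) (Set.Ici 0 ×ˢ (Set.univ : Set E)))
    (hLip : ∀ t : ℝ, 0 ≤ t → ∀ x y : E, ‖f t x - f t y‖ ≤ C * ‖x - y‖)
    (hl : 0 < lam)
    (hlam : (Real.Gamma α)⁻¹ * C * (lam ^ (-(α / 2)) * T ^ (α / 2) * auxB (α / 2) α) ≤ 1 / 2)
    {x y : ℝ → E} (hx : auxGood α T x) (hy : auxGood α T y) (hM : 0 ≤ M)
    (hxy : ∀ t ∈ Set.Ioc (0:ℝ) T, ‖x t - y t‖ ≤ M * (Real.exp (lam * t) * t ^ (α - 1)))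
    {t : ℝ} (ht : t ∈ Set.Ioc (0:ℝ) T) :
    ‖(Real.Gamma α)⁻¹ • (∫ τ in (0:ℝ)..t, (t - τ) ^ (α - 1) • f τ (x τ)) -
      (Real.Gamma α)⁻¹ • ∫ τ in (0:ℝ)..t, (t - τ) ^ (α - 1) • f τ (y τ)‖ ≤
      M / 2 * (Real.exp (lam * t) * t ^ (α - 1)) := by
  have hG : 0 < (Real.Gamma α)⁻¹ := inv_pos.2 (Real.Gamma_pos_of_pos hα)
  have ix := aux_int hα (aux_nem hα1 hC hfc hLip hx) ht
  have iy := aux_int hα (aux_nem hα1 hC hfc hLip hy) ht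
  rw [← smul_sub, ← intervalIntegral.integral_sub ix iy]
  simp only [← smul_sub]
  rw [norm_smul, Real.norm_of_nonneg hG.le]
  have h1 : ∀ t ∈ Set.Ioc (0:ℝ) T, ‖f t (x t) - f t (y t)‖ ≤
      (C * M) * (Real.exp (lam * t) * t ^ (α - 1)) := by
    intro t ht
    refine (hLip t ht.1.le _ _).trans ?_
    rw [mul_assoc]
    exact mul_le_mul_of_nonneg_left (hxy t ht) hC
  have h2 := aux_contr hα hα1 (h := fun t => f t (x t) - f t (y t)) (mul_nonneg hC hM) hl h1 ht
  have p : 0 ≤ Real.exp (lam * t) * t ^ (α - 1) :=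
    mul_nonneg (Real.exp_pos _).le (Real.rpow_nonneg ht.1.le _)
  refine (mul_le_mul_of_nonneg_left h2 hG.le).trans ?_
  calc _ = ((Real.Gamma α)⁻¹ * C * (lam ^ (-(α / 2)) * T ^ (α / 2) * auxB (α / 2) α)) *
          (M * (Real.exp (lam * t) * t ^ (α - 1))) := by ring
    _ ≤ 1 / 2 * (M * (Real.exp (lam * t) * t ^ (α - 1))) := by gcongr
    _ = _ := by ring

lemma aux_lam (α T C : ℝ) (hα : 0 < α) : ∃ lam : ℝ, 0 < lam ∧
    (Real.Gamma α)⁻¹ * C * (lam ^ (-(α / 2)) * T ^ (α / 2) * auxB (α / 2) α) ≤ 1 / 2 := by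
  have h1 : Tendsto (fun lam : ℝ => lam ^ (-(α / 2))) atTop (𝓝 0) :=
    tendsto_rpow_neg_atTop (by linarith)
  have h2 := (((h1.mul_const (T ^ (α / 2))).mul_const (auxB (α / 2) α))).const_mul
    ((Real.Gamma α)⁻¹ * C)
  simp only [zero_mul, mul_zero] at h2
  obtain ⟨lam, h3, h4⟩ := ((h2.eventually (gt_mem_nhds (by norm_num : (0:ℝ) < 1 / 2))).and
    (eventually_gt_atTop 0)).exists
  exact ⟨lam, h4, h3.le⟩

lemma aux_unique {α T C : ℝ} (hα : 0 < α) (hα1 : α < 1) (hC : 0 ≤ C) {f : ℝ → E → E}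
    (hfc : ContinuousOn (fun p : ℝ × E => f p.1 p.2) (Set.Ici 0 ×ˢ (Set.univ : Set E)))
    (hLip : ∀ t : ℝ, 0 ≤ t → ∀ x y : E, ‖f t x - f t y‖ ≤ C * ‖x - y‖) {x₀ : E}
    {x y : ℝ → E} (hx : auxGood α T x) (hy : auxGood α T y)
    (sx : auxSol α T f x₀ x) (sy : auxSol α T f x₀ y) :
    ∀ t ∈ Set.Ioc (0:ℝ) T, x t = y t := by
  obtain ⟨lam, hl, hlam⟩ := aux_lam α T C hα
  obtain ⟨B₁, hB₁⟩ := hx.2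
  obtain ⟨B₂, hB₂⟩ := hy.2
  have key : ∀ n : ℕ, ∀ t ∈ Set.Ioc (0:ℝ) T,
      ‖x t - y t‖ ≤ (|B₁| + |B₂|) * (1 / 2) ^ n * (Real.exp (lam * t) * t ^ (α - 1)) := by
    intro n
    induction n with
    | zero =>
      intro t ht
      have p := Real.rpow_nonneg ht.1.le (α - 1)
      have e : 1 ≤ Real.exp (lam * t) := Real.one_le_exp (mul_pos hl ht.1).le
      calc ‖x t - y t‖ ≤ B₁ * t ^ (α - 1) + B₂ * t ^ (α - 1) :=
            (norm_sub_le _ _).trans (add_le_add (hB₁ t ht) (hB₂ t ht))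
        _ ≤ |B₁| * t ^ (α - 1) + |B₂| * t ^ (α - 1) := by
            gcongr <;> exact le_abs_self _
        _ = (|B₁| + |B₂|) * (1 / 2) ^ 0 * (1 * t ^ (α - 1)) := by ring
        _ ≤ _ := by gcongr
    | succ n ih =>
      intro t ht
      have h := aux_diff hα hα1 hC hfc hLip hl hlam hx hy (by positivity) ih ht
      rw [sx t ht, sy t ht, add_sub_add_left_eq_sub]
      refine h.trans (le_of_eq ?_)
      rw [pow_succ]; ring
  intro t ht
  have h1 : Tendsto (fun n : ℕ => (|B₁| + |B₂|) * (1 / 2 : ℝ) ^ n *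
      (Real.exp (lam * t) * t ^ (α - 1))) atTop (𝓝 0) := by
    have := ((tendsto_pow_atTop_nhds_zero_of_lt_one (r := (1/2:ℝ)) (by norm_num)
      (by norm_num)).const_mul (|B₁| + |B₂|)).mul_const (Real.exp (lam * t) * t ^ (α - 1))
    simpa using this
  have h2 : ‖x t - y t‖ ≤ 0 := ge_of_tendsto' h1 (fun n => key n t ht)
  exact sub_eq_zero.1 (norm_le_zero_iff.1 h2)

open BoundedContinuousFunction in
lemma aux_exists [CompleteSpace E] {α T C : ℝ} (hT : 0 < T) (hα : 0 < α) (hα1 : α < 1)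
    (hC : 0 ≤ C) {f : ℝ → E → E}
    (hfc : ContinuousOn (fun p : ℝ × E => f p.1 p.2) (Set.Ici 0 ×ˢ (Set.univ : Set E)))
    (hLip : ∀ t : ℝ, 0 ≤ t → ∀ x y : E, ‖f t x - f t y‖ ≤ C * ‖x - y‖) (x₀ : E) :
    ∃ x : ℝ → E, auxGood α T x ∧ auxSol α T f x₀ x := by
  obtain ⟨lam, hl, hlam⟩ := aux_lam α T C hα
  let X : (ℝ →ᵇ E) → ℝ → E := fun w t => (Real.exp (lam * t) * t ^ (α - 1)) • w t
  have hX : ∀ w, auxGood α T (X w) := by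
    intro w
    refine ⟨?_, Real.exp (lam * T) * ‖w‖, fun t ht => ?_⟩
    · refine ContinuousOn.smul (ContinuousOn.mul (by fun_prop) fun t ht => ?_)
        w.continuous.continuousOn
      exact (Real.continuousAt_rpow_const _ _ (Or.inl ht.1.ne')).continuousWithinAt
    · have p := Real.rpow_nonneg ht.1.le (α - 1)
      have e : Real.exp (lam * t) ≤ Real.exp (lam * T) :=
        Real.exp_le_exp.2 (mul_le_mul_of_nonneg_left ht.2 hl.le)
      have hw := w.norm_coe_le_norm t
      simp only [X]
      rw [norm_smul, Real.norm_of_nonneg (mul_nonneg (Real.exp_pos _).le p)]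
      calc _ ≤ (Real.exp (lam * T) * t ^ (α - 1)) * ‖w‖ := by gcongr
        _ = _ := by ring
  let H : (ℝ →ᵇ E) → ℝ → E := fun w c => Real.exp (-(lam * c)) • (x₀ + (Real.Gamma α)⁻¹ •
    (c ^ (1 - α) • ∫ τ in (0:ℝ)..c, (c - τ) ^ (α - 1) • f τ (X w τ)))
  have hH : ∀ w, ContinuousOn (H w) (Set.Icc 0 T) := by
    intro w
    refine ContinuousOn.smul (by fun_prop) (continuousOn_const.add (ContinuousOn.const_smul ?_ _))
    exact aux_cont0 hα hα1 (aux_nem hα1 hC hfc hLip (hX w))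
  let cl : ℝ → ℝ := fun t => max 0 (min t T)
  have hcl : ∀ t, cl t ∈ Set.Icc 0 T := fun t =>
    ⟨le_max_left _ _, max_le hT.le (min_le_right _ _)⟩
  have hclc : Continuous cl := by fun_prop
  have hcl' : ∀ t ∈ Set.Ioc 0 T, cl t = t := by
    intro t ht
    simp only [cl]
    rw [min_eq_left ht.2, max_eq_right ht.1.le]
  choose M hM using fun w => isCompact_Icc.exists_bound_of_continuousOn (hH w)
  let Ψ : (ℝ →ᵇ E) → (ℝ →ᵇ E) := fun w =>
    BoundedContinuousFunction.ofNormedAddCommGroup (fun t => H w (cl t))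
      ((hH w).comp_continuous hclc hcl) (M w) (fun t => hM w _ (hcl t))
  have hΨ : ∀ w t, Ψ w t = H w (cl t) := fun w t => rfl
  have hcon : ContractingWith (1/2 : NNReal) Ψ := by
    refine ⟨by rw [← NNReal.coe_lt_coe]; norm_num, LipschitzWith.of_dist_le_mul fun w v => ?_⟩
    rw [BoundedContinuousFunction.dist_le (by positivity)]
    intro t
    rw [hΨ, hΨ]
    generalize hc : cl t = c
    have hcm : c ∈ Set.Icc 0 T := hc ▸ hcl t
    rcases hcm.1.eq_or_lt with h0 | h0
    · subst h0
      simp only [H]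
      rw [Real.zero_rpow (by linarith)]
      simp
    have hc' : c ∈ Set.Ioc 0 T := ⟨h0, hcm.2⟩
    have hd : ∀ t ∈ Set.Ioc (0:ℝ) T, ‖X w t - X v t‖ ≤
        dist w v * (Real.exp (lam * t) * t ^ (α - 1)) := by
      intro t ht
      have p := Real.rpow_nonneg ht.1.le (α - 1)
      simp only [X]
      rw [← smul_sub, norm_smul, Real.norm_of_nonneg (mul_nonneg (Real.exp_pos _).le p), mul_comm]
      have := BoundedContinuousFunction.dist_coe_le_dist (f := w) (g := v) t
      rw [dist_eq_norm] at this
      gcongr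
    have h1 := aux_diff hα hα1 hC hfc hLip hl hlam (hX w) (hX v) dist_nonneg hd hc'
    have p := Real.rpow_nonneg h0.le (1 - α)
    rw [dist_eq_norm]
    have e1 : H w c - H v c = (Real.exp (-(lam * c)) * c ^ (1 - α)) •
        ((Real.Gamma α)⁻¹ • (∫ τ in (0:ℝ)..c, (c - τ) ^ (α - 1) • f τ (X w τ)) -
      (Real.Gamma α)⁻¹ • ∫ τ in (0:ℝ)..c, (c - τ) ^ (α - 1) • f τ (X v τ)) := by
      simp only [H]
      rw [← smul_sub, add_sub_add_left_eq_sub, mul_smul, smul_sub (c ^ (1 - α)),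
        smul_comm (c ^ (1 - α)), smul_comm (c ^ (1 - α))]
    rw [e1, norm_smul, Real.norm_of_nonneg (mul_nonneg (Real.exp_pos _).le p)]
    refine (mul_le_mul_of_nonneg_left h1 (mul_nonneg (Real.exp_pos _).le p)).trans (le_of_eq ?_)
    have e2 : Real.exp (-(lam * c)) * Real.exp (lam * c) = 1 := by
      rw [← Real.exp_add]; simp
    have e3 := aux_pow_cancel (α := α) h0
    calc _ = (Real.exp (-(lam * c)) * Real.exp (lam * c)) * (c ^ (α - 1) * c ^ (1 - α)) *
          (dist w v / 2) := by ring
      _ = _ := by rw [e2, e3]; push_cast; ring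
  let w := ContractingWith.fixedPoint Ψ hcon
  have hw : Ψ w = w := hcon.fixedPoint_isFixedPt
  refine ⟨X w, hX w, fun t ht => ?_⟩
  have h1 : w t = H w t := by
    have := hΨ w t
    rw [hw, hcl' t ht] at this
    exact this
  have h2 : X w t = (Real.exp (lam * t) * t ^ (α - 1)) • w t := rfl
  rw [h2, h1]
  have e2 : Real.exp (lam * t) * Real.exp (-(lam * t)) = 1 := by
    rw [← Real.exp_add]; simp
  have e3 := aux_pow_cancel (α := α) ht.1
  simp only [H]
  rw [smul_smul, mul_right_comm, e2, one_mul, smul_add, smul_comm (Real.Gamma α)⁻¹,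
    smul_smul (t ^ (α - 1)) (t ^ (1 - α)), e3, one_smul]

end helpers

theorem stmt6 (α : ℝ) (hα0 : 0 < α) (hα1 : α < 1) (s : ℕ) (hs : 1 ≤ s)
    (f : ℝ → (Fin s → ℝ) → (Fin s → ℝ))
    (hfc : ContinuousOn (fun p : ℝ × (Fin s → ℝ) => f p.1 p.2)
      (Set.Ici 0 ×ˢ (Set.univ : Set (Fin s → ℝ))))
    (L : ℝ → ℝ) (hL0 : ∀ t : ℝ, 0 ≤ t → 0 ≤ L t) (hLbd : ∃ C : ℝ, ∀ t : ℝ, 0 ≤ t → L t ≤ C)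
    (hLip : ∀ t : ℝ, 0 ≤ t → ∀ x y : Fin s → ℝ, ‖f t x - f t y‖ ≤ L t * ‖x - y‖) :
    ∀ x₀ : Fin s → ℝ,
      -- for every `T > 0` the integral equation has a unique solution in `C_{1-α}([0,T], ℝ^s)`
      (∀ T > (0:ℝ), ∃ x : ℝ → (Fin s → ℝ),
        (memC α T x ∧ ∀ t ∈ Set.Ioc (0:ℝ) T,
          x t = t ^ (α - 1) • x₀ +
            (Real.Gamma α)⁻¹ • ∫ τ in (0:ℝ)..t, (t - τ) ^ (α - 1) • f τ (x τ)) ∧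
        (∀ y : ℝ → (Fin s → ℝ),
          (memC α T y ∧ ∀ t ∈ Set.Ioc (0:ℝ) T,
            y t = t ^ (α - 1) • x₀ +
              (Real.Gamma α)⁻¹ • ∫ τ in (0:ℝ)..t, (t - τ) ^ (α - 1) • f τ (y τ)) →
          ∀ t ∈ Set.Ioc (0:ℝ) T, y t = x t)) ∧
      -- consequently: a unique global solution in `C_{1-α}([0,∞), ℝ^s)`, whose weighted
      -- limit at `0⁺` is `x₀`
      ∃ x : ℝ → (Fin s → ℝ),
        (memCinf α x ∧ ∀ t > (0:ℝ),
          x t = t ^ (α - 1) • x₀ +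
            (Real.Gamma α)⁻¹ • ∫ τ in (0:ℝ)..t, (t - τ) ^ (α - 1) • f τ (x τ)) ∧
        (∀ y : ℝ → (Fin s → ℝ),
          (memCinf α y ∧ ∀ t > (0:ℝ),
            y t = t ^ (α - 1) • x₀ +
              (Real.Gamma α)⁻¹ • ∫ τ in (0:ℝ)..t, (t - τ) ^ (α - 1) • f τ (y τ)) →
          ∀ t > (0:ℝ), y t = x t) ∧
        Tendsto (fun t : ℝ => t ^ (1 - α) • x t) (𝓝[>] 0) (𝓝 x₀) := by
  intro x₀
  obtain ⟨C, hCb⟩ := hLbd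
  have hC : 0 ≤ C := (hL0 0 le_rfl).trans (hCb 0 le_rfl)
  have hLip' : ∀ t : ℝ, 0 ≤ t → ∀ x y : Fin s → ℝ, ‖f t x - f t y‖ ≤ C * ‖x - y‖ := by
    intro t ht x y
    exact (hLip t ht x y).trans (mul_le_mul_of_nonneg_right (hCb t ht) (norm_nonneg _))
  have ex : ∀ T : ℝ, ∃ x : ℝ → (Fin s → ℝ), 0 < T → (auxGood α T x ∧ auxSol α T f x₀ x) := by
    intro T
    by_cases hT : 0 < T
    · obtain ⟨x, hx⟩ := aux_exists hT hα0 hα1 hC hfc hLip' x₀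
      exact ⟨x, fun _ => hx⟩
    · exact ⟨0, fun h => absurd h hT⟩
  choose X hX using ex
  have lim : ∀ T > 0, ∀ x : ℝ → (Fin s → ℝ), auxGood α T x → auxSol α T f x₀ x →
      Tendsto (fun t : ℝ => t ^ (1 - α) • x t) (𝓝[>] 0) (𝓝 x₀) := by
    intro T hT x hg hs
    exact aux_lim hT hα0 hα1 (aux_nem hα1 hC hfc hLip' hg) hs
  refine ⟨fun T hT => ⟨X T, ⟨⟨(hX T hT).1.1, x₀, lim T hT _ (hX T hT).1 (hX T hT).2⟩,
    (hX T hT).2⟩, ?_⟩, ?_⟩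
  · rintro y ⟨⟨hyc, l, hyl⟩, hy⟩
    exact aux_unique hα0 hα1 hC hfc hLip' (aux_good_of_lim hyc hyl) (hX T hT).1 hy (hX T hT).2
  have restr : ∀ {T T' : ℝ} {x : ℝ → (Fin s → ℝ)}, T' ≤ T → auxGood α T x → auxGood α T' x := by
    intro T T' x hTT h
    obtain ⟨hc, B, hB⟩ := h
    exact ⟨hc.mono (Set.Ioc_subset_Ioc_right hTT), B, fun t ht => hB t ⟨ht.1, ht.2.trans hTT⟩⟩
  let Z : ℝ → (Fin s → ℝ) := fun t => X t t
  have hZ : ∀ T > 0, ∀ t ∈ Set.Ioc 0 T, Z t = X T t := by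
    intro T hT t ht
    exact aux_unique hα0 hα1 hC hfc hLip' (hX t ht.1).1 (restr ht.2 (hX T hT).1) (hX t ht.1).2
      (fun u hu => (hX T hT).2 u ⟨hu.1, hu.2.trans ht.2⟩) t ⟨ht.1, le_rfl⟩
  have hZg : ∀ T > 0, auxGood α T Z := by
    intro T hT
    obtain ⟨hc, B, hB⟩ := (hX T hT).1
    exact ⟨hc.congr (hZ T hT), B, fun t ht => by rw [hZ T hT t ht]; exact hB t ht⟩
  have hZs : ∀ T > 0, auxSol α T f x₀ Z := by
    intro T hT t ht
    rw [hZ T hT t ht, (hX T hT).2 t ht]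
    congr 2
    apply intervalIntegral.integral_congr_ae
    refine Eventually.of_forall fun τ hτ => ?_
    rw [Set.uIoc_of_le ht.1.le] at hτ
    rw [hZ T hT τ ⟨hτ.1, hτ.2.trans ht.2⟩]
  have hZl := lim 1 one_pos Z (hZg 1 one_pos) (hZs 1 one_pos)
  refine ⟨Z, ⟨⟨?_, x₀, hZl⟩, fun t ht => hZs t ht t ⟨ht, le_rfl⟩⟩, ?_, hZl⟩
  · intro t ht
    have ht : 0 < t := ht
    refine (((hZg (t + 1) (by linarith)).1 t ⟨ht, by linarith⟩).continuousAt
      (Ioc_mem_nhds ht (by linarith))).continuousWithinAt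
  · rintro y ⟨⟨hyc, l, hyl⟩, hy⟩ t ht
    exact aux_unique hα0 hα1 hC hfc hLip'
      (aux_good_of_lim (hyc.mono fun u hu => hu.1) hyl) (hZg t ht)
      (fun u hu => hy u hu.1) (hZs t ht) t ⟨ht, le_rfl⟩
end

section
/- Let 0 < α < 1, T > 0, and suppose f : [0,∞) × ℝ^s → ℝ^s is continuous with ‖f(t,x) − f(t,y)‖ ≤ L(t) ‖x − y‖ for a bounded nonnegative L; set L̄ := sup_{t∈[0,T]} L(t). For x₀ ∈ ℝ^s define the operator (T_{x₀}ξ)(t) := x₀ t^{α-1} + (1/Γ(α)) ∫₀^t (t-τ)^{α-1} f(τ, ξ(τ)) dτ on C_{1-α}([0,T], ℝ^s). Then for every γ > 0 and all ξ, ξ̃ ∈ C_{1-α}([0,T], ℝ^s), one has ‖T_{x₀}ξ − T_{x₀}ξ̃‖_{w,T} ≤ (L̄ 2^{2-α} / γ^α) ‖ξ − ξ̃‖_{w,T}, where ‖ξ‖_{w,T} := sup_{t∈[0,T]} t^{1-α} ‖ξ(t)‖ / e^{γt}. In particular, if γ is chosen so that L̄ 2^{2-α} / γ^α < 1, then T_{x₀}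 is a contraction with respect to ‖·‖_{w,T}. -/
open Filter Topology MeasureTheory

/-- The Bielecki-type weighted norm `‖ξ‖_{w,T} = sup_{t ∈ [0,T]} t^{1-α} ‖ξ(t)‖ e^{-γt}`. -/
noncomputable def wnormT (α γ T : ℝ) {s : ℕ} (ξ : ℝ → (Fin s → ℝ)) : ℝ :=
  ⨆ t : Set.Icc (0:ℝ) T, (t : ℝ) ^ (1 - α) * ‖ξ t‖ / Real.exp (γ * t)

/-- The operator `(T_{x₀} ξ)(t) = x₀ t^{α-1} + Γ(α)⁻¹ ∫₀ᵗ (t-τ)^{α-1} f(τ, ξ(τ)) dτ`. -/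
noncomputable def Tmap (α : ℝ) {s : ℕ} (f : ℝ → (Fin s → ℝ) → (Fin s → ℝ))
    (x₀ : Fin s → ℝ) (ξ : ℝ → (Fin s → ℝ)) (t : ℝ) : Fin s → ℝ :=
  t ^ (α - 1) • x₀ + (Real.Gamma α)⁻¹ • ∫ τ in (0:ℝ)..t, (t - τ) ^ (α - 1) • f τ (ξ τ)

theorem aux_kern (α γ t τ : ℝ) (hα1 : α < 1) (hγ : 0 < γ) (h0 : 0 < τ) (h1 : τ ≤ t) :
    (t - τ) ^ (α - 1) * (τ ^ (α - 1) * Real.exp (γ * τ)) ≤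
      Real.exp (γ * t) * (t / 2) ^ (α - 1) *
        (τ ^ (α - 1) * Real.exp (-(γ * τ)) + (t - τ) ^ (α - 1) * Real.exp (-(γ * (t - τ)))) := by
  have ht : 0 < t := lt_of_lt_of_le h0 h1
  have htt : 0 ≤ t - τ := by linarith
  have ha : 0 ≤ (t - τ) ^ (α - 1) := Real.rpow_nonneg htt _
  have hb : 0 ≤ τ ^ (α - 1) := Real.rpow_nonneg h0.le _
  have hc : 0 ≤ (t / 2) ^ (α - 1) := Real.rpow_nonneg (by linarith) _
  rw [mul_add]
  rcases le_total τ (t / 2) with h | h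
  · have h2 : (t - τ) ^ (α - 1) ≤ (t / 2) ^ (α - 1) :=
      Real.rpow_le_rpow_of_nonpos (by linarith) (by linarith) (by linarith)
    have h3 : Real.exp (γ * τ) ≤ Real.exp (γ * t) * Real.exp (-(γ * τ)) := by
      rw [← Real.exp_add]
      apply Real.exp_le_exp.2
      nlinarith
    have : 0 ≤ Real.exp (γ * t) * (t / 2) ^ (α - 1) *
        ((t - τ) ^ (α - 1) * Real.exp (-(γ * (t - τ)))) := by positivity
    calc _ ≤ (t / 2) ^ (α - 1) * (τ ^ (α - 1) * (Real.exp (γ * t) * Real.exp (-(γ * τ)))) := by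
          gcongr
      _ = Real.exp (γ * t) * (t / 2) ^ (α - 1) * (τ ^ (α - 1) * Real.exp (-(γ * τ))) := by ring
      _ ≤ _ := by linarith
  · have h2 : τ ^ (α - 1) ≤ (t / 2) ^ (α - 1) :=
      Real.rpow_le_rpow_of_nonpos (by linarith) (by linarith) (by linarith)
    have h3 : Real.exp (γ * τ) = Real.exp (γ * t) * Real.exp (-(γ * (t - τ))) := by
      rw [← Real.exp_add]
      congr 1
      ring
    have : 0 ≤ Real.exp (γ * t) * (t / 2) ^ (α - 1) *
        (τ ^ (α - 1) * Real.exp (-(γ * τ))) := by positivity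
    calc _ ≤ (t - τ) ^ (α - 1) * ((t / 2) ^ (α - 1) * Real.exp (γ * τ)) := by
          gcongr
      _ = Real.exp (γ * t) * (t / 2) ^ (α - 1) *
          ((t - τ) ^ (α - 1) * Real.exp (-(γ * (t - τ)))) := by rw [h3]; ring
      _ ≤ _ := by linarith

theorem aux_int_s7 (α γ t : ℝ) (hα0 : 0 < α) (hγ : 0 < γ) (ht : 0 < t) :
    IntervalIntegrable (fun τ : ℝ => τ ^ (α - 1) * Real.exp (-(γ * τ)) +
      (t - τ) ^ (α - 1) * Real.exp (-(γ * (t - τ)))) volume 0 t ∧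
    ∫ τ in (0:ℝ)..t, (τ ^ (α - 1) * Real.exp (-(γ * τ)) +
      (t - τ) ^ (α - 1) * Real.exp (-(γ * (t - τ)))) ≤ 2 * (Real.Gamma α / γ ^ α) := by
  have key := Real.integral_rpow_mul_exp_neg_mul_Ioi hα0 hγ
  have hG := Real.Gamma_pos_of_pos hα0
  have hint : IntegrableOn (fun x : ℝ ↦ x ^ (α - 1) * Real.exp (-(γ * x))) (Set.Ioi 0) :=
    .of_integral_ne_zero (by rw [key]; positivity)
  have hi1 : IntervalIntegrable (fun x : ℝ ↦ x ^ (α - 1) * Real.exp (-(γ * x))) volume 0 t := by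
    rw [intervalIntegrable_iff_integrableOn_Ioc_of_le ht.le]
    exact hint.mono_set Set.Ioc_subset_Ioi_self
  have hi2 : IntervalIntegrable
      (fun τ : ℝ => (t - τ) ^ (α - 1) * Real.exp (-(γ * (t - τ)))) volume 0 t := by
    have := (hi1.comp_sub_left t).symm
    simpa using this
  have hJ : ∫ τ in (0:ℝ)..t, τ ^ (α - 1) * Real.exp (-(γ * τ)) ≤ Real.Gamma α / γ ^ α := by
    rw [intervalIntegral.integral_of_le ht.le]
    calc _ ≤ ∫ τ in Set.Ioi (0:ℝ), τ ^ (α - 1) * Real.exp (-(γ * τ)) := by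
          apply setIntegral_mono_set hint
          · filter_upwards [ae_restrict_mem measurableSet_Ioi] with x hx
            have : (0:ℝ) < x := hx
            simp only [Pi.zero_apply]
            positivity
          · exact Set.Ioc_subset_Ioi_self.eventuallyLE
      _ = _ := by
          rw [key, Real.div_rpow zero_le_one hγ.le, Real.one_rpow]; ring
  refine ⟨hi1.add hi2, ?_⟩
  rw [intervalIntegral.integral_add hi1 hi2,
    intervalIntegral.integral_comp_sub_left (fun x : ℝ => x ^ (α - 1) * Real.exp (-(γ * x))) t]
  simp only [sub_self, sub_zero]
  linarith

theorem aux_bdd (α γ T : ℝ) (hα1 : α < 1) (hγ : 0 < γ) {s : ℕ}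
    (x : ℝ → (Fin s → ℝ)) (hx : memC α T x) :
    BddAbove (Set.range fun t : Set.Icc (0:ℝ) T =>
      (t : ℝ) ^ (1 - α) * ‖x t‖ / Real.exp (γ * t)) := by
  obtain ⟨hc, l, hl⟩ := hx
  have h1 : ∀ᶠ t in 𝓝[>] (0:ℝ), ‖t ^ (1 - α) • x t‖ < ‖l‖ + 1 :=
    hl.norm.eventually_lt_const (by linarith)
  obtain ⟨δ, hδ, hδ1⟩ := mem_nhdsGT_iff_exists_Ioo_subset.1 h1
  have hδ0 : (0:ℝ) < δ := hδ
  have hc2 : ContinuousOn (fun t : ℝ => t ^ (1 - α) • x t) (Set.Icc δ T) := by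
    refine ContinuousOn.smul (f := fun t : ℝ => t ^ (1 - α)) (g := x) ?_ ?_
    · apply ContinuousOn.rpow_const continuousOn_id
      intro y hy
      exact Or.inr (by linarith)
    · exact hc.mono fun y hy => ⟨lt_of_lt_of_le hδ0 hy.1, hy.2⟩
  obtain ⟨C, hC⟩ := isCompact_Icc.exists_bound_of_continuousOn hc2
  refine ⟨max (‖l‖ + 1) C, ?_⟩
  rintro _ ⟨⟨t, ht0, htT⟩, rfl⟩
  simp only
  have hp : (0:ℝ) ≤ t ^ (1 - α) := Real.rpow_nonneg ht0 _
  have hle : t ^ (1 - α) * ‖x t‖ ≤ max (‖l‖ + 1) C := by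
    rcases ht0.eq_or_lt with h | h
    · rw [← h, Real.zero_rpow (by linarith), zero_mul]
      exact le_max_of_le_left (by positivity)
    · have e : t ^ (1 - α) * ‖x t‖ = ‖t ^ (1 - α) • x t‖ := by
        rw [norm_smul, Real.norm_of_nonneg hp]
      rw [e]
      rcases lt_or_ge t δ with h2 | h2
      · exact le_max_of_le_left (hδ1 ⟨h, h2⟩ : _ < _).le
      · exact le_max_of_le_right (hC t ⟨h2, htT⟩)
  refine le_trans (div_le_self (by positivity) ?_) hle
  exact Real.one_le_exp (by positivity)

theorem stmt7 (α T : ℝ) (hα0 : 0 < α) (hα1 : α < 1) (hT : 0 < T) (s : ℕ)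
    (f : ℝ → (Fin s → ℝ) → (Fin s → ℝ))
    (hfc : ContinuousOn (fun p : ℝ × (Fin s → ℝ) => f p.1 p.2)
      (Set.Ici 0 ×ˢ (Set.univ : Set (Fin s → ℝ))))
    (L : ℝ → ℝ) (hL0 : ∀ t : ℝ, 0 ≤ t → 0 ≤ L t) (hLbd : ∃ C : ℝ, ∀ t : ℝ, 0 ≤ t → L t ≤ C)
    (hLip : ∀ t : ℝ, 0 ≤ t → ∀ x y : Fin s → ℝ, ‖f t x - f t y‖ ≤ L t * ‖x - y‖)
    (x₀ : Fin s → ℝ) (γ : ℝ) (hγ : 0 < γ)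
    (ξ ξ' : ℝ → (Fin s → ℝ)) (hξ : memC α T ξ) (hξ' : memC α T ξ') :
    (∀ t ∈ Set.Icc (0:ℝ) T,
      t ^ (1 - α) * ‖Tmap α f x₀ ξ t - Tmap α f x₀ ξ' t‖ / Real.exp (γ * t)
        ≤ (⨆ u : Set.Icc (0:ℝ) T, L u) * 2 ^ (2 - α) / γ ^ α
            * wnormT α γ T (fun u => ξ u - ξ' u)) ∧
    wnormT α γ T (fun u => Tmap α f x₀ ξ u - Tmap α f x₀ ξ' u)
      ≤ (⨆ u : Set.Icc (0:ℝ) T, L u) * 2 ^ (2 - α) / γ ^ α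
          * wnormT α γ T (fun u => ξ u - ξ' u) := by
  classical
  set W := wnormT α γ T (fun u => ξ u - ξ' u) with hW
  set M := ⨆ u : Set.Icc (0:ℝ) T, L u with hM
  have hW0 : 0 ≤ W := by
    apply Real.iSup_nonneg
    rintro ⟨t, ht0, htT⟩
    simp only
    positivity
  have hM0 : 0 ≤ M := Real.iSup_nonneg fun u => hL0 u u.2.1
  have hLM : ∀ t, 0 ≤ t → t ≤ T → L t ≤ M := by
    intro t h0 h1
    obtain ⟨C, hC⟩ := hLbd
    have hb : BddAbove (Set.range fun u : Set.Icc (0:ℝ) T => L u) := by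
      refine ⟨C, ?_⟩
      rintro _ ⟨u, rfl⟩
      exact hC u u.2.1
    exact le_ciSup hb ⟨t, h0, h1⟩
  have hmem : memC α T (fun u => ξ u - ξ' u) := by
    obtain ⟨c1, l1, h1⟩ := hξ
    obtain ⟨c2, l2, h2⟩ := hξ'
    refine ⟨c1.sub c2, l1 - l2, ?_⟩
    simpa only [smul_sub] using h1.sub h2
  have hWt : ∀ t, 0 < t → t ≤ T → ‖ξ t - ξ' t‖ ≤ W * (t ^ (α - 1) * Real.exp (γ * t)) := by
    intro t h0 h1
    have h2 : t ^ (1 - α) * ‖ξ t - ξ' t‖ / Real.exp (γ * t) ≤ W :=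
      le_ciSup (aux_bdd α γ T hα1 hγ _ hmem) ⟨t, h0.le, h1⟩
    rw [div_le_iff₀ (Real.exp_pos _)] at h2
    have h3 : t ^ (α - 1) * t ^ (1 - α) = 1 := by
      rw [← Real.rpow_add h0]
      simp
    have h4 : 0 ≤ t ^ (α - 1) := by positivity
    calc ‖ξ t - ξ' t‖ = t ^ (α - 1) * (t ^ (1 - α) * ‖ξ t - ξ' t‖) := by
          rw [← mul_assoc, h3, one_mul]
      _ ≤ t ^ (α - 1) * (W * Real.exp (γ * t)) := by gcongr
      _ = _ := by ring
  have hRHS : 0 ≤ M * 2 ^ (2 - α) / γ ^ α * W := by positivity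
  have hG := Real.Gamma_pos_of_pos hα0
  have main : ∀ t ∈ Set.Icc (0:ℝ) T,
      t ^ (1 - α) * ‖Tmap α f x₀ ξ t - Tmap α f x₀ ξ' t‖ / Real.exp (γ * t)
        ≤ M * 2 ^ (2 - α) / γ ^ α * W := by
    rintro t ⟨ht0, htT⟩
    rcases ht0.eq_or_lt with h | ht
    · rw [← h, Real.zero_rpow (by linarith), zero_mul, zero_div]
      exact hRHS
    obtain ⟨hI, hIle⟩ := aux_int_s7 α γ t hα0 hγ ht
    set K := M * W * (Real.exp (γ * t) * (t / 2) ^ (α - 1)) with hK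
    have hK0 : 0 ≤ K := by positivity
    have hbd : ∀ τ ∈ Set.Ioc 0 t,
        ‖(t - τ) ^ (α - 1) • f τ (ξ τ) - (t - τ) ^ (α - 1) • f τ (ξ' τ)‖ ≤
        K * (τ ^ (α - 1) * Real.exp (-(γ * τ)) +
          (t - τ) ^ (α - 1) * Real.exp (-(γ * (t - τ)))) := by
      rintro τ ⟨h0, h1⟩
      have ha : 0 ≤ (t - τ) ^ (α - 1) := Real.rpow_nonneg (by linarith) _
      rw [← smul_sub, norm_smul, Real.norm_of_nonneg ha]
      have hk := aux_kern α γ t τ hα1 hγ h0 h1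
      calc _ ≤ (t - τ) ^ (α - 1) * (M * (W * (τ ^ (α - 1) * Real.exp (γ * τ)))) := by
            gcongr
            refine (hLip τ h0.le _ _).trans ?_
            exact mul_le_mul (hLM τ h0.le (h1.trans htT)) (hWt τ h0 (h1.trans htT))
              (norm_nonneg _) hM0
        _ = M * W * ((t - τ) ^ (α - 1) * (τ ^ (α - 1) * Real.exp (γ * τ))) := by ring
        _ ≤ M * W * _ := mul_le_mul_of_nonneg_left hk (by positivity)
        _ = _ := by rw [hK]; ring
    have hmeas : ∀ η : ℝ → (Fin s → ℝ), memC α T η → AEStronglyMeasurable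
        (fun τ => (t - τ) ^ (α - 1) • f τ (η τ)) (volume.restrict (Set.uIoc 0 t)) := by
      intro η hη
      rw [Set.uIoc_of_le ht.le]
      refine AEStronglyMeasurable.smul (f := fun τ : ℝ => (t - τ) ^ (α - 1))
        (g := fun τ => f τ (η τ)) ?_ ?_
      · exact ((measurable_const.sub measurable_id).pow_const _).aestronglyMeasurable
      · apply ContinuousOn.aestronglyMeasurable _ measurableSet_Ioc
        have hη' : ContinuousOn η (Set.Ioc 0 t) :=
          hη.1.mono (Set.Ioc_subset_Ioc_right htT)
        exact hfc.comp (continuousOn_id.prodMk hη') fun y hy => ⟨hy.1.le, trivial⟩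
    have hdi : IntervalIntegrable (fun τ => (t - τ) ^ (α - 1) • f τ (ξ τ) -
        (t - τ) ^ (α - 1) • f τ (ξ' τ)) volume 0 t := by
      refine (hI.const_mul K).mono_fun' ((hmeas ξ hξ).sub (hmeas ξ' hξ')) ?_
      rw [Set.uIoc_of_le ht.le]
      filter_upwards [ae_restrict_mem measurableSet_Ioc] with τ hτ
      exact hbd τ hτ
    have hnorm : ‖(∫ τ in (0:ℝ)..t, (t - τ) ^ (α - 1) • f τ (ξ τ)) -
        ∫ τ in (0:ℝ)..t, (t - τ) ^ (α - 1) • f τ (ξ' τ)‖ ≤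
        K * (2 * (Real.Gamma α / γ ^ α)) := by
      by_cases hi : IntervalIntegrable (fun τ => (t - τ) ^ (α - 1) • f τ (ξ' τ)) volume 0 t
      · have hi2 : IntervalIntegrable (fun τ => (t - τ) ^ (α - 1) • f τ (ξ τ)) volume 0 t := by
          simpa using hdi.add hi
        rw [← intervalIntegral.integral_sub hi2 hi]
        refine (intervalIntegral.norm_integral_le_of_norm_le ht.le
          (Eventually.of_forall hbd) (hI.const_mul K)).trans ?_
        rw [intervalIntegral.integral_const_mul]
        gcongr
      · have hi2 : ¬ IntervalIntegrable (fun τ => (t - τ) ^ (α - 1) • f τ (ξ τ)) volume 0 t := by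
          intro h
          apply hi
          simpa using h.sub hdi
        rw [intervalIntegral.integral_undef hi, intervalIntegral.integral_undef hi2, sub_zero,
          norm_zero]
        positivity
    have hT : Tmap α f x₀ ξ t - Tmap α f x₀ ξ' t = (Real.Gamma α)⁻¹ •
        ((∫ τ in (0:ℝ)..t, (t - τ) ^ (α - 1) • f τ (ξ τ)) -
        ∫ τ in (0:ℝ)..t, (t - τ) ^ (α - 1) • f τ (ξ' τ)) := by
      simp only [Tmap, smul_sub, add_sub_add_left_eq_sub]
    rw [hT, norm_smul, Real.norm_of_nonneg (by positivity), div_le_iff₀ (Real.exp_pos _)]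
    calc _ ≤ t ^ (1 - α) * ((Real.Gamma α)⁻¹ * (K * (2 * (Real.Gamma α / γ ^ α)))) := by gcongr
      _ = _ := by
        have e1 : (t / 2) ^ (α - 1) = (t ^ (1 - α))⁻¹ * 2 ^ (1 - α) := by
          rw [Real.div_rpow ht.le (by norm_num), ← Real.rpow_neg ht.le, div_eq_mul_inv,
            ← Real.rpow_neg (by norm_num)]
          congr 2 <;> ring
        have e2 : (2:ℝ) ^ (2 - α) = 2 * 2 ^ (1 - α) := by
          rw [show (2 - α) = 1 + (1 - α) by ring, Real.rpow_add (by norm_num), Real.rpow_one]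
        have e3 : t ^ (1 - α) ≠ 0 := (Real.rpow_pos_of_pos ht _).ne'
        have e4 : γ ^ α ≠ 0 := (Real.rpow_pos_of_pos hγ _).ne'
        rw [hK, e1, e2]
        field_simp
  refine ⟨main, ?_⟩
  have : Nonempty (Set.Icc (0:ℝ) T) := ⟨⟨0, le_refl _, hT.le⟩⟩
  exact ciSup_le fun u => main u u.2
end

section
/- Let 0 < α < 1, T > 0, let f : [0,∞) × ℝ^s → ℝ^s be continuous with ‖f(t,x) − f(t,y)‖ ≤ L(t)‖x−y‖ for a bounded nonnegative L, and let ξ ∈ C_{1-α}([0,T], ℝ^s). Then for every t ∈ (0,T], t^{1-α} ∫₀^t (t-τ)^{α-1} ‖f(τ, ξ(τ))‖ dτ ≤ L̄ t^α B(α,α) ‖ξ‖_{1-α,T} + (sup_{u∈[0,T]} ‖f(u,0)‖) t / α, where L̄ := sup_{u∈[0,T]} L(u), ‖ξ‖_{1-α,T} := sup_{u∈[0,T]} u^{1-α}‖ξ(u)‖, and B(α,α) is the Beta function. Consequently lim_{t→0⁺} t^{1-α} ∫₀^t (t-τ)^{α-1} f(τ,ξ(τ)) dτ = 0. -/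
open Filter Topology MeasureTheory

lemma beta_aux (α t : ℝ) (hα0 : 0 < α) (ht : 0 < t) :
    ∫ τ in (0:ℝ)..t, (t - τ) ^ (α - 1) * τ ^ (α - 1) =
      t ^ (2 * α - 1) * (Real.Gamma α * Real.Gamma α / Real.Gamma (2 * α)) := by
  have h := Complex.betaIntegral_scaled (α : ℂ) (α : ℂ) ht
  rw [Complex.betaIntegral_eq_Gamma_mul_div _ _ (by simpa using hα0) (by simpa using hα0)] at h
  apply Complex.ofReal_injective
  rw [← intervalIntegral.integral_ofReal]
  have e : ∫ τ in (0:ℝ)..t, (((t - τ) ^ (α - 1) * τ ^ (α - 1) : ℝ) : ℂ) =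
      ∫ x in (0:ℝ)..t, (x : ℂ) ^ ((α : ℂ) - 1) * ((t : ℂ) - x) ^ ((α : ℂ) - 1) := by
    apply intervalIntegral.integral_congr
    intro x hx
    rw [Set.uIcc_of_le ht.le] at hx
    simp only
    rw [Complex.ofReal_mul, Complex.ofReal_cpow (by linarith [hx.2]), Complex.ofReal_cpow hx.1]
    push_cast
    ring
  rw [e, h]
  rw [Complex.ofReal_mul, Complex.ofReal_cpow ht.le, Complex.ofReal_div, Complex.ofReal_mul,
    ← Complex.Gamma_ofReal, ← Complex.Gamma_ofReal]
  push_cast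
  rw [two_mul]

lemma pow_aux (α t : ℝ) (hα0 : 0 < α) :
    ∫ τ in (0:ℝ)..t, (t - τ) ^ (α - 1) = t ^ α / α := by
  rw [intervalIntegral.integral_comp_sub_left (fun x : ℝ => x ^ (α - 1)) t]
  rw [integral_rpow (Or.inl (by linarith))]
  simp [Real.zero_rpow hα0.ne']

lemma bound_aux {E : Type*} [NormedAddCommGroup E] [NormedSpace ℝ E] (α t A M : ℝ) (hα0 : 0 < α)
    (ht : 0 < t) (g : ℝ → E)
    (hg : ∀ τ ∈ Set.Ioc 0 t, ‖g τ‖ ≤ A * τ ^ (α - 1) + M) :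
    t ^ (1 - α) * ‖∫ τ in (0:ℝ)..t, (t - τ) ^ (α - 1) • g τ‖ ≤
      A * t ^ α * (Real.Gamma α * Real.Gamma α / Real.Gamma (2 * α)) + M * t / α := by
  have hG : 0 < Real.Gamma α * Real.Gamma α / Real.Gamma (2 * α) := by
    have h1 := Real.Gamma_pos_of_pos hα0
    have h2 := Real.Gamma_pos_of_pos (show 0 < 2 * α by linarith)
    positivity
  have i1 : IntervalIntegrable (fun τ : ℝ => (t - τ) ^ (α - 1) * τ ^ (α - 1)) volume 0 t := by
    apply intervalIntegral.intervalIntegrable_of_integral_ne_zero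
    rw [beta_aux α t hα0 ht]
    positivity
  have i2 : IntervalIntegrable (fun τ : ℝ => (t - τ) ^ (α - 1)) volume 0 t := by
    apply intervalIntegral.intervalIntegrable_of_integral_ne_zero
    rw [pow_aux α t hα0]
    positivity
  have key := intervalIntegral.norm_integral_le_of_norm_le ht.le
    (f := fun τ => (t - τ) ^ (α - 1) • g τ)
    (g := fun τ => A * ((t - τ) ^ (α - 1) * τ ^ (α - 1)) + M * (t - τ) ^ (α - 1)) (μ := volume)
    (by
      refine Eventually.of_forall fun τ hτ => ?_
      have h0 : 0 ≤ (t - τ) ^ (α - 1) := Real.rpow_nonneg (by linarith [hτ.2]) _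
      rw [norm_smul, Real.norm_of_nonneg h0]
      have := mul_le_mul_of_nonneg_left (hg τ hτ) h0
      linarith)
    ((i1.const_mul A).add (i2.const_mul M))
  rw [intervalIntegral.integral_add (i1.const_mul A) (i2.const_mul M),
    intervalIntegral.integral_const_mul, intervalIntegral.integral_const_mul,
    beta_aux α t hα0 ht, pow_aux α t hα0] at key
  have hp : 0 ≤ t ^ (1 - α) := by positivity
  refine (mul_le_mul_of_nonneg_left key hp).trans (le_of_eq ?_)
  have e1 : t ^ (1 - α) * t ^ (2 * α - 1) = t ^ α := by
    rw [← Real.rpow_add ht]; congr 1; ring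
  have e2 : t ^ (1 - α) * t ^ α = t := by
    rw [← Real.rpow_add ht]; simp
  linear_combination (A * (Real.Gamma α * Real.Gamma α / Real.Gamma (2 * α))) * e1 + M / α * e2

lemma bdd_aux (α T : ℝ) (hα1 : α < 1) (hT : 0 < T) {s : ℕ} (ξ : ℝ → (Fin s → ℝ))
    (hξ : memC α T ξ) :
    BddAbove (Set.range fun u : Set.Icc (0:ℝ) T => (u : ℝ) ^ (1 - α) * ‖ξ u‖) := by
  obtain ⟨hc, l, hl⟩ := hξ
  have hn := hl.norm
  have hev := hn.eventually (gt_mem_nhds (lt_add_one ‖l‖))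
  obtain ⟨d, hd, hd'⟩ := (mem_nhdsGT_iff_exists_Ioo_subset).1 hev
  have hd : 0 < d := hd
  have hcomp : IsCompact (Set.Icc d T) := isCompact_Icc
  have hcont : ContinuousOn (fun u : ℝ => u ^ (1 - α) * ‖ξ u‖) (Set.Icc d T) := by
    apply ContinuousOn.mul
    · exact fun x hx => (Real.continuousAt_rpow_const _ _
        (Or.inr (by linarith))).continuousWithinAt
    · exact (hc.mono fun x hx => ⟨hd.trans_le hx.1, hx.2⟩).norm
  obtain ⟨C, hC⟩ := hcomp.bddAbove_image hcont
  refine ⟨max C (‖l‖ + 1), ?_⟩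
  rintro _ ⟨⟨u, hu0, huT⟩, rfl⟩
  simp only
  rcases hu0.eq_or_lt with rfl | hu
  · rw [Real.zero_rpow (by linarith)]
    have := norm_nonneg l
    exact le_max_of_le_right (by linarith)
  · rcases lt_or_ge u d with h | h
    · have := hd' ⟨hu, h⟩
      simp only [Set.mem_setOf_eq, norm_smul] at this
      rw [Real.norm_of_nonneg (by positivity)] at this
      exact le_max_of_le_right this.le
    · exact le_max_of_le_left (hC ⟨u, ⟨h, huT⟩, rfl⟩)

theorem stmt8 (α T : ℝ) (hα0 : 0 < α) (hα1 : α < 1) (hT : 0 < T) (s : ℕ)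
    (f : ℝ → (Fin s → ℝ) → (Fin s → ℝ))
    (hfc : ContinuousOn (fun p : ℝ × (Fin s → ℝ) => f p.1 p.2)
      (Set.Ici 0 ×ˢ (Set.univ : Set (Fin s → ℝ))))
    (L : ℝ → ℝ) (hL0 : ∀ t : ℝ, 0 ≤ t → 0 ≤ L t) (hLbd : ∃ C : ℝ, ∀ t : ℝ, 0 ≤ t → L t ≤ C)
    (hLip : ∀ t : ℝ, 0 ≤ t → ∀ x y : Fin s → ℝ, ‖f t x - f t y‖ ≤ L t * ‖x - y‖)
    (ξ : ℝ → (Fin s → ℝ)) (hξ : memC α T ξ) :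
    (∀ t ∈ Set.Ioc (0:ℝ) T,
      t ^ (1 - α) * ∫ τ in (0:ℝ)..t, (t - τ) ^ (α - 1) * ‖f τ (ξ τ)‖
        ≤ (⨆ u : Set.Icc (0:ℝ) T, L u) * t ^ α
            * (Real.Gamma α * Real.Gamma α / Real.Gamma (2 * α))
            * (⨆ u : Set.Icc (0:ℝ) T, (u : ℝ) ^ (1 - α) * ‖ξ u‖)
          + (⨆ u : Set.Icc (0:ℝ) T, ‖f u 0‖) * t / α) ∧
    Tendsto (fun t : ℝ => t ^ (1 - α) • ∫ τ in (0:ℝ)..t, (t - τ) ^ (α - 1) • f τ (ξ τ))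
      (𝓝[>] 0) (𝓝 0) := by
  have b1 : BddAbove (Set.range fun u : Set.Icc (0:ℝ) T => L u) := by
    obtain ⟨C, hC⟩ := hLbd
    exact ⟨C, by rintro _ ⟨u, rfl⟩; exact hC u u.2.1⟩
  have b2 := bdd_aux α T hα1 hT ξ hξ
  have b3 : BddAbove (Set.range fun u : Set.Icc (0:ℝ) T => ‖f u 0‖) := by
    have hcont : ContinuousOn (fun u : ℝ => ‖f u 0‖) (Set.Icc 0 T) :=
      (hfc.comp (f := fun u : ℝ => (u, (0 : Fin s → ℝ))) (by fun_prop)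
        (fun u hu => ⟨hu.1, trivial⟩)).norm
    obtain ⟨C, hC⟩ := isCompact_Icc.bddAbove_image hcont
    exact ⟨C, by rintro _ ⟨u, rfl⟩; exact hC ⟨u, u.2, rfl⟩⟩
  set Lb := ⨆ u : Set.Icc (0:ℝ) T, L u
  set N := ⨆ u : Set.Icc (0:ℝ) T, (u : ℝ) ^ (1 - α) * ‖ξ u‖
  set M := ⨆ u : Set.Icc (0:ℝ) T, ‖f u 0‖
  have pt : ∀ τ ∈ Set.Ioc 0 T, ‖f τ (ξ τ)‖ ≤ (Lb * N) * τ ^ (α - 1) + M := by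
    intro τ hτ
    have hm : τ ∈ Set.Icc 0 T := ⟨hτ.1.le, hτ.2⟩
    have h1 : L τ ≤ Lb := le_ciSup b1 ⟨τ, hm⟩
    have h2 : τ ^ (1 - α) * ‖ξ τ‖ ≤ N := le_ciSup b2 ⟨τ, hm⟩
    have h3 : ‖f τ 0‖ ≤ M := le_ciSup b3 ⟨τ, hm⟩
    have h4 := hLip τ hm.1 (ξ τ) 0
    rw [sub_zero] at h4
    have h5 : ‖f τ (ξ τ)‖ ≤ ‖f τ (ξ τ) - f τ 0‖ + ‖f τ 0‖ := by
      simpa using norm_add_le (f τ (ξ τ) - f τ 0) (f τ 0)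
    have hp : 0 ≤ τ ^ (α - 1) := Real.rpow_nonneg hm.1 _
    have h6 : ‖ξ τ‖ ≤ N * τ ^ (α - 1) := by
      have e : τ ^ (1 - α) * τ ^ (α - 1) = 1 := by
        rw [← Real.rpow_add hτ.1]; simp
      calc ‖ξ τ‖ = (τ ^ (1 - α) * ‖ξ τ‖) * τ ^ (α - 1) := by
            rw [mul_right_comm, e, one_mul]
        _ ≤ _ := mul_le_mul_of_nonneg_right h2 hp
    have h7 : L τ * ‖ξ τ‖ ≤ Lb * (N * τ ^ (α - 1)) :=
      mul_le_mul h1 h6 (norm_nonneg _) ((hL0 τ hm.1).trans h1)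
    linarith
  constructor
  · intro t ht
    have h := bound_aux α t (Lb * N) M hα0 ht.1 (fun τ => ‖f τ (ξ τ)‖)
      (fun τ hτ => by rw [norm_norm]; exact pt τ ⟨hτ.1, hτ.2.trans ht.2⟩)
    simp only [smul_eq_mul] at h
    have hp : 0 ≤ t ^ (1 - α) := Real.rpow_nonneg ht.1.le _
    have h' := mul_le_mul_of_nonneg_left
      (Real.le_norm_self (∫ τ in (0:ℝ)..t, (t - τ) ^ (α - 1) * ‖f τ (ξ τ)‖)) hp
    refine h'.trans (h.trans (le_of_eq ?_))
    ring
  · have hlim : Tendsto (fun t : ℝ => (Lb * N) * t ^ α *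
        (Real.Gamma α * Real.Gamma α / Real.Gamma (2 * α)) + M * t / α) (𝓝[>] 0) (𝓝 0) := by
      have hc : ContinuousAt (fun t : ℝ => (Lb * N) * t ^ α *
        (Real.Gamma α * Real.Gamma α / Real.Gamma (2 * α)) + M * t / α) 0 := by
        have := Real.continuousAt_rpow_const 0 α (Or.inr hα0.le)
        exact ((continuousAt_const.mul this).mul continuousAt_const).add
          ((continuousAt_const.mul continuousAt_id).div_const _)
      have h := hc.tendsto.mono_left (nhdsWithin_le_nhds (s := Set.Ioi 0))
      simpa [Real.zero_rpow hα0.ne'] using h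
    refine squeeze_zero_norm' ?_ hlim
    filter_upwards [Ioc_mem_nhdsGT hT] with t ht
    rw [norm_smul, Real.norm_of_nonneg (Real.rpow_nonneg ht.1.le _)]
    exact bound_aux α t (Lb * N) M hα0 ht.1 (fun τ => f τ (ξ τ))
      (fun τ hτ => pt τ ⟨hτ.1, hτ.2.trans ht.2⟩)
end
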